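/- arXiv:1212.1682 — 2 statements merged into one kernel-verified Lean document; each statement's English description precedes it below -/
import Mathlib

section
/- There exist an integer k0 and an absolute constant c > 0 such that for every k >= k0 and every clause density r > 2^k/k, with high probability the random formula Phi = Phi_k(n, floor(r*n)) satisfies |S(Phi)| <= exp(-c * 4^{-k} * n) * E[|S(Phi)|], where the expectation is over the uniform random formula. -/
open Classical Finset Filter

noncomputable section

/-- A literal: a variable index together with a sign (`true` = positive occurrence). -/
abbrev Lit (n : ℕ) := Fin n × Bool

/-- A clause: an ordered `k`-tuple of literals. -/
abbrev Clause (n k : ℕ) := Fin k → Lit n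

/-- A `k`-CNF formula with `m` clauses over `n` variables. -/
abbrev Formula (n k m : ℕ) := Fin m → Clause n k

/-- A truth assignment. -/
abbrev Assignment (n : ℕ) := Fin n → Bool

/-- The truth value of a literal under an assignment. -/
def litVal {n : ℕ} (σ : Assignment n) (l : Lit n) : Bool :=
  if l.2 then σ l.1 else !(σ l.1)

/-- `σ` satisfies `Φ` if every clause contains at least one true literal. -/
def Satisfies {n k m : ℕ} (σ : Assignment n) (Φ : Formula n k m) : Prop :=
  ∀ i : Fin m, ∃ j : Fin k, litVal σ (Φ i j) = true

/-- The set of satisfying assignments of `Φ`. -/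
def satSet (n k m : ℕ) (Φ : Formula n k m) : Finset (Assignment n) :=
  univ.filter fun σ => Satisfies σ Φ

/-- The number of satisfying assignments of `Φ`. -/
def satCount (n k m : ℕ) (Φ : Formula n k m) : ℕ := (satSet n k m Φ).card

/-- Probability of an event under the uniformly random formula `Φ_k(n,m)`. -/
def prF (n k m : ℕ) (E : Formula n k m → Prop) : ℝ :=
  ((univ.filter fun Φ : Formula n k m => E Φ).card : ℝ) / (Fintype.card (Formula n k m) : ℝ)

/-- Expectation of a function of the uniformly random formula `Φ_k(n,m)`. -/
def expF (n k m : ℕ) (f : Formula n k m → ℝ) : ℝ :=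
  (∑ Φ : Formula n k m, f Φ) / (Fintype.card (Formula n k m) : ℝ)

/-- The number of occurrences of the literal `l` in `Φ`. -/
def occ (n k m : ℕ) (Φ : Formula n k m) (l : Lit n) : ℕ :=
  (univ.filter fun p : Fin m × Fin k => Φ p.1 p.2 = l).card

/-- The (signed) degree sequence of `Φ`. -/
def degSeq (n k m : ℕ) (Φ : Formula n k m) : Lit n → ℕ := occ n k m Φ

/-- Hamming distance between two assignments. -/
def hdist {n : ℕ} (σ τ : Assignment n) : ℕ :=
  (univ.filter fun x => σ x ≠ τ x).card

/-- The majority-vote assignment: `x ↦ true` iff `x` occurs more often positively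
than negatively. -/
def sigmaMaj (n k m : ℕ) (Φ : Formula n k m) : Assignment n :=
  fun x => decide (occ n k m Φ (x, false) < occ n k m Φ (x, true))


/-- sign of a Boolean -/
def eps (b : Bool) : ℝ := if b then 1 else -1

def Lc {n k : ℕ} (v : Fin n → ℝ) (c : Clause n k) : ℝ := ∑ j, eps (c j).2 * v (c j).1

def LF {n k m : ℕ} (v : Fin n → ℝ) (Φ : Formula n k m) : ℝ := ∑ i, Lc v (Φ i)

def DF {n k m : ℕ} (Φ : Formula n k m) (x : Fin n) : ℝ := LF (Pi.single x 1) Φ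

lemma eps_sq (b : Bool) : eps b * eps b = 1 := by cases b <;> simp [eps]

lemma Lc_smul {n k : ℕ} (s : ℝ) (v : Fin n → ℝ) (c : Clause n k) :
    Lc (fun x => s * v x) c = s * Lc v c := by
  simp only [Lc, Finset.mul_sum]
  exact Finset.sum_congr rfl fun j _ => by ring

lemma LF_smul {n k m : ℕ} (s : ℝ) (v : Fin n → ℝ) (Φ : Formula n k m) :
    LF (fun x => s * v x) Φ = s * LF v Φ := by
  simp only [LF, Finset.mul_sum, Lc_smul]

lemma Lc_add {n k : ℕ} (v w : Fin n → ℝ) (c : Clause n k) :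
    Lc (fun x => v x + w x) c = Lc v c + Lc w c := by
  simp only [Lc, ← Finset.sum_add_distrib]
  exact Finset.sum_congr rfl fun j _ => by ring

lemma LF_add {n k m : ℕ} (v w : Fin n → ℝ) (Φ : Formula n k m) :
    LF (fun x => v x + w x) Φ = LF v Φ + LF w Φ := by
  simp only [LF, ← Finset.sum_add_distrib, Lc_add]

lemma LF_eq_sum {n k m : ℕ} (v : Fin n → ℝ) (Φ : Formula n k m) :
    LF v Φ = ∑ x, v x * DF Φ x := by
  have : ∀ (i : Fin m) (j : Fin k), eps (Φ i j).2 * v (Φ i j).1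
      = ∑ x, v x * (eps (Φ i j).2 * (Pi.single x (1 : ℝ) : Fin n → ℝ) (Φ i j).1) := by
    intro i j
    rw [Finset.sum_eq_single (Φ i j).1]
    · simp; ring
    · intro b _ hb
      simp [hb.symm]
    · simp
  simp only [LF, Lc, DF, Finset.mul_sum]
  simp_rw [this]
  rw [Finset.sum_comm]
  symm
  rw [Finset.sum_comm]
  rw [Finset.sum_comm (s := (univ : Finset (Fin k)))]
  refine Finset.sum_congr rfl fun i _ => ?_
  rw [Finset.sum_comm]

lemma sum_exp_clause {n k : ℕ} (v : Fin n → ℝ) :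
    ∑ c : Clause n k, Real.exp (Lc v c) = (∑ x, 2 * Real.cosh (v x)) ^ k := by
  have h : (∑ x, 2 * Real.cosh (v x)) = ∑ l : Lit n, Real.exp (eps l.2 * v l.1) := by
    rw [Fintype.sum_prod_type]
    refine Finset.sum_congr rfl fun x _ => ?_
    simp [eps, Real.cosh_eq]; ring
  rw [h]
  have := Finset.prod_univ_sum (fun _ : Fin k => (univ : Finset (Lit n)))
    (fun _ l => Real.exp (eps l.2 * v l.1))
  simp only [Finset.prod_const, Finset.card_univ, Fintype.card_fin, Fintype.piFinset_univ] at this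
  rw [this]
  refine Finset.sum_congr rfl fun c _ => ?_
  rw [Lc, Real.exp_sum]

lemma sum_prod_form {n k m : ℕ} (f : Clause n k → ℝ) :
    ∑ Φ : Formula n k m, ∏ i, f (Φ i) = (∑ c, f c) ^ m := by
  have := Finset.prod_univ_sum (fun _ : Fin m => (univ : Finset (Clause n k))) (fun _ c => f c)
  simp only [Finset.prod_const, Finset.card_univ, Fintype.card_fin, Fintype.piFinset_univ] at this
  exact this.symm

lemma sum_exp_F {n k m : ℕ} (v : Fin n → ℝ) :
    ∑ Φ : Formula n k m, Real.exp (LF v Φ) = ((∑ x, 2 * Real.cosh (v x)) ^ k) ^ m := by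
  rw [← sum_exp_clause, ← sum_prod_form]
  exact Finset.sum_congr rfl fun Φ _ => by rw [LF, Real.exp_sum]

def satC {n k : ℕ} (σ : Assignment n) (c : Clause n k) : Prop := ∃ j, litVal σ (c j) = true

lemma sum_sat_clause {n k : ℕ} (σ : Assignment n) (v : Fin n → ℝ) :
    ∑ c : Clause n k, (if satC σ c then Real.exp (-Lc v c) else 0) =
      (∑ x, 2 * Real.cosh (v x)) ^ k - (∑ x, Real.exp (eps (σ x) * v x)) ^ k := by
  have h1 : ∑ c : Clause n k, Real.exp (-Lc v c) = (∑ x, 2 * Real.cosh (v x)) ^ k := by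
    have := sum_exp_clause (k := k) (fun x => (-1) * v x)
    simp only [Lc_smul] at this
    simpa using this
  have h2 : ∑ c : Clause n k, (if satC σ c then 0 else Real.exp (-Lc v c))
      = (∑ x, Real.exp (eps (σ x) * v x)) ^ k := by
    have h : (∑ x, Real.exp (eps (σ x) * v x))
        = ∑ l : Lit n, if litVal σ l = true then 0 else Real.exp (-(eps l.2 * v l.1)) := by
      rw [Fintype.sum_prod_type]
      refine Finset.sum_congr rfl fun x _ => ?_
      cases hx : σ x <;> simp [eps, litVal, hx]
    rw [h]
    have := Finset.prod_univ_sum (fun _ : Fin k => (univ : Finset (Lit n)))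
      (fun _ l => if litVal σ l = true then 0 else Real.exp (-(eps l.2 * v l.1)))
    simp only [Finset.prod_const, Finset.card_univ, Fintype.card_fin, Fintype.piFinset_univ] at this
    rw [this]
    refine Finset.sum_congr rfl fun c _ => ?_
    split_ifs with hc
    · obtain ⟨j, hj⟩ := hc
      exact (Finset.prod_eq_zero (mem_univ j) (by simp [hj])).symm
    · have hc' : ∀ j, ¬ litVal σ (c j) = true := fun j hj => hc ⟨j, hj⟩
      rw [Lc, ← Finset.sum_neg_distrib, Real.exp_sum]
      exact Finset.prod_congr rfl fun j _ => by rw [if_neg (hc' j)]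
  rw [← h1, ← h2, eq_sub_iff_add_eq, ← Finset.sum_add_distrib]
  refine Finset.sum_congr rfl fun c _ => ?_
  split_ifs <;> simp

lemma sum_sat_F {n k m : ℕ} (σ : Assignment n) (v : Fin n → ℝ) :
    ∑ Φ : Formula n k m, (if Satisfies σ Φ then Real.exp (-LF v Φ) else 0) =
      ((∑ x, 2 * Real.cosh (v x)) ^ k - (∑ x, Real.exp (eps (σ x) * v x)) ^ k) ^ m := by
  rw [← sum_sat_clause, ← sum_prod_form]
  refine Finset.sum_congr rfl fun Φ _ => ?_
  split_ifs with h
  · rw [LF, ← Finset.sum_neg_distrib, Real.exp_sum]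
    exact Finset.prod_congr rfl fun i _ => (if_pos (h i)).symm
  · simp only [Satisfies, not_forall] at h
    obtain ⟨i, hi⟩ := h
    exact (Finset.prod_eq_zero (mem_univ i) (if_neg hi)).symm

lemma card_sat {n k m : ℕ} (σ : Assignment n) :
    ∑ Φ : Formula n k m, (if Satisfies σ Φ then (1 : ℝ) else 0) =
      ((2 * n : ℝ) ^ k * (1 - (2 ^ k : ℝ)⁻¹)) ^ m := by
  have h := sum_sat_F (k := k) (m := m) σ (fun _ => 0)
  have h0 : ∀ Φ : Formula n k m, LF (fun _ => 0) Φ = 0 := fun Φ => by simp [LF, Lc]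
  simp only [h0, neg_zero, Real.exp_zero, Real.cosh_zero, mul_zero, mul_one] at h
  rw [h]
  congr 1
  simp only [Finset.sum_const, Finset.card_univ, Fintype.card_fin, nsmul_eq_mul, mul_one]
  rw [mul_comm (n : ℝ) 2, mul_pow]
  field_simp

/-- per-clause bound in the planted model -/
lemma planted_bound {n k : ℕ} (hn : 0 < n) (σ : Assignment n) (v : Fin n → ℝ) (η b : ℝ)
    (hk : 0 < k)
    (hη : ∑ x, Real.cosh (v x) ≤ n * (1 + η)) (hη0 : 0 ≤ η) (hkη : k * η ≤ 1)
    (hb0 : 0 ≤ b) (hb : n * b ≤ ∑ x, eps (σ x) * v x) (hηb : 4 * η ≤ (2 ^ k : ℝ)⁻¹ * b) :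
    (∑ x, 2 * Real.cosh (v x)) ^ k - (∑ x, Real.exp (eps (σ x) * v x)) ^ k ≤
      ((2 * n : ℝ) ^ k * (1 - (2 ^ k : ℝ)⁻¹)) * Real.exp (-((2 ^ k : ℝ)⁻¹ * k * b / 2)) := by
  set q : ℝ := (2 ^ k : ℝ)⁻¹ with hq
  have hq0 : 0 < q := by positivity
  have hq1 : q < 1 := by
    rw [hq]; exact inv_lt_one_of_one_lt₀ (one_lt_pow₀ (by norm_num) hk.ne')
  have hn' : (0 : ℝ) < n := by exact_mod_cast hn
  have h1 : (∑ x, 2 * Real.cosh (v x)) ^ k ≤ (2 * n : ℝ) ^ k * (1 + 2 * (k * η)) := by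
    have : (∑ x, 2 * Real.cosh (v x)) ≤ (2 * n) * Real.exp η := by
      rw [← Finset.mul_sum]
      have := Real.add_one_le_exp η
      nlinarith
    calc _ ≤ ((2 * n) * Real.exp η) ^ k := by
          apply pow_le_pow_left₀ _ this
          exact Finset.sum_nonneg fun x _ => by have := Real.cosh_pos (v x); positivity
      _ = (2 * n : ℝ) ^ k * Real.exp (k * η) := by rw [mul_pow, ← Real.exp_nat_mul]
      _ ≤ _ := by
          gcongr
          have h0 : 0 ≤ (k : ℝ) * η := by positivity
          have := Real.abs_exp_sub_one_sub_id_le (x := k * η) (by rw [abs_of_nonneg h0]; exact hkη)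
          have := (abs_le.1 this).2
          nlinarith
  have h2 : (2 * n : ℝ) ^ k * (q * (1 + k * b)) ≤ (∑ x, Real.exp (eps (σ x) * v x)) ^ k := by
    have h3 : n * (1 + b) ≤ ∑ x, Real.exp (eps (σ x) * v x) := by
      calc n * (1 + b) ≤ ∑ x : Fin n, (eps (σ x) * v x + 1) := by
            rw [Finset.sum_add_distrib]; simp; linarith
        _ ≤ _ := Finset.sum_le_sum fun x _ => Real.add_one_le_exp _
    calc _ = (n : ℝ) ^ k * (1 + k * b) := by rw [hq, mul_pow]; field_simp
      _ ≤ (n : ℝ) ^ k * (1 + b) ^ k := by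
          gcongr
          exact one_add_mul_le_pow (by linarith) k
      _ = (n * (1 + b)) ^ k := (mul_pow _ _ _).symm
      _ ≤ _ := by gcongr
  have h4 : 1 + 2 * (k * η) - q * (1 + k * b) ≤ (1 - q) * Real.exp (-(q * k * b / 2)) := by
    have := Real.add_one_le_exp (-(q * k * b / 2))
    have h5 : 2 * (k * η) ≤ q * k * b / 2 := by nlinarith [(Nat.cast_nonneg k : (0:ℝ) ≤ k)]
    have h6 : 0 ≤ q * k * b / 2 := by positivity
    nlinarith
  have h7 : (0 : ℝ) < (2 * n : ℝ) ^ k := by positivity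
  nlinarith

lemma planted_tail {n k m : ℕ} (hn : 0 < n) (σ : Assignment n) (v : Fin n → ℝ) (η b τ : ℝ)
    (hk : 0 < k)
    (hη : ∑ x, Real.cosh (v x) ≤ n * (1 + η)) (hη0 : 0 ≤ η) (hkη : k * η ≤ 1)
    (hb0 : 0 ≤ b) (hb : n * b ≤ ∑ x, eps (σ x) * v x) (hηb : 4 * η ≤ (2 ^ k : ℝ)⁻¹ * b) :
    ∑ Φ : Formula n k m, (if Satisfies σ Φ ∧ LF v Φ ≤ τ then (1 : ℝ) else 0) ≤
      ((2 * n : ℝ) ^ k * (1 - (2 ^ k : ℝ)⁻¹)) ^ m *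
        Real.exp (τ - (2 ^ k : ℝ)⁻¹ * k * b / 2 * m) := by
  have h1 : ∀ Φ : Formula n k m, (if Satisfies σ Φ ∧ LF v Φ ≤ τ then (1 : ℝ) else 0) ≤
      Real.exp τ * (if Satisfies σ Φ then Real.exp (-LF v Φ) else 0) := by
    intro Φ
    by_cases hs : Satisfies σ Φ
    · by_cases ht : LF v Φ ≤ τ
      · simp only [hs, ht, and_self, if_true, ← Real.exp_add]
        exact Real.one_le_exp (by linarith)
      · simp only [ht, and_false, if_false]
        split_ifs <;> positivity
    · simp [hs]
  have hnn : 0 ≤ (∑ x, 2 * Real.cosh (v x)) ^ k - (∑ x, Real.exp (eps (σ x) * v x)) ^ k := by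
    rw [← sum_sat_clause]
    exact Finset.sum_nonneg fun c _ => by split_ifs <;> positivity
  calc _ ≤ ∑ Φ : Formula n k m,
        Real.exp τ * (if Satisfies σ Φ then Real.exp (-LF v Φ) else 0) :=
        Finset.sum_le_sum fun Φ _ => h1 Φ
    _ = Real.exp τ * ((∑ x, 2 * Real.cosh (v x)) ^ k
          - (∑ x, Real.exp (eps (σ x) * v x)) ^ k) ^ m := by
        rw [← Finset.mul_sum, sum_sat_F]
    _ ≤ Real.exp τ * (((2 * n : ℝ) ^ k * (1 - (2 ^ k : ℝ)⁻¹)) *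
          Real.exp (-((2 ^ k : ℝ)⁻¹ * k * b / 2))) ^ m := by
        gcongr
        exact planted_bound hn σ v η b hk hη hη0 hkη hb0 hb hηb
    _ = _ := by
        rw [mul_pow _ (Real.exp _), ← Real.exp_nat_mul, sub_eq_add_neg τ, Real.exp_add]
        ring_nf

lemma uniform_tail {n k m : ℕ} (v : Fin n → ℝ) (η τ : ℝ)
    (hη : ∑ x, Real.cosh (v x) ≤ n * (1 + η)) :
    ∑ Φ : Formula n k m, (if τ < LF v Φ then (1 : ℝ) else 0) ≤
      ((2 * n : ℝ) ^ k) ^ m * Real.exp (-τ + η * (k * m)) := by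
  have h1 : ∀ Φ : Formula n k m, (if τ < LF v Φ then (1 : ℝ) else 0) ≤
      Real.exp (-τ) * Real.exp (LF v Φ) := by
    intro Φ
    rw [← Real.exp_add]
    split_ifs with h
    · exact Real.one_le_exp (by linarith)
    · positivity
  have h2 : (∑ x, 2 * Real.cosh (v x)) ≤ (2 * n) * Real.exp η := by
    rw [← Finset.mul_sum]
    have := Real.add_one_le_exp η
    have := (Nat.cast_nonneg n : (0:ℝ) ≤ n)
    nlinarith
  have h3 : 0 ≤ ∑ x, 2 * Real.cosh (v x) :=
    Finset.sum_nonneg fun x _ => by have := Real.cosh_pos (v x); positivity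
  calc _ ≤ ∑ Φ : Formula n k m, Real.exp (-τ) * Real.exp (LF v Φ) :=
        Finset.sum_le_sum fun Φ _ => h1 Φ
    _ = Real.exp (-τ) * ((∑ x, 2 * Real.cosh (v x)) ^ k) ^ m := by
        rw [← Finset.mul_sum, sum_exp_F]
    _ ≤ Real.exp (-τ) * (((2 * n) * Real.exp η) ^ k) ^ m := by gcongr
    _ = _ := by
        rw [mul_pow, mul_pow, ← Real.exp_nat_mul, ← Real.exp_nat_mul, Real.exp_add]
        ring_nf

lemma cosh_bound {s : ℝ} (h0 : 0 ≤ s) (h1 : s ≤ 1) : Real.cosh s ≤ 1 + s ^ 2 := by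
  have h := Real.cosh_le_exp_half_sq s
  have h2 : |s ^ 2 / 2| ≤ 1 := by rw [abs_of_nonneg (by positivity)]; nlinarith
  have := (abs_le.1 (Real.abs_exp_sub_one_sub_id_le h2)).2
  have h3 : s ^ 2 ≤ 1 := by nlinarith
  nlinarith [mul_nonneg (sq_nonneg s) (sub_nonneg.2 h3)]

lemma sum_expD {n k m : ℕ} (hn : 0 < n) (t : ℝ) (x : Fin n) :
    ∑ Φ : Formula n k m, Real.exp (t * DF Φ x) =
      ((2 * n : ℝ) ^ k) ^ m * (1 + (Real.cosh t - 1) / n) ^ (k * m) := by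
  have hn' : (n : ℝ) ≠ 0 := by exact_mod_cast hn.ne'
  simp only [DF, ← LF_smul]
  rw [sum_exp_F]
  have : ∑ y, 2 * Real.cosh (t * (Pi.single x (1 : ℝ) : Fin n → ℝ) y)
      = 2 * n * (1 + (Real.cosh t - 1) / n) := by
    have h : ∀ y, 2 * Real.cosh (t * (Pi.single x (1 : ℝ) : Fin n → ℝ) y)
        = 2 + if y = x then 2 * (Real.cosh t - 1) else 0 := by
      intro y
      by_cases hy : y = x
      · subst hy; simp; ring
      · simp [hy]
    simp only [h, Finset.sum_add_distrib]
    simp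
    field_simp
  rw [this, mul_pow, mul_pow, pow_mul]

lemma sum_expDD {n k m : ℕ} (hn : 0 < n) (s t u : ℝ) (hs : Real.cosh s = Real.cosh u)
    (ht : Real.cosh t = Real.cosh u) (x y : Fin n) (hxy : x ≠ y) :
    ∑ Φ : Formula n k m, Real.exp (s * DF Φ x + t * DF Φ y) =
      ((2 * n : ℝ) ^ k) ^ m * (1 + 2 * ((Real.cosh u - 1) / n)) ^ (k * m) := by
  have hn' : (n : ℝ) ≠ 0 := by exact_mod_cast hn.ne'
  simp only [DF, ← LF_smul, ← LF_add]
  rw [sum_exp_F]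
  have : ∑ z, 2 * Real.cosh (s * (Pi.single x (1 : ℝ) : Fin n → ℝ) z
        + t * (Pi.single y (1 : ℝ) : Fin n → ℝ) z)
      = 2 * n * (1 + 2 * ((Real.cosh u - 1) / n)) := by
    have h : ∀ z, 2 * Real.cosh (s * (Pi.single x (1 : ℝ) : Fin n → ℝ) z
        + t * (Pi.single y (1 : ℝ) : Fin n → ℝ) z)
        = 2 + (if z = x then 2 * (Real.cosh u - 1) else 0)
          + if z = y then 2 * (Real.cosh u - 1) else 0 := by
      intro z
      by_cases hz : z = x
      · subst hz; simp [hxy, hs]; ring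
      · by_cases hz' : z = y
        · subst hz'; simp [hz, ht]; ring
        · simp [hz, hz']
    simp only [h, Finset.sum_add_distrib]
    simp
    field_simp
    ring
  rw [this, mul_pow, mul_pow, pow_mul]

lemma sum_coshD {n k m : ℕ} (hn : 0 < n) (s : ℝ) (x : Fin n) :
    ∑ Φ : Formula n k m, Real.cosh (s * DF Φ x) =
      ((2 * n : ℝ) ^ k) ^ m * (1 + (Real.cosh s - 1) / n) ^ (k * m) := by
  have h : ∀ Φ : Formula n k m, Real.cosh (s * DF Φ x)
      = (Real.exp (s * DF Φ x) + Real.exp ((-s) * DF Φ x)) / 2 := by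
    intro Φ; rw [Real.cosh_eq, neg_mul]
  simp only [h]
  rw [← Finset.sum_div, Finset.sum_add_distrib, sum_expD hn, sum_expD hn, Real.cosh_neg]
  ring

lemma sum_coshDD {n k m : ℕ} (hn : 0 < n) (s : ℝ) (x y : Fin n) (hxy : x ≠ y) :
    ∑ Φ : Formula n k m, Real.cosh (s * DF Φ x) * Real.cosh (s * DF Φ y) =
      ((2 * n : ℝ) ^ k) ^ m * (1 + 2 * ((Real.cosh s - 1) / n)) ^ (k * m) := by
  have h : ∀ Φ : Formula n k m, Real.cosh (s * DF Φ x) * Real.cosh (s * DF Φ y)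
      = (Real.exp (s * DF Φ x + s * DF Φ y) + Real.exp (s * DF Φ x + (-s) * DF Φ y)
        + Real.exp ((-s) * DF Φ x + s * DF Φ y)
        + Real.exp ((-s) * DF Φ x + (-s) * DF Φ y)) / 4 := by
    intro Φ; simp only [Real.cosh_eq, neg_mul, Real.exp_add]; ring
  simp only [h]
  have hc := Real.cosh_neg s
  rw [← Finset.sum_div, Finset.sum_add_distrib, Finset.sum_add_distrib, Finset.sum_add_distrib,
    sum_expDD hn s s s rfl rfl x y hxy, sum_expDD hn s (-s) s rfl hc x y hxy,
    sum_expDD hn (-s) s s hc rfl x y hxy, sum_expDD hn (-s) (-s) s hc hc x y hxy]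
  ring

lemma cheb {n k m : ℕ} (hn : 0 < n) (s η R : ℝ) (hs0 : 0 ≤ s) (hs1 : s ≤ 1) (hη0 : 0 < η)
    (hη1 : η ≤ 1) (hη : η = s ^ 2 * R) (hkm : (k * m : ℝ) ≤ R / 2 * n) (hR : 0 < R) :
    ∑ Φ : Formula n k m,
      (if n * (1 + η) < ∑ x, Real.cosh (s * DF Φ x) then (1 : ℝ) else 0) ≤
      ((2 * n : ℝ) ^ k) ^ m * (16 * Real.exp (R * (Real.cosh (2 * s) - 1)) / η ^ 2 / n) := by
  have hn' : (0 : ℝ) < n := by exact_mod_cast hn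
  set N : ℝ := ((2 * n : ℝ) ^ k) ^ m with hN
  have hN0 : 0 < N := by positivity
  set a : ℝ := (Real.cosh s - 1) / n with ha
  have ha0 : 0 ≤ a := div_nonneg (by linarith [Real.one_le_cosh s]) hn'.le
  set p : ℝ := (1 + a) ^ (k * m) with hp
  set C : ℝ := Real.exp (R * (Real.cosh (2 * s) - 1)) with hC
  have hc2 : 0 ≤ Real.cosh (2 * s) - 1 := by linarith [Real.one_le_cosh (2 * s)]
  have hpow : ∀ z : ℝ, 0 ≤ z → (1 + z / n) ^ (k * m) ≤ Real.exp (R / 2 * z) := by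
    intro z hz
    calc (1 + z / n) ^ (k * m) ≤ (Real.exp (z / n)) ^ (k * m) := by
          gcongr
          linarith [Real.add_one_le_exp (z / n)]
      _ = Real.exp ((k * m) * (z / n)) := by rw [← Real.exp_nat_mul]; push_cast; rfl
      _ ≤ _ := by
          apply Real.exp_le_exp.2
          calc (k * m : ℝ) * (z / n) ≤ (R / 2 * n) * (z / n) := by gcongr
            _ = _ := by field_simp
  have hp1 : p ≤ 1 + 3 * η / 4 := by
    have h1 := hpow (Real.cosh s - 1) (by linarith [Real.one_le_cosh s])
    have h2 : R / 2 * (Real.cosh s - 1) ≤ η / 2 := by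
      have := cosh_bound hs0 hs1
      rw [hη]; nlinarith
    have h3 : |η / 2| ≤ 1 := by rw [abs_of_nonneg (by positivity)]; linarith
    have h4 := (abs_le.1 (Real.abs_exp_sub_one_sub_id_le h3)).2
    have h5 := Real.exp_le_exp.2 h2
    nlinarith
  set X : Formula n k m → ℝ := fun Φ => ∑ x, Real.cosh (s * DF Φ x) with hX
  have hX1 : ∑ Φ, X Φ = N * (n * p) := by
    simp only [hX]
    rw [Finset.sum_comm]
    simp only [sum_coshD hn]
    simp
    ring
  have hX2 : ∑ Φ, X Φ ^ 2 ≤ N * ((n * p) ^ 2 + n * C) := by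
    have e : ∀ Φ, X Φ ^ 2 = ∑ x, ∑ y, Real.cosh (s * DF Φ x) * Real.cosh (s * DF Φ y) := by
      intro Φ; simp only [hX]; rw [sq, Finset.sum_mul_sum]
    simp only [e]
    rw [Finset.sum_comm]
    have e2 : ∀ x, ∑ Φ : Formula n k m, ∑ y, Real.cosh (s * DF Φ x) * Real.cosh (s * DF Φ y)
        ≤ N * (n * p ^ 2 + C) := by
      intro x
      rw [Finset.sum_comm]
      have e3 : ∀ y, ∑ Φ : Formula n k m, Real.cosh (s * DF Φ x) * Real.cosh (s * DF Φ y)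
          ≤ N * p ^ 2 + if y = x then N * C else 0 := by
        intro y
        by_cases hy : y = x
        · subst hy
          simp only [if_true]
          have : ∑ Φ : Formula n k m, Real.cosh (s * DF Φ y) * Real.cosh (s * DF Φ y)
            ≤ ∑ Φ : Formula n k m, Real.cosh ((2 * s) * DF Φ y) := by
            refine Finset.sum_le_sum fun Φ _ => ?_
            have h1 := Real.cosh_two_mul (s * DF Φ y)
            have h2 := Real.cosh_sq (s * DF Φ y)
            rw [mul_assoc]
            nlinarith [sq_nonneg (Real.sinh (s * DF Φ y))]
          rw [sum_coshD hn] at this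
          have h3 := hpow _ hc2
          have h4 : Real.exp (R / 2 * (Real.cosh (2 * s) - 1)) ≤ C :=
            Real.exp_le_exp.2 (by nlinarith)
          have h5 : 0 ≤ N * p ^ 2 := by positivity
          have h6 := mul_le_mul_of_nonneg_left (h3.trans h4) hN0.le
          linarith
        · rw [sum_coshDD hn s x y (Ne.symm hy)]
          simp only [hy, if_false, add_zero]
          gcongr
          have h8 : p ^ 2 = ((1 + a) ^ 2) ^ (k * m) := by
            rw [hp, ← pow_mul, ← pow_mul, mul_comm]
          rw [h8]
          exact pow_le_pow_left₀ (by positivity) (by nlinarith) _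
      calc _ ≤ ∑ y, (N * p ^ 2 + if y = x then N * C else 0) :=
            Finset.sum_le_sum fun y _ => e3 y
        _ = _ := by
            rw [Finset.sum_add_distrib]; simp; ring
    calc _ ≤ ∑ x : Fin n, N * (n * p ^ 2 + C) := Finset.sum_le_sum fun x _ => e2 x
      _ = _ := by simp; ring
  have hcard : ∑ Φ : Formula n k m, (1 : ℝ) = N := by
    simp [hN, mul_comm]
  have hind : ∀ Φ : Formula n k m, (if n * (1 + η) < X Φ then (1 : ℝ) else 0) ≤
      (16 / (η ^ 2 * n ^ 2)) * (X Φ - n * p) ^ 2 := by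
    intro Φ
    split_ifs with h
    · have h1 : n * η / 4 ≤ X Φ - n * p := by nlinarith
      have h2 : (n * η / 4) ^ 2 ≤ (X Φ - n * p) ^ 2 := by gcongr
      rw [div_mul_eq_mul_div, le_div_iff₀ (by positivity)]
      nlinarith
    · positivity
  calc _ ≤ ∑ Φ : Formula n k m, (16 / (η ^ 2 * n ^ 2)) * (X Φ - n * p) ^ 2 :=
        Finset.sum_le_sum fun Φ _ => hind Φ
    _ = (16 / (η ^ 2 * n ^ 2)) * (∑ Φ, X Φ ^ 2 - 2 * (n * p) * ∑ Φ, X Φ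
          + (n * p) ^ 2 * ∑ Φ : Formula n k m, (1 : ℝ)) := by
        rw [← Finset.mul_sum]
        congr 1
        rw [Finset.mul_sum, Finset.mul_sum, ← Finset.sum_sub_distrib, ← Finset.sum_add_distrib]
        exact Finset.sum_congr rfl fun Φ _ => by ring
    _ ≤ (16 / (η ^ 2 * n ^ 2)) * (N * (n * C)) := by
        gcongr
        rw [hX1, hcard]
        nlinarith
    _ = _ := by field_simp

lemma sum_split {n k m1 m2 : ℕ} (G : Formula n k m1 → Formula n k m2 → ℝ) :
    ∑ Φ : Formula n k (m1 + m2), G (fun i => Φ (Fin.castAdd m2 i)) (fun i => Φ (Fin.natAdd m1 i))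
      = ∑ Φ1, ∑ Φ2, G Φ1 Φ2 := by
  rw [← Fintype.sum_prod_type']
  rw [← (Fin.appendEquiv (α := Clause n k) m1 m2).sum_comp]
  refine Finset.sum_congr rfl fun p _ => ?_
  simp [Fin.appendEquiv]

lemma sat_split {n k m1 m2 : ℕ} (σ : Assignment n) (Φ : Formula n k (m1 + m2)) :
    Satisfies σ Φ ↔ Satisfies σ (fun i => Φ (Fin.castAdd m2 i)) ∧
      Satisfies σ (fun i => Φ (Fin.natAdd m1 i)) := by
  constructor
  · intro h
    exact ⟨fun i => h _, fun i => h _⟩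
  · rintro ⟨h1, h2⟩ i
    induction i using Fin.addCases with
    | left i => exact h1 i
    | right i => exact h2 i

/-- the good event, on the two halves -/
def evA {n k m1 m2 : ℕ} (s η τ : ℝ) (Φ1 : Formula n k m1) (Φ2 : Formula n k m2) : Prop :=
  ∑ x, Real.cosh (s * DF Φ1 x) ≤ n * (1 + η) ∧ LF (fun x => s * DF Φ1 x) Φ2 ≤ τ

lemma card_form {n k m : ℕ} : ∑ Φ : Formula n k m, (1 : ℝ) = ((2 * n : ℝ) ^ k) ^ m := by
  simp [mul_comm]

lemma uniform_part {n k m1 m2 : ℕ} (s η τ e1 e2 : ℝ)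
    (h1 : ∑ Φ : Formula n k m1,
      (if n * (1 + η) < ∑ x, Real.cosh (s * DF Φ x) then (1 : ℝ) else 0) ≤
      ((2 * n : ℝ) ^ k) ^ m1 * e1)
    (h2 : -τ + η * (k * m2) ≤ e2) :
    ∑ Φ : Formula n k (m1 + m2), (if evA s η τ (fun i => Φ (Fin.castAdd m2 i))
        (fun i => Φ (Fin.natAdd m1 i)) then (0 : ℝ) else 1) ≤
      ((2 * n : ℝ) ^ k) ^ (m1 + m2) * (e1 + Real.exp e2) := by
  rw [sum_split (fun Φ1 Φ2 => if evA s η τ Φ1 Φ2 then (0 : ℝ) else 1)]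
  have key : ∀ Φ1 : Formula n k m1, ∑ Φ2 : Formula n k m2, (if evA s η τ Φ1 Φ2 then (0 : ℝ) else 1)
      ≤ ((2 * n : ℝ) ^ k) ^ m2 *
        (if n * (1 + η) < ∑ x, Real.cosh (s * DF Φ1 x) then (1 : ℝ) else 0) +
        ((2 * n : ℝ) ^ k) ^ m2 * Real.exp e2 := by
    intro Φ1
    split_ifs with h
    · calc _ ≤ ∑ Φ2 : Formula n k m2, (1 : ℝ) :=
            Finset.sum_le_sum fun Φ2 _ => by split_ifs <;> norm_num
        _ = ((2 * n : ℝ) ^ k) ^ m2 := card_form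
        _ ≤ _ := by rw [mul_one]; exact le_add_of_nonneg_right (by positivity)
    · have hle := not_lt.1 h
      have := uniform_tail (k := k) (m := m2) (fun x => s * DF Φ1 x) η τ hle
      calc _ = ∑ Φ2 : Formula n k m2,
            (if τ < LF (fun x => s * DF Φ1 x) Φ2 then (1 : ℝ) else 0) := by
            refine Finset.sum_congr rfl fun Φ2 _ => ?_
            by_cases h' : LF (fun x => s * DF Φ1 x) Φ2 ≤ τ
            · simp [evA, hle, h']
            · simp [evA, h']
        _ ≤ _ := this
        _ ≤ _ := by
            rw [mul_zero, zero_add]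
            gcongr
  calc _ ≤ ∑ Φ1 : Formula n k m1, (((2 * n : ℝ) ^ k) ^ m2 *
        (if n * (1 + η) < ∑ x, Real.cosh (s * DF Φ1 x) then (1 : ℝ) else 0) +
        ((2 * n : ℝ) ^ k) ^ m2 * Real.exp e2 * 1) :=
        Finset.sum_le_sum fun Φ1 _ => by rw [mul_one]; exact key Φ1
    _ = ((2 * n : ℝ) ^ k) ^ m2 * (∑ Φ : Formula n k m1,
      (if n * (1 + η) < ∑ x, Real.cosh (s * DF Φ x) then (1 : ℝ) else 0)) +
        ((2 * n : ℝ) ^ k) ^ m2 * Real.exp e2 * ((2 * n : ℝ) ^ k) ^ m1 := by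
        rw [Finset.sum_add_distrib, ← Finset.mul_sum, ← Finset.mul_sum, card_form]
    _ ≤ ((2 * n : ℝ) ^ k) ^ m2 * (((2 * n : ℝ) ^ k) ^ m1 * e1) +
        ((2 * n : ℝ) ^ k) ^ m2 * Real.exp e2 * ((2 * n : ℝ) ^ k) ^ m1 := by
        gcongr
    _ = _ := by rw [pow_add]; ring

lemma planted_part {n k m1 m2 : ℕ} (hn : 0 < n) (hk : 0 < k) (σ : Assignment n)
    (s η τ b e : ℝ) (hs : 0 ≤ s) (hη0 : 0 ≤ η) (hkη : k * η ≤ 1) (hb0 : 0 ≤ b)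
    (hηb : 4 * η ≤ (2 ^ k : ℝ)⁻¹ * b)
    (hb : n * b ≤ s * (k * (2 ^ k : ℝ)⁻¹ * m1 / 4))
    (he1 : -(k * m1 * ((2 ^ k : ℝ)⁻¹) ^ 2 / 16) ≤ e)
    (he2 : τ - (2 ^ k : ℝ)⁻¹ * k * b / 2 * m2 ≤ e) :
    ∑ Φ : Formula n k (m1 + m2), (if Satisfies σ Φ ∧ evA s η τ (fun i => Φ (Fin.castAdd m2 i))
        (fun i => Φ (Fin.natAdd m1 i)) then (1 : ℝ) else 0) ≤
      ((2 * n : ℝ) ^ k * (1 - (2 ^ k : ℝ)⁻¹)) ^ (m1 + m2) * (2 * Real.exp e) := by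
  simp only [sat_split]
  rw [sum_split (fun Φ1 Φ2 => if (Satisfies σ Φ1 ∧ Satisfies σ Φ2) ∧ evA s η τ Φ1 Φ2
    then (1 : ℝ) else 0)]
  set q : ℝ := (2 ^ k : ℝ)⁻¹ with hq
  have hq0 : 0 < q := by positivity
  have hq1 : q < 1 := by
    rw [hq]; exact inv_lt_one_of_one_lt₀ (one_lt_pow₀ (by norm_num) hk.ne')
  have hkq : k * q ≤ 1 := by
    rw [hq, ← div_eq_mul_inv, div_le_one (by positivity)]
    exact_mod_cast Nat.lt_two_pow_self.le
  set M : ℝ := (2 * n : ℝ) ^ k * (1 - q) with hM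
  have hM0 : 0 ≤ M := mul_nonneg (by positivity) (by linarith)
  set τ1 : ℝ := q / 4 * (k * q * m1 / 4) with hτ1
  set P : Formula n k m1 → Prop :=
    fun Φ1 => Satisfies σ Φ1 ∧ LF (fun x => q / 4 * eps (σ x)) Φ1 ≤ τ1 with hP
  have hpart1 : ∑ Φ1, (if P Φ1 then (1 : ℝ) else 0) ≤ M ^ m1 * Real.exp e := by
    have h := planted_tail (k := k) (m := m1) hn σ (fun x => q / 4 * eps (σ x)) ((q / 4) ^ 2)
      (q / 4) τ1 hk
      (by
        have : ∀ x, Real.cosh (q / 4 * eps (σ x)) = Real.cosh (q / 4) := by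
          intro x
          cases σ x <;> simp [eps]
        simp only [this]
        simp only [Finset.sum_const, Finset.card_univ, Fintype.card_fin, nsmul_eq_mul]
        gcongr
        exact cosh_bound (by linarith) (by linarith))
      (by positivity)
      (by nlinarith) (by positivity)
      (by
        have : ∀ x, eps (σ x) * (q / 4 * eps (σ x)) = q / 4 := by
          intro x
          have := eps_sq (σ x)
          linear_combination q / 4 * this
        simp only [this]
        simp)
      (by rw [← hq]; nlinarith)
    refine h.trans ?_
    rw [← hq, ← hM]
    gcongr
    refine le_trans (le_of_eq ?_) he1
    rw [hτ1]; ring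
  have key : ∀ Φ1 : Formula n k m1, ∑ Φ2 : Formula n k m2,
      (if (Satisfies σ Φ1 ∧ Satisfies σ Φ2) ∧ evA s η τ Φ1 Φ2 then (1 : ℝ) else 0)
      ≤ M ^ m2 * (if P Φ1 then (1 : ℝ) else 0) +
        M ^ m2 * Real.exp e * (if Satisfies σ Φ1 then (1 : ℝ) else 0) := by
    intro Φ1
    by_cases hs1 : Satisfies σ Φ1
    swap
    · simp [hs1, hP]
    by_cases hP1 : P Φ1
    · simp only [hP1, hs1, if_true, true_and]
      calc _ ≤ ∑ Φ2 : Formula n k m2, (if Satisfies σ Φ2 then (1 : ℝ) else 0) :=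
            Finset.sum_le_sum fun Φ2 _ => by
              by_cases h : Satisfies σ Φ2
              · simp only [h, true_and, if_true]; split_ifs <;> norm_num
              · simp [h]
        _ = M ^ m2 := card_sat σ
        _ ≤ _ := by rw [mul_one]; exact le_add_of_nonneg_right (by positivity)
    · simp only [hP1, hs1, if_true, if_false, true_and, mul_zero, zero_add, mul_one]
      by_cases hX : ∑ x, Real.cosh (s * DF Φ1 x) ≤ n * (1 + η)
      swap
      · simp only [evA, hX, false_and, and_false, if_false, Finset.sum_const_zero]
        positivity
      have hτ : τ1 < q / 4 * ∑ x, eps (σ x) * DF Φ1 x := by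
        have : ¬ LF (fun x => q / 4 * eps (σ x)) Φ1 ≤ τ1 := fun h => hP1 ⟨hs1, h⟩
        rw [LF_smul, LF_eq_sum] at this
        exact not_le.1 this
      have hτ' : k * q * m1 / 4 < ∑ x, eps (σ x) * DF Φ1 x :=
        lt_of_mul_lt_mul_left hτ (by positivity)
      have h := planted_tail (k := k) (m := m2) hn σ (fun x => s * DF Φ1 x) η b τ hk hX hη0 hkη hb0
        (by
          have e : ∑ x, eps (σ x) * (s * DF Φ1 x) = s * ∑ x, eps (σ x) * DF Φ1 x := by
            rw [Finset.mul_sum]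
            exact Finset.sum_congr rfl fun x _ => by ring
          rw [e]
          exact hb.trans (mul_le_mul_of_nonneg_left hτ'.le hs)) hηb
      calc _ = ∑ Φ2 : Formula n k m2,
            (if Satisfies σ Φ2 ∧ LF (fun x => s * DF Φ1 x) Φ2 ≤ τ then (1 : ℝ) else 0) := by
            simp only [evA, hX, true_and]
        _ ≤ _ := h
        _ ≤ _ := by
          rw [← hq, ← hM]
          gcongr
  calc _ ≤ ∑ Φ1 : Formula n k m1, (M ^ m2 * (if P Φ1 then (1 : ℝ) else 0) +
        M ^ m2 * Real.exp e * (if Satisfies σ Φ1 then (1 : ℝ) else 0)) :=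
        Finset.sum_le_sum fun Φ1 _ => key Φ1
    _ = M ^ m2 * (∑ Φ1, (if P Φ1 then (1 : ℝ) else 0)) +
        M ^ m2 * Real.exp e * M ^ m1 := by
        rw [Finset.sum_add_distrib, ← Finset.mul_sum, ← Finset.mul_sum, card_sat]
    _ ≤ M ^ m2 * (M ^ m1 * Real.exp e) + M ^ m2 * Real.exp e * M ^ m1 := by
        gcongr
    _ = _ := by rw [pow_add]; ring

lemma satCount_eq {n k m : ℕ} (Φ : Formula n k m) :
    (satCount n k m Φ : ℝ) = ∑ σ, (if Satisfies σ Φ then (1 : ℝ) else 0) := by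
  simp [satCount, satSet]

lemma sum_satCount {n k m : ℕ} : ∑ Φ : Formula n k m, (satCount n k m Φ : ℝ) =
    2 ^ n * ((2 * n : ℝ) ^ k * (1 - (2 ^ k : ℝ)⁻¹)) ^ m := by
  simp only [satCount_eq]
  rw [Finset.sum_comm]
  simp only [card_sat]
  simp

lemma combine {n k m : ℕ} (hn : 0 < n) (hk : 0 < k) (A : Formula n k m → Prop) (g δ1 δ2 : ℝ)
    (h1 : ∑ Φ, (if A Φ then (0 : ℝ) else 1) ≤ ((2 * n : ℝ) ^ k) ^ m * δ1)
    (h2 : ∀ σ, ∑ Φ : Formula n k m, (if Satisfies σ Φ ∧ A Φ then (1 : ℝ) else 0) ≤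
      ((2 * n : ℝ) ^ k * (1 - (2 ^ k : ℝ)⁻¹)) ^ m * δ2) :
    1 - (δ1 + Real.exp g * δ2) ≤ prF n k m fun Φ => (satCount n k m Φ : ℝ) ≤
      Real.exp (-g) * expF n k m (fun Ψ => (satCount n k m Ψ : ℝ)) := by
  set q : ℝ := (2 ^ k : ℝ)⁻¹ with hq
  have hq1 : q < 1 := by
    rw [hq]; exact inv_lt_one_of_one_lt₀ (one_lt_pow₀ (by norm_num) hk.ne')
  have hn' : (0 : ℝ) < n := by exact_mod_cast hn
  set N : ℝ := ((2 * n : ℝ) ^ k) ^ m with hN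
  have hN0 : 0 < N := by positivity
  have hM0 : 0 < (2 * n : ℝ) ^ k * (1 - q) := mul_pos (by positivity) (by linarith)
  set B : ℝ := 2 ^ n * ((2 * n : ℝ) ^ k * (1 - q)) ^ m with hB
  have hB0 : 0 < B := by positivity
  have hcard : (Fintype.card (Formula n k m) : ℝ) = N := by
    rw [hN, ← card_form]; simp
  have hE : expF n k m (fun Ψ => (satCount n k m Ψ : ℝ)) = B / N := by
    rw [expF, sum_satCount, hcard]
  rw [hE, prF, hcard, le_div_iff₀ hN0]
  set good : Formula n k m → Prop :=
    fun Φ => (satCount n k m Φ : ℝ) ≤ Real.exp (-g) * (B / N) with hgood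
  have e1 : ((univ.filter fun Φ => good Φ).card : ℝ) = N - ∑ Φ, (if good Φ then (0 : ℝ) else 1) := by
    rw [eq_sub_iff_add_eq, Finset.card_filter]
    refine Eq.trans ?_ (card_form (n := n) (k := k) (m := m))
    push_cast
    rw [← Finset.sum_add_distrib]
    exact Finset.sum_congr rfl fun Φ _ => by split_ifs <;> norm_num
  have e2 : ∀ Φ, (if good Φ then (0 : ℝ) else 1) ≤ (if A Φ then (0 : ℝ) else 1) +
      Real.exp g * (N / B) * ∑ σ, (if Satisfies σ Φ ∧ A Φ then (1 : ℝ) else 0) := by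
    intro Φ
    by_cases hA : A Φ
    · simp only [hA, and_true, if_true, zero_add]
      rw [← satCount_eq]
      split_ifs with h
      · positivity
      · have h := not_le.1 h
        have : Real.exp g * (N / B) * (Real.exp (-g) * (B / N)) = 1 := by
          rw [Real.exp_neg]
          have := (Real.exp_pos g).ne'
          field_simp
        rw [← this]
        gcongr
    · simp only [hA, and_false, if_false, Finset.sum_const_zero, mul_zero, add_zero]
      split_ifs <;> norm_num
  have e3 : ∑ Φ, (if good Φ then (0 : ℝ) else 1) ≤ N * δ1 + Real.exp g * (N / B) * (B * δ2) := by
    calc _ ≤ ∑ Φ, ((if A Φ then (0 : ℝ) else 1) +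
        Real.exp g * (N / B) * ∑ σ, (if Satisfies σ Φ ∧ A Φ then (1 : ℝ) else 0)) :=
          Finset.sum_le_sum fun Φ _ => e2 Φ
      _ = ∑ Φ, (if A Φ then (0 : ℝ) else 1) + Real.exp g * (N / B) *
          ∑ σ, ∑ Φ, (if Satisfies σ Φ ∧ A Φ then (1 : ℝ) else 0) := by
          rw [Finset.sum_add_distrib, ← Finset.mul_sum, Finset.sum_comm (γ := Formula n k m)]
      _ ≤ N * δ1 + Real.exp g * (N / B) * ∑ σ : Assignment n,
          ((2 * n : ℝ) ^ k * (1 - q)) ^ m * δ2 := by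
          gcongr with σ
          exact h2 σ
      _ = _ := by
          congr 2
          simp [hB]; ring
  rw [e1]
  have e4 : Real.exp g * (N / B) * (B * δ2) = N * (Real.exp g * δ2) := by field_simp
  rw [e4] at e3
  linarith

lemma final_bound {n k m1 m2 : ℕ} (hn : 0 < n) (hk : 0 < k) (q R s η : ℝ)
    (hq : q = (2 ^ k : ℝ)⁻¹) (hqR : 1 < q * R) (hkR : (k : ℝ) ≤ R) (hs : s = q / (512 * R))
    (hη : η = s ^ 2 * R)
    (h1 : R / 4 * n ≤ k * m1) (h1' : (k * m1 : ℝ) ≤ R / 2 * n)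
    (h2 : R / 4 * n ≤ k * m2) (h2' : (k * m2 : ℝ) ≤ R * n) :
    1 - ((16 * Real.exp (R * (Real.cosh (2 * s) - 1)) / η ^ 2 / n
        + Real.exp (-(s * q ^ 2 * R ^ 2 / 512 * n))) +
        Real.exp (q ^ 2 / 262144 * n) * (2 * Real.exp (-(q ^ 2 / 131072 * n)))) ≤
      prF n k (m1 + m2) fun Φ => (satCount n k (m1 + m2) Φ : ℝ) ≤
      Real.exp (-(q ^ 2 / 262144 * n)) *
        expF n k (m1 + m2) (fun Ψ => (satCount n k (m1 + m2) Ψ : ℝ)) := by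
  have hq0 : 0 < q := by rw [hq]; positivity
  have hq1 : q < 1 := by
    rw [hq]; exact inv_lt_one_of_one_lt₀ (one_lt_pow₀ (by norm_num) hk.ne')
  have hn' : (0 : ℝ) < n := by exact_mod_cast hn
  have hR1 : 1 < R := by nlinarith
  have hR0 : 0 < R := by linarith
  have hs0 : 0 < s := by rw [hs]; positivity
  have hsR : s * R = q / 512 := by rw [hs]; field_simp
  have hs1 : s ≤ 1 := by nlinarith
  have hη' : η = q * s / 512 := by rw [hη]; linear_combination s * hsR
  have hη0 : 0 < η := by rw [hη]; positivity
  have hRη : R * η ≤ 1 := by rw [hη']; nlinarith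
  have hη1 : η ≤ 1 := by nlinarith
  have hkη : k * η ≤ 1 := le_trans (by gcongr) hRη
  have hqn : q * n ≤ q * (q * R) * n := by
    have : q * n * 1 ≤ q * n * (q * R) := by gcongr
    linarith
  refine combine hn hk (fun Φ => evA s η (s * q ^ 2 * R ^ 2 / 256 * n)
    (fun i => Φ (Fin.castAdd m2 i)) (fun i => Φ (Fin.natAdd m1 i))) _ _ _ ?_ ?_
  · refine uniform_part s η _ _ _ (cheb hn s η R hs0.le hs1 hη0 hη1 hη h1' hR0) ?_
    have h3 : η * (k * m2) ≤ η * (R * n) := by gcongr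
    have h4 : η * (R * n) = s * (q * R) * n / 512 := by rw [hη']; ring
    have h5 : s * (q * R) * n / 512 * 1 ≤ s * (q * R) * n / 512 * (q * R) := by gcongr
    nlinarith
  · intro σ
    refine planted_part hn hk σ s η _ (s * q * R / 16) _ hs0.le hη0.le hkη (by positivity)
      ?_ ?_ ?_ ?_
    · rw [← hq, hη']
      have : q * s / 16 * 1 ≤ q * s / 16 * (q * R) := by gcongr
      have : 0 < q * s := by positivity
      nlinarith
    · rw [← hq]
      have : s * q / 4 * (R / 4 * n) ≤ s * q / 4 * (k * m1) := by gcongr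
      linarith
    · rw [← hq]
      have h3 : q ^ 2 / 16 * (R / 4 * n) ≤ q ^ 2 / 16 * (k * m1) := by gcongr
      have h4 : q ^ 2 * 1 * n ≤ q ^ 2 * R * n := by gcongr
      have : 0 < q ^ 2 * n := by positivity
      linarith
    · rw [← hq]
      have h3 : q * (s * q * R / 16) / 2 * (R / 4 * n) ≤ q * (s * q * R / 16) / 2 * (k * m2) := by
        gcongr
      have h4 : s * q ^ 2 * R ^ 2 / 256 * n = q ^ 2 * (q * R) * n / 131072 := by
        linear_combination q ^ 2 * R / 256 * n * hsR
      have h5 : q ^ 2 * 1 * n ≤ q ^ 2 * (q * R) * n := by gcongr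
      linarith

lemma final_tendsto (A B q : ℝ) (hB : 0 < B) (hq : 0 < q) :
    Tendsto (fun n : ℕ => 1 - ((A / n + Real.exp (-(B * n))) +
        Real.exp (q ^ 2 / 262144 * n) * (2 * Real.exp (-(q ^ 2 / 131072 * n)))))
      atTop (nhds 1) := by
  have hexp : ∀ B : ℝ, 0 < B → Tendsto (fun n : ℕ => Real.exp (-(B * n))) atTop (nhds 0) := by
    intro B hB
    exact Real.tendsto_exp_neg_atTop_nhds_zero.comp
      (tendsto_natCast_atTop_atTop.const_mul_atTop hB)
  have h1 : Tendsto (fun n : ℕ => A / n) atTop (nhds 0) := tendsto_const_div_atTop_nhds_zero_nat A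
  have h3 : Tendsto (fun n : ℕ => Real.exp (q ^ 2 / 262144 * n) *
      (2 * Real.exp (-(q ^ 2 / 131072 * n)))) atTop (nhds 0) := by
    have := (hexp (q ^ 2 / 262144) (by positivity)).const_mul 2
    rw [mul_zero] at this
    refine this.congr fun n => ?_
    rw [mul_left_comm, ← Real.exp_add]
    ring_nf
  have := ((h1.add (hexp B hB)).add h3).const_sub 1
  simpa using this

/-- There are `k0` and an absolute constant `c > 0` such that for every
`k ≥ k0` and every density `r > 2^k/k`, whp `|S(Φ)| ≤ exp(-c 4^{-k} n) E[|S(Φ)|]`. -/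
theorem statement2 :
    ∃ (k0 : ℕ) (c : ℝ), 0 < c ∧
      ∀ k : ℕ, k0 ≤ k → ∀ r : ℝ, (2 : ℝ) ^ k / k < r →
        Tendsto
          (fun n : ℕ =>
            let m := ⌊r * (n : ℝ)⌋₊
            prF n k m fun Φ =>
              (satCount n k m Φ : ℝ) ≤
                Real.exp (-c * ((4 : ℝ) ^ k)⁻¹ * n) *
                  expF n k m (fun Ψ => (satCount n k m Ψ : ℝ)))
          atTop (nhds 1) := by
  refine ⟨1, 1 / 262144, by norm_num, ?_⟩
  intro k hk r hr
  have hk0 : 0 < k := hk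
  have hk' : (0 : ℝ) < k := by exact_mod_cast hk0
  set q : ℝ := (2 ^ k : ℝ)⁻¹ with hq
  have hq0 : 0 < q := by positivity
  have hqR : 1 < q * (k * r) := by
    rw [div_lt_iff₀ hk'] at hr
    rw [hq, ← div_eq_inv_mul, lt_div_iff₀ (by positivity)]
    linarith
  have hr1 : 1 ≤ r := by
    refine le_trans ?_ hr.le
    rw [le_div_iff₀ hk', one_mul]
    exact_mod_cast Nat.lt_two_pow_self.le
  set R : ℝ := k * r with hR
  have hkR : (k : ℝ) ≤ R := by nlinarith
  have hR0 : 0 < R := by linarith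
  set s : ℝ := q / (512 * R) with hs
  have hs0 : 0 < s := by positivity
  set η : ℝ := s ^ 2 * R with hη
  have hlim := final_tendsto (16 * Real.exp (R * (Real.cosh (2 * s) - 1)) / η ^ 2)
    (s * q ^ 2 * R ^ 2 / 512) q (by positivity) hq0
  refine tendsto_of_tendsto_of_tendsto_of_le_of_le' hlim tendsto_const_nhds ?_ ?_
  · filter_upwards [eventually_ge_atTop 8] with n hn
    have hn0 : 0 < n := by omega
    have hn' : (8 : ℝ) ≤ n := by exact_mod_cast hn
    have hf1 : (⌊r * (n : ℝ)⌋₊ : ℝ) ≤ r * n := Nat.floor_le (by positivity)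
    have hf2 : r * n < (⌊r * (n : ℝ)⌋₊ : ℝ) + 1 := Nat.lt_floor_add_one _
    show _ ≤ prF n k ⌊r * (n : ℝ)⌋₊ _
    generalize ⌊r * (n : ℝ)⌋₊ = m at hf1 hf2 ⊢
    obtain ⟨m1, m2, rfl, h12, h21⟩ : ∃ m1 m2, m = m1 + m2 ∧ m1 ≤ m2 ∧ m2 ≤ m1 + 1 :=
      ⟨m / 2, m - m / 2, by omega, by omega, by omega⟩
    have h12' : (m1 : ℝ) ≤ m2 := by exact_mod_cast h12
    have h21' : (m2 : ℝ) ≤ m1 + 1 := by exact_mod_cast h21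
    push_cast at hf1 hf2
    have hrn : 8 ≤ r * n := by nlinarith
    have key := final_bound (n := n) (k := k) (m1 := m1) (m2 := m2) hn0 hk0 q R s η hq hqR hkR hs hη
      (by
        have : r * n / 4 ≤ m1 := by linarith
        calc R / 4 * n = k * (r * n / 4) := by rw [hR]; ring
          _ ≤ _ := by gcongr)
      (by
        have : (m1 : ℝ) ≤ r * n / 2 := by linarith
        calc (k * m1 : ℝ) ≤ k * (r * n / 2) := by gcongr
          _ = _ := by rw [hR]; ring)
      (by
        have : r * n / 4 ≤ m2 := by linarith
        calc R / 4 * n = k * (r * n / 4) := by rw [hR]; ring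
          _ ≤ _ := by gcongr)
      (by
        have : (m2 : ℝ) ≤ r * n := by
          have : (0 : ℝ) ≤ m1 := by positivity
          linarith
        calc (k * m2 : ℝ) ≤ k * (r * n) := by gcongr
          _ = _ := by rw [hR]; ring)
    have hc : -(1 / 262144 : ℝ) * ((4 : ℝ) ^ k)⁻¹ * n = -(q ^ 2 / 262144 * n) := by
      have : ((4 : ℝ) ^ k)⁻¹ = q ^ 2 := by
        rw [hq, inv_pow, ← pow_mul, mul_comm, pow_mul]; norm_num
      rw [this]; ring
    rw [hc]
    exact key
  · refine Eventually.of_forall fun n => ?_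
    show prF n k ⌊r * (n : ℝ)⌋₊ _ ≤ 1
    rw [prF]
    refine div_le_one_of_le₀ ?_ (by positivity)
    exact_mod_cast Finset.card_le_univ _
end
end

section
/- Let k >= k0 (for a sufficiently large absolute k0) and let r be a density with 2^k/k < r <= 2^k * ln 2. Then there is a constant c = c(k, r) > 0 such that with high probability the degree sequence d = d(Phi) of the uniform random formula Phi = Phi_k(n, floor(r*n)) has the property that E[|S(Phi_d)|^2] >= exp(c*n) * (E[|S(Phi_d)|])^2, where both expectations are over the uniform random d-compatible formula Phi_d. In other words, the second moment of the number of satisfying assignments exceeds the square of its first moment by an exponential factor even after conditioning on the degree sequence. -/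
open Classical Finset Filter

noncomputable section

/-- The set of formulas with a given degree sequence `d`. -/
def degClass (n k m : ℕ) (d : Lit n → ℕ) : Finset (Formula n k m) :=
  univ.filter fun Φ => degSeq n k m Φ = d

/-- Conditional expectation given the degree sequence `d`
(i.e. expectation over the uniformly random `d`-compatible formula). -/
def condE (n k m : ℕ) (d : Lit n → ℕ) (f : Formula n k m → ℝ) : ℝ :=
  (∑ Φ ∈ degClass n k m d, f Φ) / ((degClass n k m d).card : ℝ)



lemma mgf_fin (L : ℝ) (t : ℝ) (ht : |t| * (2 * L) ≤ 1) (M : ℕ) :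
    ∀ F : Equiv.Perm (Fin M) → ℝ,
      (∀ π a b, |F (π * Equiv.swap a b) - F π| ≤ L) →
      ∑ π, Real.exp (t * (F π - (∑ π', F π') / (M.factorial : ℝ))) ≤
        (M.factorial : ℝ) * Real.exp (4 * t ^ 2 * L ^ 2 * M) := by
  induction M with
  | zero =>
    intro F hF
    simp
  | succ M ih =>
    intro F hF
    set G : Fin (M + 1) → Equiv.Perm (Fin M) → ℝ :=
      fun a π => F (Equiv.Perm.decomposeFin.symm (a, π)) with hG
    have hsum : ∀ f : Equiv.Perm (Fin (M + 1)) → ℝ,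
        ∑ π, f π = ∑ a, ∑ π, f (Equiv.Perm.decomposeFin.symm (a, π)) := by
      intro f
      rw [← Equiv.sum_comp Equiv.Perm.decomposeFin.symm f, Fintype.sum_prod_type]
    set A : Fin (M + 1) → ℝ := fun a => (∑ π, G a π) / (M.factorial : ℝ) with hA
    set A0 : ℝ := (∑ π', F π') / ((M + 1).factorial : ℝ) with hA0
    have hMf : (0 : ℝ) < (M.factorial : ℝ) := by exact_mod_cast M.factorial_pos
    have hlip : ∀ a π b c, |G a (π * Equiv.swap b c) - G a π| ≤ L := by
      intro a π b c
      have : Equiv.Perm.decomposeFin.symm (a, π * Equiv.swap b c)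
          = Equiv.Perm.decomposeFin.symm (a, π) * Equiv.swap b.succ c.succ := by
        ext x
        refine Fin.cases ?_ (fun y => ?_) x
        · simp [Equiv.Perm.mul_apply, Equiv.swap_apply_of_ne_of_ne (Fin.succ_ne_zero b).symm (Fin.succ_ne_zero c).symm]
        · have h1 : Equiv.swap b.succ c.succ y.succ = (Equiv.swap b c y).succ := by
            simp only [Equiv.swap_apply_def, Fin.succ_inj]
            split_ifs <;> rfl
          simp [Equiv.Perm.mul_apply, h1]
      simp only [hG]
      rw [this]
      exact hF _ _ _
    have hG0 : ∀ a π, |G a π - G 0 π| ≤ L := by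
      intro a π
      have : Equiv.Perm.decomposeFin.symm (a, π)
          = Equiv.Perm.decomposeFin.symm (0, π) *
            Equiv.swap ((Equiv.Perm.decomposeFin.symm (0, π))⁻¹ 0) ((Equiv.Perm.decomposeFin.symm (0, π))⁻¹ a) := by
        rw [Equiv.mul_swap_eq_swap_mul]
        simp
        ext x
        refine Fin.cases ?_ (fun y => ?_) x
        · simp
        · simp
      simp only [hG]
      rw [this]
      exact hF _ _ _
    have hcard : (Fintype.card (Equiv.Perm (Fin M)) : ℝ) = M.factorial := by
      simp [Fintype.card_perm]
    have hAd : ∀ a b, |A a - A b| ≤ 2 * L := by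
      intro a b
      have : A a - A b = (∑ π, (G a π - G b π)) / (M.factorial : ℝ) := by
        simp only [hA, Finset.sum_sub_distrib]; ring
      rw [this, abs_div, abs_of_pos hMf, div_le_iff₀ hMf]
      calc |∑ π, (G a π - G b π)| ≤ ∑ π, |G a π - G b π| := Finset.abs_sum_le_sum_abs _ _
        _ ≤ ∑ π : Equiv.Perm (Fin M), 2 * L := by
            apply Finset.sum_le_sum
            intro π _
            have h1 := hG0 a π
            have h2 := hG0 b π
            rw [abs_le] at *
            constructor <;> linarith
        _ = 2 * L * M.factorial := by
            rw [Finset.sum_const, nsmul_eq_mul, Finset.card_univ, hcard]; ring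
    have hA0' : A0 = (∑ a, A a) / (M + 1 : ℝ) := by
      simp only [hA0, hA, hG]
      rw [hsum, ← Finset.sum_div, Nat.factorial_succ]
      push_cast
      field_simp
    have hM1 : (0 : ℝ) < (M + 1 : ℝ) := by positivity
    have hy0 : ∑ a, (A a - A0) = 0 := by
      rw [Finset.sum_sub_distrib, hA0']
      simp
      field_simp
      simp
    have hy : ∀ a, |A a - A0| ≤ 2 * L := by
      intro a
      have : A a - A0 = (∑ b, (A a - A b)) / (M + 1 : ℝ) := by
        rw [Finset.sum_sub_distrib, hA0']
        simp
        field_simp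
      rw [this, abs_div, abs_of_pos hM1, div_le_iff₀ hM1]
      calc |∑ b, (A a - A b)| ≤ ∑ b, |A a - A b| := Finset.abs_sum_le_sum_abs _ _
        _ ≤ ∑ b : Fin (M + 1), 2 * L := Finset.sum_le_sum (fun b _ => hAd a b)
        _ = 2 * L * (M + 1) := by simp; ring
    rw [hsum]
    have hstep : ∀ a, ∑ π, Real.exp (t * (F (Equiv.Perm.decomposeFin.symm (a, π)) - A0))
        ≤ Real.exp (t * (A a - A0)) * ((M.factorial : ℝ) * Real.exp (4 * t ^ 2 * L ^ 2 * M)) := by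
      intro a
      have := ih (G a) (hlip a)
      calc ∑ π, Real.exp (t * (F (Equiv.Perm.decomposeFin.symm (a, π)) - A0))
          = Real.exp (t * (A a - A0)) * ∑ π, Real.exp (t * (G a π - A a)) := by
            rw [Finset.mul_sum]
            apply Finset.sum_congr rfl
            intro π _
            rw [← Real.exp_add]
            congr 1
            simp only [hG]; ring
        _ ≤ _ := by
            apply mul_le_mul_of_nonneg_left this (Real.exp_pos _).le
    calc ∑ a, ∑ π, Real.exp (t * (F (Equiv.Perm.decomposeFin.symm (a, π)) - A0))
        ≤ ∑ a, Real.exp (t * (A a - A0)) * ((M.factorial : ℝ) * Real.exp (4 * t ^ 2 * L ^ 2 * M)) :=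
          Finset.sum_le_sum (fun a _ => hstep a)
      _ = (∑ a, Real.exp (t * (A a - A0))) * ((M.factorial : ℝ) * Real.exp (4 * t ^ 2 * L ^ 2 * M)) := by
          rw [Finset.sum_mul]
      _ ≤ ((M + 1) * Real.exp (4 * t ^ 2 * L ^ 2)) * ((M.factorial : ℝ) * Real.exp (4 * t ^ 2 * L ^ 2 * M)) := by
          apply mul_le_mul_of_nonneg_right _ (by positivity)
          have h1 : ∀ a, Real.exp (t * (A a - A0)) ≤ 1 + t * (A a - A0) + 4 * t ^ 2 * L ^ 2 := by
            intro a
            have hab : |t * (A a - A0)| ≤ 1 := by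
              rw [abs_mul]
              exact le_trans (mul_le_mul_of_nonneg_left (hy a) (abs_nonneg t)) ht
            have h2 := Real.abs_exp_sub_one_sub_id_le hab
            have h3 := (abs_le.mp h2).2
            have h4 : (A a - A0) ^ 2 ≤ (2 * L) ^ 2 := by
              rw [← sq_abs]
              exact pow_le_pow_left₀ (abs_nonneg _) (hy a) 2
            have h5 : (t * (A a - A0)) ^ 2 ≤ 4 * t ^ 2 * L ^ 2 := by
              rw [mul_pow]
              nlinarith [sq_nonneg t]
            linarith
          calc ∑ a, Real.exp (t * (A a - A0))
              ≤ ∑ a : Fin (M + 1), (1 + t * (A a - A0) + 4 * t ^ 2 * L ^ 2) :=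
                Finset.sum_le_sum (fun a _ => h1 a)
            _ = (M + 1) * (4 * t ^ 2 * L ^ 2 + 1) := by
                rw [Finset.sum_add_distrib, Finset.sum_add_distrib, ← Finset.mul_sum, hy0]
                simp; ring
            _ ≤ _ := by
                apply mul_le_mul_of_nonneg_left _ hM1.le
                exact Real.add_one_le_exp _
      _ = _ := by
          rw [Nat.factorial_succ]
          push_cast
          rw [show 4 * t ^ 2 * L ^ 2 * ((M : ℝ) + 1) = 4 * t ^ 2 * L ^ 2 + 4 * t ^ 2 * L ^ 2 * M by ring,
            Real.exp_add]
          ring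

lemma mgf_perm {α : Type*} [Fintype α] [DecidableEq α] (L : ℝ) (t : ℝ)
    (ht : |t| * (2 * L) ≤ 1)
    (F : Equiv.Perm α → ℝ)
    (hF : ∀ π a b, |F (π * Equiv.swap a b) - F π| ≤ L) (μ : ℝ)
    (hμ : ∑ π, F π = (Fintype.card (Equiv.Perm α) : ℝ) * μ) :
    ∑ π, Real.exp (t * (F π - μ)) ≤
        (Fintype.card (Equiv.Perm α) : ℝ) * Real.exp (4 * t ^ 2 * L ^ 2 * Fintype.card α) := by
  set e := Fintype.equivFin α
  have key := mgf_fin L t ht (Fintype.card α) (fun π => F (e.symm.permCongr π)) (by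
    intro π a b
    have : e.symm.permCongr (π * Equiv.swap a b) = e.symm.permCongr π * Equiv.swap (e.symm a) (e.symm b) := by
      ext x
      simp [Equiv.permCongr_apply, Equiv.Perm.mul_apply, Equiv.swap_apply_def, Equiv.apply_eq_iff_eq_symm_apply]
      split_ifs <;> simp
    rw [this]
    exact hF _ _ _)
  have hs : ∀ f : Equiv.Perm α → ℝ, ∑ π, f (e.symm.permCongr π) = ∑ π, f π := fun f =>
    Equiv.sum_comp (e.symm.permCongr) f
  rw [hs F, hs (fun π => Real.exp (t * (F π - (∑ π', F π') / ((Fintype.card α).factorial : ℝ))))] at key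
  have hc : ((Fintype.card (Equiv.Perm α) : ℕ) : ℝ) = ((Fintype.card α).factorial : ℝ) := by
    rw [Fintype.card_perm]
  have hp : (0 : ℝ) < ((Fintype.card α).factorial : ℝ) := by exact_mod_cast Nat.factorial_pos _
  rw [hμ, hc] at key
  rw [hc]
  rw [mul_div_cancel_left₀ _ hp.ne'] at key
  exact key


def hitsAll {m k : ℕ} (S : Finset (Fin m × Fin k)) : Prop := ∀ i, ∃ j, (i, j) ∈ S

def satPat (m k T : ℕ) : Finset (Finset (Fin m × Fin k)) :=
  univ.filter fun S => S.card = T ∧ hitsAll S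

lemma mem_satPat {m k T : ℕ} {S : Finset (Fin m × Fin k)} :
    S ∈ satPat m k T ↔ S.card = T ∧ hitsAll S := by simp [satPat]

def rowCard {m k : ℕ} (S : Finset (Fin m × Fin k)) (i : Fin m) : ℕ :=
  (univ.filter fun j => (i, j) ∈ S).card

lemma sum_rowCard {m k : ℕ} (S : Finset (Fin m × Fin k)) : ∑ i, rowCard S i = S.card := by
  have : S.card = ∑ p : Fin m × Fin k, if p ∈ S then 1 else 0 := by simp
  rw [this, Fintype.sum_prod_type]
  apply Finset.sum_congr rfl
  intro i _
  simp [rowCard]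

/-- the rows `i`, `i'` are in the canonical critical configuration. -/
def goodPair {m k : ℕ} (a0 a1 : Fin k) (i i' : Fin m) (S : Finset (Fin m × Fin k)) : Prop :=
  (i, a0) ∈ S ∧ (i, a1) ∉ S ∧ (i', a0) ∈ S ∧ ∀ j, (i', j) ∈ S → j = a0

lemma core_count {m k T : ℕ} (a0 a1 : Fin k) (ha : a0 ≠ a1) (i i' : Fin m) (hi : i ≠ i') :
    ((satPat m k T).filter fun S => rowCard S i + rowCard S i' ≤ k).card ≤
      4 ^ k * ((satPat m k T).filter fun S => goodPair a0 a1 i i' S).card := by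
  have hV : ∀ s : ℕ, ∃ V : Finset (Fin k), (2 ≤ s → s ≤ k → V.card = s - 1 ∧ a0 ∈ V ∧ a1 ∉ V) := by
    intro s
    by_cases h : 2 ≤ s ∧ s ≤ k
    · have h1 : ({a0} : Finset (Fin k)) ⊆ univ.erase a1 := by
        intro x hx; simp at hx; simp [hx, ha]
      obtain ⟨V, hV1, hV2, hV3⟩ := Finset.exists_subsuperset_card_eq (n := s - 1) h1
        (by simp; omega) (by rw [Finset.card_erase_of_mem (mem_univ _)]; simp; omega)
      refine ⟨V, fun _ _ => ⟨hV3, hV1 (by simp), fun hh => ?_⟩⟩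
      have := hV2 hh
      simp at this
    · exact ⟨∅, fun h1 h2 => absurd ⟨h1, h2⟩ h⟩
  choose V hV using hV
  let f : Finset (Fin m × Fin k) → Finset (Fin m × Fin k) := fun S =>
    univ.filter fun p => if p.1 = i then p.2 ∈ V (rowCard S i + rowCard S i')
      else if p.1 = i' then p.2 = a0 else p ∈ S
  have hpos : ∀ S : Finset (Fin m × Fin k), hitsAll S → ∀ r, 1 ≤ rowCard S r := by
    intro S hS r
    obtain ⟨j, hj⟩ := hS r
    exact Finset.card_pos.mpr ⟨j, by simp [hj]⟩
  apply Finset.card_le_mul_card_image_of_maps_to (f := f)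
  · intro S hS
    rw [mem_filter, mem_satPat] at hS
    obtain ⟨⟨hc, hh⟩, hs⟩ := hS
    have h1 := hpos S hh i
    have h2 := hpos S hh i'
    obtain ⟨v1, v2, v3⟩ := hV (rowCard S i + rowCard S i') (by omega) hs
    have hri : rowCard (f S) i = rowCard S i + rowCard S i' - 1 := by
      rw [← v1]
      change (univ.filter fun j => (i, j) ∈ f S).card = _
      congr 1
      ext j
      simp [f]
    have hri' : rowCard (f S) i' = 1 := by
      change (univ.filter fun j => (i', j) ∈ f S).card = _
      rw [Finset.card_eq_one]
      refine ⟨a0, ?_⟩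
      ext j
      simp [f, hi.symm]
    have hrr : ∀ r, r ≠ i → r ≠ i' → rowCard (f S) r = rowCard S r := by
      intro r h3 h4
      change (univ.filter fun j => (r, j) ∈ f S).card = (univ.filter fun j => (r, j) ∈ S).card
      congr 1
      ext j
      simp [f, h3, h4]
    have hi'm : i' ∈ (univ.erase i : Finset (Fin m)) := by simp [hi.symm]
    rw [mem_filter, mem_satPat]
    refine ⟨⟨?_, ?_⟩, ?_⟩
    · rw [← hc, ← sum_rowCard, ← sum_rowCard S]
      rw [← Finset.add_sum_erase _ _ (mem_univ i), ← Finset.add_sum_erase _ _ hi'm,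
        ← Finset.add_sum_erase univ (rowCard S) (mem_univ i), ← Finset.add_sum_erase _ (rowCard S) hi'm,
        hri, hri']
      have : ∑ x ∈ ((univ.erase i).erase i'), rowCard (f S) x = ∑ x ∈ ((univ.erase i).erase i'), rowCard S x := by
        apply Finset.sum_congr rfl
        intro x hx
        simp at hx
        exact hrr x hx.2 hx.1
      rw [this]
      omega
    · intro r
      by_cases hr : r = i
      · exact ⟨a0, by simp [f, hr, v2]⟩
      by_cases hr' : r = i'
      · exact ⟨a0, by simp [f, hr', hi.symm]⟩
      obtain ⟨j, hj⟩ := hh r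
      exact ⟨j, by simp [f, hr, hr', hj]⟩
    · refine ⟨by simp [f, v2], by simp [f, v3], by simp [f, hi.symm], ?_⟩
      intro j hj
      simpa [f, hi.symm] using hj
  · intro S0 _
    let g : Finset (Fin m × Fin k) → Finset (Fin k) × Finset (Fin k) := fun S =>
      (univ.filter fun j => (i, j) ∈ S, univ.filter fun j => (i', j) ∈ S)
    have : (4 : ℕ) ^ k = (univ : Finset (Finset (Fin k) × Finset (Fin k))).card := by
      simp [← mul_pow]
    rw [this]
    apply Finset.card_le_card_of_injOn g (fun _ _ => mem_univ _)
    intro S hS S' hS' hg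
    simp only [coe_filter, Set.mem_ofPred_eq] at hS hS'
    have he : f S = f S' := by rw [hS.2, hS'.2]
    simp only [g, Prod.mk.injEq, Finset.ext_iff, mem_filter, mem_univ, true_and] at hg
    ext ⟨r, j⟩
    by_cases hr : r = i
    · subst hr; exact hg.1 j
    by_cases hr' : r = i'
    · subst hr'; exact hg.2 j
    have h5 := Finset.ext_iff.mp he (r, j)
    simpa [f, hr, hr'] using h5

lemma markov_pairs {m k T : ℕ} (hT : 4 * T ≤ (2 * k + 1) * m) (S : Finset (Fin m × Fin k))
    (hS : S.card = T) :
    (m : ℝ) * (m - 1) / (2 * (k + 1)) ≤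
      ∑ i : Fin m, ∑ i' ∈ univ.erase i, (if rowCard S i + rowCard S i' ≤ k then (1 : ℝ) else 0) := by
  have hk : (0 : ℝ) < k + 1 := by positivity
  rcases Nat.eq_zero_or_pos m with hm | hm
  · subst hm; simp
  have hm1 : (1 : ℝ) ≤ m := by exact_mod_cast hm
  have hce : ∀ i : Fin m, ((univ.erase i : Finset (Fin m)).card : ℝ) = m - 1 := by
    intro i
    rw [Finset.card_erase_of_mem (mem_univ _), card_univ, Fintype.card_fin, Nat.cast_sub hm]; simp
  have hsum : ∑ i : Fin m, (rowCard S i : ℝ) = T := by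
    rw [← hS, ← sum_rowCard]; push_cast; rfl
  have h1 : ∑ i : Fin m, ∑ i' ∈ univ.erase i, ((rowCard S i : ℝ) + rowCard S i') = 2 * (m - 1) * T := by
    have : ∀ i : Fin m, ∑ i' ∈ univ.erase i, ((rowCard S i : ℝ) + rowCard S i')
        = (m - 1) * rowCard S i + (T - rowCard S i) := by
      intro i
      rw [Finset.sum_add_distrib, Finset.sum_const, nsmul_eq_mul, hce, ← hsum,
        ← Finset.add_sum_erase _ (fun i => (rowCard S i : ℝ)) (mem_univ i)]
      ring
    rw [Finset.sum_congr rfl (fun i _ => this i), Finset.sum_add_distrib, Finset.sum_sub_distrib,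
      ← Finset.mul_sum, hsum]
    simp; ring
  have h2 : ∀ i i' : Fin m, (k + 1 : ℝ) * (1 - (if rowCard S i + rowCard S i' ≤ k then (1 : ℝ) else 0))
      ≤ (rowCard S i : ℝ) + rowCard S i' := by
    intro i i'
    split_ifs with h
    · simp; positivity
    · simp; exact_mod_cast (by omega : k + 1 ≤ rowCard S i + rowCard S i')
  have h3 : ∑ i : Fin m, ∑ i' ∈ univ.erase i,
      ((k + 1 : ℝ) * (1 - (if rowCard S i + rowCard S i' ≤ k then (1 : ℝ) else 0))) ≤ 2 * (m - 1) * T := by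
    rw [← h1]
    exact Finset.sum_le_sum fun i _ => Finset.sum_le_sum fun i' _ => h2 i i'
  simp only [← Finset.mul_sum, Finset.sum_sub_distrib, Finset.sum_const, nsmul_eq_mul, hce, card_univ,
    Fintype.card_fin, mul_one] at h3
  have h4 : (4 : ℝ) * T ≤ (2 * k + 1) * m := by exact_mod_cast hT
  rw [div_le_iff₀ (by positivity)]
  nlinarith [mul_le_mul_of_nonneg_left h4 (by linarith : (0 : ℝ) ≤ m - 1)]

def eta0 (k : ℕ) : ℝ := 1 / (2 * (k + 1) * 4 ^ k)

lemma eta0_pos (k : ℕ) : 0 < eta0 k := by unfold eta0; positivity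

lemma sum_good {m k T : ℕ} (a0 a1 : Fin k) (ha : a0 ≠ a1) (hT : 4 * T ≤ (2 * k + 1) * m) :
    eta0 k * (m * (m - 1)) * (satPat m k T).card ≤
      ∑ i : Fin m, ∑ i' ∈ univ.erase i,
        (((satPat m k T).filter fun S => goodPair a0 a1 i i' S).card : ℝ) := by
  have h1 : ∑ S ∈ satPat m k T, (m : ℝ) * (m - 1) / (2 * (k + 1)) ≤
      ∑ S ∈ satPat m k T, ∑ i : Fin m, ∑ i' ∈ univ.erase i, (if rowCard S i + rowCard S i' ≤ k then (1 : ℝ) else 0) :=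
    Finset.sum_le_sum fun S hS => markov_pairs hT S (mem_satPat.mp hS).1
  rw [Finset.sum_comm] at h1
  have h2 : ∑ i : Fin m, ∑ S ∈ satPat m k T, ∑ i' ∈ univ.erase i, (if rowCard S i + rowCard S i' ≤ k then (1 : ℝ) else 0)
      ≤ ∑ i : Fin m, ∑ i' ∈ univ.erase i,
        (4 : ℝ) ^ k * (((satPat m k T).filter fun S => goodPair a0 a1 i i' S).card : ℝ) := by
    apply Finset.sum_le_sum
    intro i _
    rw [Finset.sum_comm]
    apply Finset.sum_le_sum
    intro i' hi'
    have := core_count (T := T) a0 a1 ha i i' (by simp at hi'; exact fun h => hi' h.symm)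
    rw [Finset.sum_ite]
    simp
    exact_mod_cast this
  have h3 := h1.trans h2
  simp only [← Finset.mul_sum] at h3
  rw [Finset.sum_const, nsmul_eq_mul] at h3
  have h4 : (0 : ℝ) < 4 ^ k := by positivity
  unfold eta0
  have h5 := (div_le_iff₀' h4).mpr h3
  refine le_trans (le_of_eq ?_) h5
  field_simp

lemma swap_count {m k T : ℕ} (p q q' : Fin m × Fin k) (hpq : p ≠ q) (hrow : p.1 = q.1)
    (hq' : q'.1 ≠ p.1) :
    ((satPat m k T).filter fun S => p ∈ S ∧ q' ∉ S).card +
      ((satPat m k T).filter fun S => p ∈ S ∧ q ∉ S ∧ q' ∈ S ∧ ∀ j, (q'.1, j) ∈ S → j = q'.2).card ≤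
      ((satPat m k T).filter fun S => p ∈ S ∧ q ∉ S).card := by
  let f : Finset (Fin m × Fin k) → Finset (Fin m × Fin k) := fun S =>
    if q ∈ S then insert q' (S.erase q) else S
  have hqq' : q ≠ q' := by rintro rfl; exact hq' hrow.symm
  have hpq' : p ≠ q' := by rintro rfl; exact hq' rfl
  have hinj : Set.InjOn f ((satPat m k T).filter fun S => p ∈ S ∧ q' ∉ S) := by
    intro S hS S' hS' h
    simp only [coe_filter, Set.mem_ofPred_eq] at hS hS'
    obtain ⟨_, _, h1⟩ := hS
    obtain ⟨_, _, h2⟩ := hS'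
    simp only [f] at h
    split_ifs at h with h3 h4 h4
    · ext x
      have := Finset.ext_iff.mp h x
      by_cases hx : x = q
      · subst hx; simp [h3, h4]
      by_cases hx' : x = q'
      · subst hx'; simp [h1, h2]
      simpa [hx, hx'] using this
    · exfalso; apply h2; rw [← h]; simp
    · exfalso; apply h1; rw [h]; simp
    · exact h
  rw [← Finset.card_image_of_injOn hinj, ← Finset.card_union_of_disjoint]
  · apply Finset.card_le_card
    intro S hS
    rw [mem_union] at hS
    rcases hS with hS | hS
    · rw [mem_image] at hS
      obtain ⟨S, hS, rfl⟩ := hS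
      rw [mem_filter, mem_satPat] at hS
      obtain ⟨⟨hc, hh⟩, hp, hn⟩ := hS
      rw [mem_filter, mem_satPat]
      simp only [f]
      split_ifs with h3
      · refine ⟨⟨?_, ?_⟩, by simp [hp, hpq], by simp [hqq']⟩
        · rw [Finset.card_insert_of_notMem (by simp [hn]), Finset.card_erase_of_mem h3, hc]
          have : 0 < S.card := Finset.card_pos.mpr ⟨q, h3⟩
          omega
        · intro r
          by_cases hr : r = p.1
          · refine ⟨p.2, ?_⟩
            subst hr
            simp [hp, hpq]
          · obtain ⟨j, hj⟩ := hh r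
            refine ⟨j, ?_⟩
            have : (r, j) ≠ q := by
              rintro rfl
              exact hr hrow.symm
            simp [this, hj]
      · exact ⟨⟨hc, hh⟩, hp, h3⟩
    · rw [mem_filter] at hS ⊢
      exact ⟨hS.1, hS.2.1, hS.2.2.1⟩
  · rw [Finset.disjoint_left]
    intro S hS hS2
    rw [mem_image] at hS
    obtain ⟨S, hS, rfl⟩ := hS
    rw [mem_filter, mem_satPat] at hS
    obtain ⟨⟨hc, hh⟩, hp, hn⟩ := hS
    rw [mem_filter] at hS2
    obtain ⟨_, _, _, h4, h5⟩ := hS2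
    simp only [f] at h4 h5
    split_ifs at h4 h5 with h3
    · obtain ⟨j, hj⟩ := hh q'.1
      have hne : (q'.1, j) ≠ q := by
        rintro rfl
        exact hq' hrow.symm
      have := h5 j (by simp [hne, hj])
      apply hn
      subst this
      exact hj
    · exact hn h4

/-- number of same-row (in, out) ordered pairs -/
def inPairs {m k : ℕ} (S : Finset (Fin m × Fin k)) : ℝ :=
  ∑ p : Fin m × Fin k, ∑ q ∈ univ.filter (fun q => q.1 = p.1 ∧ q ≠ p), if p ∈ S ∧ q ∉ S then (1 : ℝ) else 0

lemma inPairs_bound {m k T : ℕ} (hk : 2 ≤ k) (hT : 4 * T ≤ (2 * k + 1) * m) :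
    ((k : ℝ) - 1) * T * ((m : ℝ) * k - T) * (satPat m k T).card +
        eta0 k * (m * (m - 1)) * (satPat m k T).card ≤
      ((m : ℝ) * k - 1) * ∑ S ∈ satPat m k T, inPairs S := by
  set A := satPat m k T with hA
  let a0 : Fin k := ⟨0, by omega⟩
  let a1 : Fin k := ⟨1, by omega⟩
  have ha : a0 ≠ a1 := by simp [a0, a1]
  let u : Fin m × Fin k → Fin m × Fin k → ℝ := fun p q => ((A.filter fun S => p ∈ S ∧ q ∉ S).card : ℝ)
  let c : Fin m × Fin k → Fin m × Fin k → Fin m × Fin k → ℝ := fun p q q' =>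
    ((A.filter fun S => p ∈ S ∧ q ∉ S ∧ q' ∈ S ∧ ∀ j, (q'.1, j) ∈ S → j = q'.2).card : ℝ)
  let Ri : Fin m × Fin k → Finset (Fin m × Fin k) := fun p => univ.filter (fun q => q.1 = p.1 ∧ q ≠ p)
  let Ro : Fin m × Fin k → Finset (Fin m × Fin k) := fun p => univ.filter (fun q => q.1 ≠ p.1)
  have hrow : ∀ p : Fin m × Fin k, (univ.filter (fun q : Fin m × Fin k => q.1 = p.1)).card = k := by
    intro p
    have : (univ.filter (fun q : Fin m × Fin k => q.1 = p.1)) = ({p.1} : Finset (Fin m)) ×ˢ univ := by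
      ext ⟨x, y⟩; simp [eq_comm]
    rw [this, Finset.card_product]; simp
  have hRi : ∀ p, ((Ri p).card : ℝ) = k - 1 := by
    intro p
    have : Ri p = (univ.filter (fun q : Fin m × Fin k => q.1 = p.1)).erase p := by
      ext q; simp [Ri, and_comm]
    rw [this, Finset.card_erase_of_mem (by simp), hrow, Nat.cast_sub (by omega)]; simp
  have hRo : ∀ p, ((Ro p).card : ℝ) = m * k - k := by
    intro p
    have h1 := Finset.card_filter_add_card_filter_not (s := (univ : Finset (Fin m × Fin k)))
      (fun q : Fin m × Fin k => q.1 = p.1)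
    rw [hrow, card_univ, Fintype.card_prod, Fintype.card_fin, Fintype.card_fin] at h1
    have h2 : (k : ℝ) + (Ro p).card = m * k := by exact_mod_cast h1
    linarith
  have hsw : ∀ p, ∀ q ∈ Ri p, ∀ q' ∈ Ro p, c p q q' ≤ u p q - u p q' := by
    intro p q hq q' hq'
    simp only [Ri, Ro, mem_filter, mem_univ, true_and] at hq hq'
    have := swap_count (T := T) p q q' (fun h => hq.2 h.symm) hq.1.symm hq'
    have h2 : u p q' + c p q q' ≤ u p q := by
      simp only [u, c]
      rw [hA]
      exact_mod_cast this
    linarith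
  have h1 : ∑ p, ∑ q ∈ Ri p, ∑ q' ∈ Ro p, c p q q' ≤ ∑ p, ∑ q ∈ Ri p, ∑ q' ∈ Ro p, (u p q - u p q') :=
    Finset.sum_le_sum fun p _ => Finset.sum_le_sum fun q hq => Finset.sum_le_sum fun q' hq' => hsw p q hq q' hq'
  have h2 : ∑ p, ∑ q ∈ Ri p, ∑ q' ∈ Ro p, (u p q - u p q') =
      (m * k - k) * (∑ p, ∑ q ∈ Ri p, u p q) - (k - 1) * ∑ p, ∑ q ∈ Ro p, u p q := by
    rw [Finset.mul_sum, Finset.mul_sum, ← Finset.sum_sub_distrib]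
    apply Finset.sum_congr rfl
    intro p _
    simp only [Finset.sum_sub_distrib, Finset.sum_const, nsmul_eq_mul, hRi, hRo, ← Finset.mul_sum]
  have hu : ∀ p q, u p q = ∑ S ∈ A, if p ∈ S ∧ q ∉ S then (1 : ℝ) else 0 := by
    intro p q; simp [u]
  have h3 : ∑ p, ∑ q ∈ Ri p, u p q = ∑ S ∈ A, inPairs S := by
    simp only [hu, inPairs]
    rw [Finset.sum_comm (s := A)]
    apply Finset.sum_congr rfl
    intro p _
    rw [Finset.sum_comm]
  have h4 : ∑ p, ∑ q ∈ Ri p, u p q + ∑ p, ∑ q ∈ Ro p, u p q = T * (m * k - T) * A.card := by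
    have h5 : ∀ p, ∑ q ∈ Ri p, u p q + ∑ q ∈ Ro p, u p q = ∑ q, u p q := by
      intro p
      have h6 : u p p = 0 := by simp [u]
      have h7 : ∑ q ∈ Ri p, u p q = ∑ q ∈ univ.filter (fun q : Fin m × Fin k => q.1 = p.1), u p q := by
        have : Ri p = (univ.filter (fun q : Fin m × Fin k => q.1 = p.1)).erase p := by
          ext q; simp [Ri, and_comm]
        rw [this, Finset.sum_erase _ h6]
      rw [h7]
      exact Finset.sum_filter_add_sum_filter_not _ _ _
    rw [← Finset.sum_add_distrib, Finset.sum_congr rfl (fun p _ => h5 p)]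
    simp only [hu]
    rw [Finset.sum_congr rfl (fun p _ => Finset.sum_comm), Finset.sum_comm]
    have h8 : ∀ S ∈ A, ∑ p, ∑ q, (if p ∈ S ∧ q ∉ S then (1 : ℝ) else 0) = T * (m * k - T) := by
      intro S hS
      have hc := (mem_satPat.mp hS).1
      have h9 : ∀ p q, (if p ∈ S ∧ q ∉ S then (1 : ℝ) else 0) = (if p ∈ S then 1 else 0) * (if q ∉ S then 1 else 0) := by
        intro p q; by_cases h1 : p ∈ S <;> by_cases h2 : q ∈ S <;> simp [h1, h2]
      simp only [h9, ← Finset.mul_sum, ← Finset.sum_mul]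
      have h10 : ∑ p, (if p ∈ S then (1 : ℝ) else 0) = T := by simp [hc]
      have h11 : ∑ q, (if q ∉ S then (1 : ℝ) else 0) = m * k - T := by
        have : ∀ q, (if q ∉ S then (1 : ℝ) else 0) = 1 - (if q ∈ S then (1 : ℝ) else 0) := by
          intro q; by_cases h : q ∈ S <;> simp [h]
        simp only [this, Finset.sum_sub_distrib, h10]
        simp
      rw [h10, h11]
    rw [Finset.sum_congr rfl h8]
    simp; ring
  have h6 : ∑ i : Fin m, ∑ i' ∈ univ.erase i, (((satPat m k T).filter fun S => goodPair a0 a1 i i' S).card : ℝ)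
      ≤ ∑ p, ∑ q ∈ Ri p, ∑ q' ∈ Ro p, c p q q' := by
    rw [Fintype.sum_prod_type]
    apply Finset.sum_le_sum
    intro i _
    have hc0 : ∀ p q q', 0 ≤ c p q q' := fun p q q' => Nat.cast_nonneg _
    refine le_trans ?_ (Finset.single_le_sum (f := fun a => ∑ q ∈ Ri (i, a), ∑ q' ∈ Ro (i, a), c (i, a) q q')
      (fun a _ => Finset.sum_nonneg fun q _ => Finset.sum_nonneg fun q' _ => hc0 _ _ _) (mem_univ a0))
    refine le_trans ?_ (Finset.single_le_sum (f := fun q => ∑ q' ∈ Ro (i, a0), c (i, a0) q q')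
      (fun q _ => Finset.sum_nonneg fun q' _ => hc0 _ _ _) (a := (i, a1)) (by simp [Ri, ha.symm]))
    have h7 : ∑ i' ∈ univ.erase i, (((satPat m k T).filter fun S => goodPair a0 a1 i i' S).card : ℝ)
        = ∑ q' ∈ (univ.erase i).image (fun i' => (i', a0)), c (i, a0) (i, a1) q' := by
      rw [Finset.sum_image (by intro x _ y _ h; simpa using h)]
      apply Finset.sum_congr rfl
      intro x _
      simp only [c, goodPair]
      congr
    rw [h7]
    apply Finset.sum_le_sum_of_subset_of_nonneg
    · intro q hq
      simp only [mem_image, mem_erase, mem_univ, and_true] at hq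
      obtain ⟨i', hi', rfl⟩ := hq
      simp [Ro, hi']
    · intro q _ _; exact hc0 _ _ _
  have h7 := sum_good (T := T) a0 a1 ha hT
  rw [h2] at h1
  have h8 := (h7.trans h6).trans h1
  rw [← h3]
  have h9 : ∑ p, ∑ q ∈ Ro p, u p q = T * (m * k - T) * A.card - ∑ p, ∑ q ∈ Ri p, u p q := by linarith
  rw [h9] at h8
  nlinarith

lemma ratio_bound {m k T : ℕ} (hk : 2 ≤ k) (hm : 2 ≤ m) (hT : 4 * (T + 1) ≤ (2 * k + 1) * m) :
    ((m : ℝ) * k - T) * (satPat m k T).card + eta0 k * m * (satPat m k (T + 1)).card ≤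
      (T + 1) * (satPat m k (T + 1)).card := by
  let a0 : Fin k := ⟨0, by omega⟩
  let a1 : Fin k := ⟨1, by omega⟩
  have ha : a0 ≠ a1 := by simp [a0, a1]
  -- pairs
  let X : Finset (Finset (Fin m × Fin k) × (Fin m × Fin k)) :=
    univ.filter fun z => z.1 ∈ satPat m k T ∧ z.2 ∉ z.1
  let Y : Finset (Finset (Fin m × Fin k) × (Fin m × Fin k)) :=
    univ.filter fun z => z.1 ∈ satPat m k (T + 1) ∧ z.2 ∈ z.1
  let Y0 : Finset (Finset (Fin m × Fin k) × (Fin m × Fin k)) :=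
    univ.filter fun z => z.1 ∈ satPat m k (T + 1) ∧ z.2 ∈ z.1 ∧ z.2.2 = a0 ∧
      ∀ j, (z.2.1, j) ∈ z.1 → j = a0
  have cardsum : ∀ Q : Finset (Fin m × Fin k) → (Fin m × Fin k) → Prop,
      ∀ A : Finset (Finset (Fin m × Fin k)),
      ((univ.filter fun z : Finset (Fin m × Fin k) × (Fin m × Fin k) => z.1 ∈ A ∧ Q z.1 z.2).card : ℝ)
        = ∑ S ∈ A, ((univ.filter fun p => Q S p).card : ℝ) := by
    intro Q A
    rw [Finset.card_filter, Fintype.sum_prod_type]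
    push_cast
    rw [← Finset.sum_subset (Finset.subset_univ A)]
    · apply Finset.sum_congr rfl
      intro S hS
      rw [Finset.card_filter]
      push_cast
      apply Finset.sum_congr rfl
      intro p _
      simp [hS]
    · intro S _ hS
      simp [hS]
  have hX : (X.card : ℝ) = ((m : ℝ) * k - T) * (satPat m k T).card := by
    have e : (X.card : ℝ) = ∑ S ∈ satPat m k T, ((univ.filter fun p => p ∉ S).card : ℝ) := by
      convert cardsum (fun S p => p ∉ S) (satPat m k T)
    rw [e]
    have : ∀ S ∈ satPat m k T, ((univ.filter fun p => p ∉ S).card : ℝ) = (m : ℝ) * k - T := by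
      intro S hS
      have hc := (mem_satPat.mp hS).1
      have h1 := Finset.card_filter_add_card_filter_not (s := (univ : Finset (Fin m × Fin k)))
        (fun q : Fin m × Fin k => q ∈ S)
      rw [card_univ, Fintype.card_prod, Fintype.card_fin, Fintype.card_fin] at h1
      have h3 : (univ.filter fun q => q ∈ S).card = T := by rw [← hc]; congr 1; ext; simp
      rw [h3] at h1
      have h2 : (T : ℝ) + (univ.filter fun p => p ∉ S).card = m * k := by exact_mod_cast h1
      linarith
    rw [Finset.sum_congr rfl this]; simp; ring
  have hY : (Y.card : ℝ) = (T + 1) * (satPat m k (T + 1)).card := by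
    have e : (Y.card : ℝ) = ∑ S ∈ satPat m k (T + 1), ((univ.filter fun p => p ∈ S).card : ℝ) := by
      convert cardsum (fun S p => p ∈ S) (satPat m k (T + 1))
    rw [e]
    have : ∀ S ∈ satPat m k (T + 1), ((univ.filter fun p => p ∈ S).card : ℝ) = T + 1 := by
      intro S hS
      have hc := (mem_satPat.mp hS).1
      have h3 : (univ.filter fun q => q ∈ S).card = T + 1 := by rw [← hc]; congr 1; ext; simp
      rw [h3]; push_cast; rfl
    rw [Finset.sum_congr rfl this]; simp; ring
  have hXY : X.card + Y0.card ≤ Y.card := by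
    let f : Finset (Fin m × Fin k) × (Fin m × Fin k) → Finset (Fin m × Fin k) × (Fin m × Fin k) :=
      fun z => (insert z.2 z.1, z.2)
    have hinj : Set.InjOn f X := by
      rintro ⟨S, p⟩ h1 ⟨S', p'⟩ h2 h
      simp only [X, coe_filter, Set.mem_ofPred_eq, mem_univ, true_and] at h1 h2
      simp only [f, Prod.mk.injEq] at h
      obtain ⟨h3, rfl⟩ := h
      have : S = S' := by
        rw [← Finset.erase_insert h1.2, h3, Finset.erase_insert h2.2]
      rw [this]
    rw [← Finset.card_image_of_injOn hinj, ← Finset.card_union_of_disjoint]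
    · apply Finset.card_le_card
      intro z hz
      rw [mem_union] at hz
      rcases hz with hz | hz
      · rw [mem_image] at hz
        obtain ⟨⟨S, p⟩, hz, rfl⟩ := hz
        simp only [X, mem_filter, mem_univ, true_and, mem_satPat] at hz
        obtain ⟨⟨hc, hh⟩, hn⟩ := hz
        simp only [Y, f, mem_filter, mem_univ, true_and, mem_satPat]
        refine ⟨⟨by rw [Finset.card_insert_of_notMem hn, hc], ?_⟩, by simp⟩
        intro r
        obtain ⟨j, hj⟩ := hh r
        exact ⟨j, by simp [hj]⟩
      · simp only [Y, Y0, mem_filter, mem_univ, true_and] at hz ⊢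
        exact ⟨hz.1, hz.2.1⟩
    · rw [Finset.disjoint_left]
      intro z hz hz2
      rw [mem_image] at hz
      obtain ⟨⟨S, p⟩, hz, rfl⟩ := hz
      simp only [X, mem_filter, mem_univ, true_and, mem_satPat] at hz
      obtain ⟨⟨hc, hh⟩, hn⟩ := hz
      simp only [Y0, f, mem_filter, mem_univ, true_and] at hz2
      obtain ⟨_, _, h4, h5⟩ := hz2
      obtain ⟨j, hj⟩ := hh p.1
      have := h5 j (by simp [hj])
      apply hn
      have h6 : p = (p.1, j) := by rw [this, ← h4]
      rw [h6]; exact hj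
  have hY0 : eta0 k * m * (satPat m k (T + 1)).card ≤ Y0.card := by
    have h1 := sum_good (T := T + 1) a0 a1 ha hT
    let cr : Fin m → ℝ := fun i' => (((satPat m k (T + 1)).filter fun S => (i', a0) ∈ S ∧ ∀ j, (i', j) ∈ S → j = a0).card : ℝ)
    have h2 : ∑ i : Fin m, ∑ i' ∈ univ.erase i,
        (((satPat m k (T + 1)).filter fun S => goodPair a0 a1 i i' S).card : ℝ) ≤
        ∑ i : Fin m, ∑ i' ∈ univ.erase i, cr i' := by
      apply Finset.sum_le_sum; intro i _
      apply Finset.sum_le_sum; intro i' _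
      simp only [cr]
      norm_cast
      apply Finset.card_le_card
      intro S hS
      rw [mem_filter] at hS ⊢
      exact ⟨hS.1, hS.2.2.2⟩
    have h3 : ∑ i : Fin m, ∑ i' ∈ univ.erase i, cr i' = (m - 1) * ∑ i, cr i := by
      have : ∀ i : Fin m, ∑ i' ∈ univ.erase i, cr i' = (∑ i, cr i) - cr i := by
        intro i
        rw [← Finset.add_sum_erase _ cr (mem_univ i)]; ring
      rw [Finset.sum_congr rfl (fun i _ => this i), Finset.sum_sub_distrib]
      simp; ring
    have h4 : ∑ i, cr i = Y0.card := by
      have hinj : Function.Injective (fun z : (_ : Fin m) × Finset (Fin m × Fin k) => ((z.2, (z.1, a0)) : Finset (Fin m × Fin k) × (Fin m × Fin k))) := by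
        rintro ⟨i, S⟩ ⟨i', S'⟩ h
        simp only [Prod.mk.injEq, and_true] at h
        obtain ⟨rfl, rfl⟩ := h
        rfl
      have : Y0 = ((univ : Finset (Fin m)).sigma (fun i' => (satPat m k (T + 1)).filter fun S => (i', a0) ∈ S ∧ ∀ j, (i', j) ∈ S → j = a0)).map ⟨_, hinj⟩ := by
        ext ⟨S, i, j⟩
        simp only [Y0, mem_filter, mem_univ, true_and, Finset.mem_map, mem_sigma, Function.Embedding.coeFn_mk, Prod.mk.injEq]
        constructor
        · rintro ⟨h1, h2, h3, h4⟩
          exact ⟨⟨i, S⟩, ⟨h1, by rw [← h3]; exact h2, h4⟩, rfl, rfl, h3.symm⟩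
        · rintro ⟨⟨i', S'⟩, ⟨h1, h2, h3⟩, rfl, rfl, rfl⟩
          exact ⟨h1, h2, rfl, h3⟩
      rw [this, card_map, Finset.card_sigma]
      push_cast; rfl
    rw [h3, h4] at h2
    have h5 := h1.trans h2
    have hm1 : (0 : ℝ) < m - 1 := by
      have : (2 : ℝ) ≤ m := by exact_mod_cast hm
      linarith
    have h6 : (m - 1 : ℝ) * (eta0 k * m * (satPat m k (T + 1)).card) ≤ (m - 1) * Y0.card := by
      refine le_trans (le_of_eq ?_) h5; ring
    exact le_of_mul_le_mul_left h6 hm1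
  have h7 : (X.card : ℝ) + Y0.card ≤ Y.card := by exact_mod_cast hXY
  rw [← hX, ← hY]
  linarith


section classLemmas

lemma pair_const {α : Type*} [DecidableEq α] (E : α → α → ℝ) (S : Finset α)
    (hsymm : ∀ p q, E p q = E q p)
    (h : ∀ p ∈ S, ∀ q ∈ S, ∀ q' ∈ S, p ≠ q → p ≠ q' → E p q = E p q')
    (p q : α) (hp : p ∈ S) (hq : q ∈ S) (hpq : p ≠ q) :
    (S.card : ℝ) * (S.card - 1) * E p q = ∑ a ∈ S, ∑ b ∈ S.erase a, E a b := by
  have key : ∀ a ∈ S, ∀ b ∈ S.erase a, E a b = E p q := by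
    intro a ha b hb
    rw [mem_erase] at hb
    obtain ⟨hba, hb⟩ := hb
    by_cases h1 : p = b
    · subst h1
      rw [hsymm a p]
      exact h p hp a ha q hq hba hpq
    · rw [h p hp q hq b hb hpq h1, hsymm a b, hsymm p b]
      exact h b hb a ha p hp hba (fun h => h1 h.symm)
  rw [Finset.sum_congr rfl (fun a ha => Finset.sum_congr rfl (key a ha))]
  have hc : ∀ a ∈ S, ∑ b ∈ S.erase a, E p q = (S.card - 1) * E p q := by
    intro a ha
    rw [Finset.sum_const, nsmul_eq_mul, Finset.card_erase_of_mem ha,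
      Nat.cast_sub (Finset.card_pos.mpr ⟨a, ha⟩)]
    simp
  rw [Finset.sum_congr rfl hc, Finset.sum_const, nsmul_eq_mul]
  ring

lemma sum_erase_prod {α : Type*} [DecidableEq α] (S : Finset α) (y : α → ℝ) :
    ∑ a ∈ S, ∑ b ∈ S.erase a, y a * y b = (∑ a ∈ S, y a) ^ 2 - ∑ a ∈ S, y a ^ 2 := by
  have : ∀ a ∈ S, ∑ b ∈ S.erase a, y a * y b = y a * (∑ b ∈ S, y b) - y a ^ 2 := by
    intro a ha
    rw [← Finset.mul_sum, ← Finset.add_sum_erase S y ha]; ring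
  rw [Finset.sum_congr rfl this, Finset.sum_sub_distrib, ← Finset.sum_mul]; ring

variable {α β : Type*} [Fintype α] [DecidableEq α]

/-- positions of true literals -/
def patt (B : β → Prop) (f : α → β) : Finset α := univ.filter fun p => B (f p)

def fibS (C : Finset (α → β)) (B : β → Prop) (S : Finset α) : Finset (α → β) :=
  C.filter fun f => patt B f = S

lemma fib_sum (C : Finset (α → β)) (hC : ∀ f ∈ C, ∀ π : Equiv.Perm α, f ∘ π ∈ C)
    (B : β → Prop) (S S' : Finset α) (e : Equiv.Perm α) (he : ∀ p, p ∈ S' ↔ e p ∈ S)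
    (φ : (α → β) → ℝ) :
    ∑ f ∈ fibS C B S, φ (f ∘ e) = ∑ f ∈ fibS C B S', φ f := by
  apply Finset.sum_nbij' (fun f => f ∘ e) (fun f => f ∘ e.symm)
  · intro f hf
    simp only [fibS, mem_filter, Finset.ext_iff, patt, mem_univ, true_and] at hf ⊢
    exact ⟨hC f hf.1 e, fun p => by rw [he, ← hf.2]; rfl⟩
  · intro f hf
    simp only [fibS, mem_filter, Finset.ext_iff, patt, mem_univ, true_and] at hf ⊢
    refine ⟨hC f hf.1 e.symm, fun p => ?_⟩
    have := he (e.symm p)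
    rw [Equiv.apply_symm_apply] at this
    rw [← this, ← hf.2]; rfl
  · intro f _; ext p; simp
  · intro f _; ext p; simp
  · intro f _; rfl

lemma fib_card (C : Finset (α → β)) (hC : ∀ f ∈ C, ∀ π : Equiv.Perm α, f ∘ π ∈ C)
    (B : β → Prop) (S S' : Finset α) (h : S.card = S'.card) :
    (fibS C B S).card = (fibS C B S').card := by
  let e0 : {x // x ∈ S'} ≃ {x // x ∈ S} := Fintype.equivOfCardEq (by simp [h])
  have := fib_sum C hC B S S' e0.extendSubtype (by
    intro p
    by_cases hp : p ∈ S'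
    · simp [hp, Equiv.extendSubtype_mem e0 p hp]
    · simp [hp, Equiv.extendSubtype_not_mem e0 p hp]) (fun _ => 1)
  simp at this
  exact_mod_cast this

/-- Summed pair products over a fibre. -/
def pairE (C : Finset (α → β)) (B : β → Prop) (x : β → ℝ) (S : Finset α) (p q : α) : ℝ :=
  ∑ f ∈ fibS C B S, x (f p) * x (f q)

lemma pairE_symm (C : Finset (α → β)) (B : β → Prop) (x : β → ℝ) (S : Finset α) (p q : α) :
    pairE C B x S p q = pairE C B x S q p := by
  unfold pairE; exact Finset.sum_congr rfl fun f _ => mul_comm _ _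

lemma pairE_swap (C : Finset (α → β)) (hC : ∀ f ∈ C, ∀ π : Equiv.Perm α, f ∘ π ∈ C)
    (B : β → Prop) (x : β → ℝ) (S : Finset α) (p q q' : α) (hpq : p ≠ q) (hpq' : p ≠ q')
    (hqq : q ∈ S ↔ q' ∈ S) :
    pairE C B x S p q = pairE C B x S p q' := by
  have := fib_sum C hC B S S (Equiv.swap q q') (by
    intro a
    by_cases h1 : a = q
    · subst h1; simp [hqq]
    by_cases h2 : a = q'
    · subst h2; simp [hqq]
    rw [Equiv.swap_apply_of_ne_of_ne h1 h2]) (fun f => x (f p) * x (f q'))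
  unfold pairE
  rw [← this]
  apply Finset.sum_congr rfl
  intro f _
  simp [Equiv.swap_apply_of_ne_of_ne hpq hpq']

end classLemmas

section Nstat

variable {m k : ℕ} {β : Type*}

def rowNb (p : Fin m × Fin k) : Finset (Fin m × Fin k) := univ.filter (fun q => q.1 = p.1 ∧ q ≠ p)

lemma rowNb_card (hk : 1 ≤ k) (p : Fin m × Fin k) : ((rowNb p).card : ℝ) = k - 1 := by
  have hrow : (univ.filter (fun q : Fin m × Fin k => q.1 = p.1)).card = k := by
    have : (univ.filter (fun q : Fin m × Fin k => q.1 = p.1)) = ({p.1} : Finset (Fin m)) ×ˢ univ := by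
      ext ⟨x, y⟩; simp [eq_comm]
    rw [this, Finset.card_product]; simp
  have : rowNb p = (univ.filter (fun q : Fin m × Fin k => q.1 = p.1)).erase p := by
    ext q; simp [rowNb, and_comm]
  rw [this, Finset.card_erase_of_mem (by simp), hrow, Nat.cast_sub (by omega)]; simp

lemma mem_rowNb_symm (p q : Fin m × Fin k) : q ∈ rowNb p ↔ p ∈ rowNb q := by
  simp [rowNb, eq_comm]

lemma rowNb_sum_comm (g : Fin m × Fin k → Fin m × Fin k → ℝ) :
    ∑ p, ∑ q ∈ rowNb p, g p q = ∑ p, ∑ q ∈ rowNb p, g q p := by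
  rw [Finset.sum_comm' (t' := univ) (s' := fun q => rowNb q)]
  intro p q
  simp [mem_rowNb_symm p q]

/-- the statistic: sum over ordered pairs of distinct slots in the same clause -/
def Nst (x : β → ℝ) (f : Fin m × Fin k → β) : ℝ := ∑ p, ∑ q ∈ rowNb p, x (f p) * x (f q)

lemma Nst_lip (hk : 1 ≤ k) (x : β → ℝ) (hx : ∀ l, |x l| ≤ 1) (f : Fin m × Fin k → β) (a b : Fin m × Fin k) :
    |Nst x (f ∘ Equiv.swap a b) - Nst x f| ≤ 8 * k := by
  let ind : Fin m × Fin k → ℝ := fun p => (if p = a then 1 else 0) + (if p = b then 1 else 0)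
  have hind : ∀ p, 0 ≤ ind p := by intro p; simp only [ind]; split_ifs <;> norm_num
  have hxx : ∀ l l', |x l * x l'| ≤ 1 := by
    intro l l'; rw [abs_mul]; exact mul_le_one₀ (hx _) (abs_nonneg _) (hx _)
  have h1 : ∀ p q, |x ((f ∘ Equiv.swap a b) p) * x ((f ∘ Equiv.swap a b) q) - x (f p) * x (f q)| ≤ 2 * (ind p + ind q) := by
    intro p q
    by_cases h : (p = a ∨ p = b) ∨ (q = a ∨ q = b)
    · have h2 : 1 ≤ ind p + ind q := by
        have hpa := hind p
        have hqa := hind q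
        rcases h with (h | h) | (h | h)
        · have : 1 ≤ ind p := by simp only [ind, h]; split_ifs <;> norm_num at *
          linarith
        · have : 1 ≤ ind p := by simp only [ind, h]; split_ifs <;> norm_num at *
          linarith
        · have : 1 ≤ ind q := by simp only [ind, h]; split_ifs <;> norm_num at *
          linarith
        · have : 1 ≤ ind q := by simp only [ind, h]; split_ifs <;> norm_num at *
          linarith
      have h3 := abs_sub (x ((f ∘ Equiv.swap a b) p) * x ((f ∘ Equiv.swap a b) q)) (x (f p) * x (f q))
      have h4 := hxx ((f ∘ Equiv.swap a b) p) ((f ∘ Equiv.swap a b) q)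
      have h5 := hxx (f p) (f q)
      linarith
    · push Not at h
      obtain ⟨⟨h2, h3⟩, h4, h5⟩ := h
      simp only [Function.comp, Equiv.swap_apply_of_ne_of_ne h2 h3, Equiv.swap_apply_of_ne_of_ne h4 h5, sub_self, abs_zero]
      have := hind p; have := hind q; linarith
  have hsum1 : ∑ p, ind p = 2 := by
    simp only [ind, Finset.sum_add_distrib]; simp; norm_num
  have h2 : ∑ p, ∑ q ∈ rowNb p, ind p = 2 * (k - 1) := by
    simp only [Finset.sum_const, nsmul_eq_mul, rowNb_card hk, ← Finset.mul_sum, hsum1]; ring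
  have h3 : ∑ p : Fin m × Fin k, ∑ q ∈ rowNb p, ind q = 2 * (k - 1) := by
    rw [rowNb_sum_comm]; exact h2
  unfold Nst
  rw [← Finset.sum_sub_distrib]
  calc |∑ p, (∑ q ∈ rowNb p, x ((f ∘ Equiv.swap a b) p) * x ((f ∘ Equiv.swap a b) q) - ∑ q ∈ rowNb p, x (f p) * x (f q))|
      ≤ ∑ p, ∑ q ∈ rowNb p, 2 * (ind p + ind q) := by
        refine (Finset.abs_sum_le_sum_abs _ _).trans (Finset.sum_le_sum fun p _ => ?_)
        rw [← Finset.sum_sub_distrib]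
        exact (Finset.abs_sum_le_sum_abs _ _).trans (Finset.sum_le_sum fun q _ => h1 p q)
    _ = 2 * (2 * (k - 1) + 2 * (k - 1)) := by
        simp only [← Finset.mul_sum, Finset.sum_add_distrib]
        rw [h2, h3]
    _ ≤ 8 * k := by linarith

lemma Nst_perm_mean (hk : 1 ≤ k) (hM : 2 ≤ m * k) (x : β → ℝ) (f : Fin m × Fin k → β) (W Q : ℝ)
    (hW : ∑ p, x (f p) = W) (hQ : ∑ p, x (f p) ^ 2 = Q) :
    ∑ π : Equiv.Perm (Fin m × Fin k), Nst x (f ∘ π) =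
      (Fintype.card (Equiv.Perm (Fin m × Fin k)) : ℝ) * ((k - 1) * (W ^ 2 - Q) / ((m : ℝ) * k - 1)) := by
  set P := (Fintype.card (Equiv.Perm (Fin m × Fin k)) : ℝ) with hP
  let E : Fin m × Fin k → Fin m × Fin k → ℝ := fun p q => ∑ π : Equiv.Perm (Fin m × Fin k), x (f (π p)) * x (f (π q))
  have hM' : (2 : ℝ) ≤ (m : ℝ) * k := by exact_mod_cast hM
  have hE : ∀ p q, p ≠ q → E p q = P * (W ^ 2 - Q) / (((m : ℝ) * k) * (m * k - 1)) := by
    intro p q hpq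
    have h1 := pair_const E univ (fun p q => Finset.sum_congr rfl fun π _ => mul_comm _ _) (by
      intro p _ q _ q' _ h1 h2
      simp only [E]
      rw [← Equiv.sum_comp (Equiv.mulRight (Equiv.swap q q'))]
      apply Finset.sum_congr rfl
      intro π _
      simp [Equiv.Perm.mul_apply, Equiv.swap_apply_of_ne_of_ne h1 h2]) p q (mem_univ _) (mem_univ _) hpq
    have h2 : ∑ a, ∑ b ∈ univ.erase a, E a b = P * (W ^ 2 - Q) := by
      simp only [E]
      rw [Finset.sum_congr rfl (fun a _ => Finset.sum_comm), Finset.sum_comm]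
      have : ∀ π : Equiv.Perm (Fin m × Fin k), ∑ a, ∑ b ∈ univ.erase a, x (f (π a)) * x (f (π b)) = W ^ 2 - Q := by
        intro π
        rw [sum_erase_prod univ (fun a => x (f (π a))), Equiv.sum_comp π (fun a => x (f a)),
          Equiv.sum_comp π (fun a => x (f a) ^ 2), hW, hQ]
      rw [Finset.sum_congr rfl (fun π _ => this π)]
      simp [hP]
      ring
    rw [h2] at h1
    simp only [card_univ, Fintype.card_prod, Fintype.card_fin, Nat.cast_mul] at h1
    rw [← h1]
    have : (m : ℝ) * k - 1 ≠ 0 := by linarith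
    have hmk : (m : ℝ) * k ≠ 0 := by linarith
    have := left_ne_zero_of_mul hmk
    have := right_ne_zero_of_mul hmk
    field_simp
  have h1 : ∑ π : Equiv.Perm (Fin m × Fin k), Nst x (f ∘ π) = ∑ p, ∑ q ∈ rowNb p, E p q := by
    simp only [Nst, E]
    rw [Finset.sum_comm]
    apply Finset.sum_congr rfl
    intro p _
    rw [Finset.sum_comm]
    rfl
  rw [h1]
  have h2 : ∀ p : Fin m × Fin k, ∑ q ∈ rowNb p, E p q = (k - 1) * (P * (W ^ 2 - Q) / (((m : ℝ) * k) * (m * k - 1))) := by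
    intro p
    rw [Finset.sum_congr rfl (fun q hq => hE p q (by
      simp only [rowNb, mem_filter] at hq; exact fun h => hq.2.2 h.symm)), Finset.sum_const, nsmul_eq_mul, rowNb_card hk]
  rw [Finset.sum_congr rfl (fun p _ => h2 p), Finset.sum_const, nsmul_eq_mul, card_univ, Fintype.card_prod, Fintype.card_fin, Fintype.card_fin]
  push_cast
  have : (m : ℝ) * k - 1 ≠ 0 := by linarith
  have hmk : (m : ℝ) * k ≠ 0 := by linarith
  have := left_ne_zero_of_mul hmk
  have := right_ne_zero_of_mul hmk
  field_simp

lemma Nst_mgf (hk : 1 ≤ k) (hM : 2 ≤ m * k) (x : β → ℝ) (hx : ∀ l, |x l| ≤ 1)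
    (C : Finset (Fin m × Fin k → β)) (hC : ∀ f ∈ C, ∀ π : Equiv.Perm (Fin m × Fin k), f ∘ π ∈ C)
    (W Q : ℝ) (hW : ∀ f ∈ C, ∑ p, x (f p) = W) (hQ : ∀ f ∈ C, ∑ p, x (f p) ^ 2 = Q)
    (t : ℝ) (ht : |t| * (2 * (8 * k)) ≤ 1) :
    ∑ f ∈ C, Real.exp (t * (Nst x f - (k - 1) * (W ^ 2 - Q) / ((m : ℝ) * k - 1))) ≤
      C.card * Real.exp (4 * t ^ 2 * (8 * k) ^ 2 * (m * k)) := by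
  set μ := ((k : ℝ) - 1) * (W ^ 2 - Q) / ((m : ℝ) * k - 1) with hμ
  set P := (Fintype.card (Equiv.Perm (Fin m × Fin k)) : ℝ) with hP
  have hPpos : 0 < P := by
    rw [hP]; exact_mod_cast Fintype.card_pos
  have h1 : ∀ f ∈ C, ∑ π : Equiv.Perm (Fin m × Fin k), Real.exp (t * (Nst x (f ∘ π) - μ)) ≤
      P * Real.exp (4 * t ^ 2 * (8 * k) ^ 2 * (m * k)) := by
    intro f hf
    have := mgf_perm (α := Fin m × Fin k) (8 * k) t ht (fun π => Nst x (f ∘ π))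
      (fun π a b => Nst_lip hk x hx (f ∘ π) a b) μ (Nst_perm_mean hk hM x f W Q (hW f hf) (hQ f hf))
    simpa using this
  have h2 : ∀ π : Equiv.Perm (Fin m × Fin k), ∑ f ∈ C, Real.exp (t * (Nst x (f ∘ π) - μ)) =
      ∑ f ∈ C, Real.exp (t * (Nst x f - μ)) := by
    intro π
    apply Finset.sum_nbij' (fun f => f ∘ π) (fun f => f ∘ π.symm)
    · intro f hf; exact hC f hf π
    · intro f hf; exact hC f hf π.symm
    · intro f _; ext p; simp
    · intro f _; ext p; simp
    · intro f _; rfl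
  have h3 := Finset.sum_le_sum h1
  rw [Finset.sum_comm, Finset.sum_congr rfl (fun π _ => h2 π), Finset.sum_const, nsmul_eq_mul,
    Finset.sum_const, nsmul_eq_mul, card_univ, ← hP] at h3
  have h4 : P * (∑ f ∈ C, Real.exp (t * (Nst x f - μ))) ≤ P * (C.card * Real.exp (4 * t ^ 2 * (8 * k) ^ 2 * (m * k))) := by
    refine h3.trans (le_of_eq ?_); ring
  exact le_of_mul_le_mul_left h4 hPpos

end Nstat

section drift

variable {m k : ℕ} {β : Type*}

lemma sum_fibS (C : Finset (Fin m × Fin k → β)) (B : β → Prop) (T : ℕ)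
    (hT : ∀ f ∈ C, (patt B f).card = T) (φ : (Fin m × Fin k → β) → ℝ) :
    ∑ f ∈ C.filter (fun f => hitsAll (patt B f)), φ f = ∑ S ∈ satPat m k T, ∑ f ∈ fibS C B S, φ f := by
  rw [← Finset.sum_fiberwise_of_maps_to (s := C.filter (fun f => hitsAll (patt B f))) (t := satPat m k T) (g := fun f => patt B f)]
  · apply Finset.sum_congr rfl
    intro S hS
    apply Finset.sum_congr _ (fun _ _ => rfl)
    ext f
    rw [mem_satPat] at hS
    simp only [fibS, mem_filter]
    constructor
    · rintro ⟨⟨h1, _⟩, h2⟩; exact ⟨h1, h2⟩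
    · rintro ⟨h1, h2⟩; exact ⟨⟨h1, by rw [h2]; exact hS.2⟩, h2⟩
  · intro f hf
    rw [mem_filter] at hf
    rw [mem_satPat]
    exact ⟨hT f hf.1, hf.2⟩

lemma fib_Nst (hk : 1 ≤ k) (C : Finset (Fin m × Fin k → β))
    (hC : ∀ f ∈ C, ∀ π : Equiv.Perm (Fin m × Fin k), f ∘ π ∈ C)
    (B : β → Prop) (x : β → ℝ) (S : Finset (Fin m × Fin k)) (T F UT QT UF QF : ℝ)
    (hST : (S.card : ℝ) = T) (hSF : (Sᶜ.card : ℝ) = F) (hT : 2 ≤ T) (hF : 2 ≤ F)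
    (hUT : ∀ f ∈ C, ∑ p ∈ patt B f, x (f p) = UT) (hQT : ∀ f ∈ C, ∑ p ∈ patt B f, x (f p) ^ 2 = QT)
    (hUF : ∀ f ∈ C, ∑ p ∈ (patt B f)ᶜ, x (f p) = UF) (hQF : ∀ f ∈ C, ∑ p ∈ (patt B f)ᶜ, x (f p) ^ 2 = QF) :
    ∑ f ∈ fibS C B S, Nst x f = ((fibS C B S).card : ℝ) *
      (T * (k - 1) * ((UT ^ 2 - QT) / (T * (T - 1))) + F * (k - 1) * ((UF ^ 2 - QF) / (F * (F - 1)))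
        - inPairs S * ((UT ^ 2 - QT) / (T * (T - 1)) + (UF ^ 2 - QF) / (F * (F - 1)) - 2 * (UT * UF / (T * F)))) := by
  set K := ((fibS C B S).card : ℝ) with hK
  set eTT := (UT ^ 2 - QT) / (T * (T - 1)) with heTT
  set eFF := (UF ^ 2 - QF) / (F * (F - 1)) with heFF
  set eTF := UT * UF / (T * F) with heTF
  have hf : ∀ f ∈ fibS C B S, f ∈ C ∧ patt B f = S := by intro f hf; simpa [fibS] using hf
  have gen : ∀ (R : Finset (Fin m × Fin k)) (U Q : ℝ), (∀ p ∈ R, ∀ q ∈ R, p ∈ S ↔ q ∈ S) →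
      (∀ f ∈ fibS C B S, ∑ p ∈ R, x (f p) = U) → (∀ f ∈ fibS C B S, ∑ p ∈ R, x (f p) ^ 2 = Q) →
      ∀ p ∈ R, ∀ q ∈ R, p ≠ q → (R.card : ℝ) * (R.card - 1) * pairE C B x S p q = K * (U ^ 2 - Q) := by
    intro R U Q hR hU hQ p hp q hq hpq
    rw [pair_const (pairE C B x S) R (pairE_symm C B x S) (fun p _ q hq q' hq' h1 h2 =>
      pairE_swap C hC B x S p q q' h1 h2 (hR q hq q' hq')) p q hp hq hpq]
    unfold pairE
    rw [Finset.sum_congr rfl (fun a _ => Finset.sum_comm), Finset.sum_comm]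
    rw [Finset.sum_congr rfl (fun f hf => (sum_erase_prod R (fun a => x (f a))).trans (by rw [hU f hf, hQ f hf])),
      Finset.sum_const, nsmul_eq_mul]
  have hTT : ∀ p ∈ S, ∀ q ∈ S, p ≠ q → pairE C B x S p q = K * eTT := by
    intro p hp q hq hpq
    have := gen S UT QT (fun p hp q hq => by simp [hp, hq]) (fun f h => by
      have := hUT f (hf f h).1; rwa [(hf f h).2] at this) (fun f h => by
      have := hQT f (hf f h).1; rwa [(hf f h).2] at this) p hp q hq hpq
    rw [hST] at this
    have h1 : T * (T - 1) ≠ 0 := by apply mul_ne_zero <;> linarith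
    rw [heTT, mul_div_assoc', eq_div_iff h1, ← this]; ring
  have hFF : ∀ p, p ∉ S → ∀ q, q ∉ S → p ≠ q → pairE C B x S p q = K * eFF := by
    intro p hp q hq hpq
    have := gen Sᶜ UF QF (fun p hp q hq => by simp only [mem_compl] at hp hq; simp [hp, hq]) (fun f h => by
      have := hUF f (hf f h).1; rwa [(hf f h).2] at this) (fun f h => by
      have := hQF f (hf f h).1; rwa [(hf f h).2] at this) p (by simpa using hp) q (by simpa using hq) hpq
    rw [hSF] at this
    have h1 : F * (F - 1) ≠ 0 := by apply mul_ne_zero <;> linarith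
    rw [heFF, mul_div_assoc', eq_div_iff h1, ← this]; ring
  have hTF : ∀ p ∈ S, ∀ q, q ∉ S → pairE C B x S p q = K * eTF := by
    intro p hp q hq
    have hne : ∀ a ∈ S, ∀ b, b ∉ S → a ≠ b := by rintro a ha b hb rfl; exact hb ha
    have key : ∀ a ∈ S, ∀ b ∈ Sᶜ, pairE C B x S a b = pairE C B x S p q := by
      intro a ha b hb
      rw [mem_compl] at hb
      rw [pairE_swap C hC B x S p q b (hne p hp q hq) (hne p hp b hb) (by simp [hq, hb]),
        pairE_symm C B x S a b, pairE_symm C B x S p b]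
      exact pairE_swap C hC B x S b a p (hne a ha b hb).symm (hne p hp b hb).symm (by simp [ha, hp])
    have h1 : T * F * pairE C B x S p q = ∑ a ∈ S, ∑ b ∈ Sᶜ, pairE C B x S a b := by
      rw [Finset.sum_congr rfl (fun a ha => Finset.sum_congr rfl (key a ha))]
      simp only [Finset.sum_const, nsmul_eq_mul, hST, hSF]; ring
    have h2 : ∑ a ∈ S, ∑ b ∈ Sᶜ, pairE C B x S a b = K * (UT * UF) := by
      unfold pairE
      rw [Finset.sum_congr rfl (fun a _ => Finset.sum_comm), Finset.sum_comm]
      have h0 : ∀ f ∈ fibS C B S, ∑ a ∈ S, ∑ b ∈ Sᶜ, x (f a) * x (f b) = UT * UF := by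
        intro f h
        have h1 := hUT f (hf f h).1
        have h2 := hUF f (hf f h).1
        rw [(hf f h).2] at h1 h2
        rw [← Finset.sum_mul_sum, h1, h2]
      rw [Finset.sum_congr rfl h0, Finset.sum_const, nsmul_eq_mul]
    have h3 : T * F ≠ 0 := by apply mul_ne_zero <;> linarith
    rw [heTF, mul_div_assoc', eq_div_iff h3, ← h2, ← h1]; ring
  have hall : ∀ p, ∀ q ∈ rowNb p, pairE C B x S p q = K * ((if p ∈ S then eTT else eFF) +
      (if p ∈ S ∧ q ∉ S then 1 else 0) * (eTF - eTT) + (if q ∈ S ∧ p ∉ S then 1 else 0) * (eTF - eFF)) := by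
    intro p q hq
    have hpq : p ≠ q := by simp only [rowNb, mem_filter] at hq; exact fun h => hq.2.2 h.symm
    by_cases hp : p ∈ S <;> by_cases hq : q ∈ S
    · rw [hTT p hp q hq hpq]; simp [hp, hq]
    · rw [hTF p hp q hq]; simp [hp, hq]
    · rw [pairE_symm, hTF q hq p hp]; simp [hp, hq]
    · rw [hFF p hp q hq hpq]; simp [hp, hq]
  have hI : ∑ p, ∑ q ∈ rowNb p, (if p ∈ S ∧ q ∉ S then (1:ℝ) else 0) = inPairs S := rfl
  have hI' : ∑ p, ∑ q ∈ rowNb p, (if q ∈ S ∧ p ∉ S then (1:ℝ) else 0) = inPairs S := by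
    rw [rowNb_sum_comm]; exact hI
  have h0 : ∑ p, ∑ q ∈ rowNb p, (if p ∈ S then eTT else eFF) = (k - 1) * (T * eTT + F * eFF) := by
    simp only [Finset.sum_const, nsmul_eq_mul, rowNb_card hk, ← Finset.mul_sum]
    rw [Finset.sum_ite]
    simp only [Finset.sum_const, nsmul_eq_mul]
    have e1 : univ.filter (fun p => p ∈ S) = S := by ext; simp
    have e2 : univ.filter (fun p => p ∉ S) = Sᶜ := by ext; simp
    rw [e1, e2, hST, hSF]
  have h1 : ∑ f ∈ fibS C B S, Nst x f = ∑ p, ∑ q ∈ rowNb p, pairE C B x S p q := by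
    unfold Nst pairE
    rw [Finset.sum_comm]
    exact Finset.sum_congr rfl fun p _ => Finset.sum_comm
  rw [h1, Finset.sum_congr rfl (fun p _ => Finset.sum_congr rfl (hall p))]
  simp only [← Finset.mul_sum, Finset.sum_add_distrib, ← Finset.sum_mul]
  rw [hI, hI', h0]
  ring

lemma inPairs_le (hk : 1 ≤ k) (S : Finset (Fin m × Fin k)) : inPairs S ≤ k * (m * k) := by
  have : inPairs S ≤ ∑ p : Fin m × Fin k, ∑ q ∈ rowNb p, (1:ℝ) := by
    unfold inPairs
    apply Finset.sum_le_sum; intro p _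
    apply Finset.sum_le_sum; intro q _
    split_ifs <;> norm_num
  refine this.trans ?_
  simp only [Finset.sum_const, nsmul_eq_mul, rowNb_card hk, card_univ, Fintype.card_prod, Fintype.card_fin, mul_one]
  push_cast
  have : (0:ℝ) ≤ m * k := by positivity
  nlinarith

lemma drift_alg (K T F k SI P a b c R : ℝ) (hR : R ≠ 0) (h : T + F = R + 1) :
    K * (P * (T * (k - 1) * a + F * (k - 1) * b) - SI * (a + b - 2 * c) -
      P * ((k - 1) * (T * (T - 1) * a + F * (F - 1) * b + 2 * (T * F) * c) / R)) =
    - K * (SI - (k - 1) * T * F / R * P) * (a + b - 2 * c) := by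
  have hF : F = R + 1 - T := by linarith
  subst hF
  field_simp
  ring

lemma sat_drift (hk : 2 ≤ k) (hm : 2 ≤ m) (C : Finset (Fin m × Fin k → β))
    (hC : ∀ f ∈ C, ∀ π : Equiv.Perm (Fin m × Fin k), f ∘ π ∈ C)
    (B : β → Prop) (x : β → ℝ) (T F : ℕ) (UT QT UF QF : ℝ)
    (hTF : T + F = m * k) (hT2 : 2 ≤ T) (hF2 : 2 ≤ F) (hTm : 4 * T ≤ (2 * k + 1) * m)
    (hcT : ∀ f ∈ C, (patt B f).card = T)
    (hUT : ∀ f ∈ C, ∑ p ∈ patt B f, x (f p) = UT) (hQT : ∀ f ∈ C, ∑ p ∈ patt B f, x (f p) ^ 2 = QT)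
    (hUF : ∀ f ∈ C, ∑ p ∈ (patt B f)ᶜ, x (f p) = UF) (hQF : ∀ f ∈ C, ∑ p ∈ (patt B f)ᶜ, x (f p) ^ 2 = QF)
    (hQT' : QT ≤ T) (hQF' : QF ≤ F) :
    ∑ f ∈ C.filter (fun f => hitsAll (patt B f)),
        (Nst x f - (k - 1) * ((UT + UF) ^ 2 - (QT + QF)) / ((m : ℝ) * k - 1)) ≤
      ((C.filter (fun f => hitsAll (patt B f))).card : ℝ) *
        (- (eta0 k * (m - 1) / k) * (UT / T - UF / F) ^ 2 + k * (m * k) * (1 / ((T : ℝ) - 1) + 1 / ((F : ℝ) - 1))) := by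
  set N := ((k : ℝ) - 1) * ((UT + UF) ^ 2 - (QT + QF)) / ((m : ℝ) * k - 1) with hN
  by_cases hne : (satPat m k T).Nonempty
  swap
  · rw [Finset.not_nonempty_iff_eq_empty] at hne
    have h1 := sum_fibS C B T hcT (fun f => Nst x f - N)
    have h2 := sum_fibS C B T hcT (fun f => 1)
    rw [hne] at h1 h2
    simp only [Finset.sum_empty, Finset.sum_const, nsmul_eq_mul, mul_one] at h1 h2
    rw [h1, h2]; simp
  obtain ⟨S0, hS0⟩ := hne
  set K := ((fibS C B S0).card : ℝ) with hK
  have hKS : ∀ S ∈ satPat m k T, ((fibS C B S).card : ℝ) = K := by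
    intro S hS
    rw [mem_satPat] at hS hS0
    rw [hK, fib_card C hC B S S0 (by rw [hS.1, hS0.1])]
  set eTT := (UT ^ 2 - QT) / ((T:ℝ) * (T - 1)) with heTT
  set eFF := (UF ^ 2 - QF) / ((F:ℝ) * (F - 1)) with heFF
  set eTF := UT * UF / ((T:ℝ) * F) with heTF
  set P := ((satPat m k T).card : ℝ) with hP
  have hT2' : (2:ℝ) ≤ T := by exact_mod_cast hT2
  have hF2' : (2:ℝ) ≤ F := by exact_mod_cast hF2
  have hTF' : (T:ℝ) + F = m * k := by exact_mod_cast hTF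
  have hk' : (2:ℝ) ≤ k := by exact_mod_cast hk
  have hm' : (2:ℝ) ≤ m := by exact_mod_cast hm
  have hcard : ((C.filter (fun f => hitsAll (patt B f))).card : ℝ) = K * P := by
    have h2 := sum_fibS C B T hcT (fun f => 1)
    simp only [Finset.sum_const, nsmul_eq_mul, mul_one] at h2
    rw [h2, Finset.sum_congr rfl hKS, Finset.sum_const, nsmul_eq_mul]; ring
  have hNe : N = (k - 1) * (T * (T - 1) * eTT + F * (F - 1) * eFF + 2 * (T * F) * eTF) / (m * k - 1) := by
    have h1 : (T:ℝ) * (T - 1) ≠ 0 := by apply mul_ne_zero <;> linarith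
    have h2 : (F:ℝ) * (F - 1) ≠ 0 := by apply mul_ne_zero <;> linarith
    have h3 : (T:ℝ) * F ≠ 0 := by apply mul_ne_zero <;> linarith
    rw [hN, heTT, heFF, heTF, mul_div_cancel₀ _ h1, mul_div_cancel₀ _ h2, mul_assoc 2, mul_div_cancel₀ _ h3]
    congr 2; ring
  set SI := ∑ S ∈ satPat m k T, inPairs S with hSI
  set D := SI - (k - 1) * T * F / (m * k - 1) * P with hD
  set G := eTT + eFF - 2 * eTF with hG
  have hM1 : (0:ℝ) < m * k - 1 := by nlinarith
  have hsum : ∑ f ∈ C.filter (fun f => hitsAll (patt B f)), (Nst x f - N) = - K * D * G := by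
    rw [sum_fibS C B T hcT (fun f => Nst x f - N)]
    have : ∀ S ∈ satPat m k T, ∑ f ∈ fibS C B S, (Nst x f - N) =
        K * (T * (k - 1) * eTT + F * (k - 1) * eFF - inPairs S * G - N) := by
      intro S hS
      have hS' := hS
      rw [mem_satPat] at hS'
      rw [Finset.sum_sub_distrib, fib_Nst (by omega) C hC B x S T F UT QT UF QF (by exact_mod_cast hS'.1)
        (by rw [Finset.card_compl, hS'.1]; simp only [Fintype.card_prod, Fintype.card_fin]; congr 1; omega) hT2' hF2' hUT hQT hUF hQF,
        Finset.sum_const, nsmul_eq_mul, hKS S hS]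
      ring
    rw [Finset.sum_congr rfl this, ← Finset.mul_sum, Finset.sum_sub_distrib, Finset.sum_sub_distrib, ← Finset.sum_mul,
      Finset.sum_const, Finset.sum_const, nsmul_eq_mul, nsmul_eq_mul, ← hSI, ← hP, hNe, hD, hG]
    exact drift_alg K T F k SI P eTT eFF eTF _ hM1.ne' (by linarith)
  rw [hsum, hcard]
  have hPpos : 0 ≤ P := by positivity
  have hKpos : 0 ≤ K := by positivity
  have hDlow : eta0 k * (m - 1) / k * P ≤ D := by
    have h1 := inPairs_bound hk hTm
    rw [← hP, ← hSI] at h1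
    have hF'' : (m:ℝ) * k - T = F := by linarith
    rw [hF''] at h1
    have h2 : eta0 k * (m * (m - 1)) * P / (m * k - 1) ≤ D := by
      rw [div_le_iff₀ hM1, hD, sub_mul, div_mul_eq_mul_div, div_mul_cancel₀ _ hM1.ne']
      linarith
    refine le_trans ?_ h2
    rw [div_mul_eq_mul_div, div_le_div_iff₀ (by linarith) hM1]
    have h3 : 0 ≤ eta0 k * (m - 1) * P := mul_nonneg (mul_nonneg (eta0_pos k).le (by linarith)) hPpos
    nlinarith
  have hDup : D ≤ k * (m * k) * P := by
    have h1 : SI ≤ k * (m * k) * P := by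
      rw [hSI, hP, mul_comm, ← nsmul_eq_mul]
      exact Finset.sum_le_card_nsmul _ _ _ (fun S _ => inPairs_le (by omega) S)
    have h2 : 0 ≤ ((k:ℝ) - 1) * T * F / (m * k - 1) * P := by
      apply mul_nonneg _ hPpos
      apply div_nonneg _ hM1.le
      apply mul_nonneg (mul_nonneg (by linarith) (by linarith)) (by linarith)
    linarith
  have hD0 : 0 ≤ D := le_trans (mul_nonneg (div_nonneg (mul_nonneg (eta0_pos k).le (by linarith)) (by linarith)) hPpos) hDlow
  have he : ∀ (R U Q : ℝ), 2 ≤ R → Q ≤ R → (U / R) ^ 2 - 1 / (R - 1) ≤ (U ^ 2 - Q) / (R * (R - 1)) := by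
    intro R U Q hR hQ
    have hR0 : R ≠ 0 := by linarith
    have hR1 : R - 1 ≠ 0 := by linarith
    have h1 : (U ^ 2 - Q) / (R * (R - 1)) - ((U / R) ^ 2 - 1 / (R - 1)) = (U ^ 2 + R * (R - Q)) / (R ^ 2 * (R - 1)) := by
      field_simp; ring
    have h2 : 0 ≤ (U ^ 2 + R * (R - Q)) / (R ^ 2 * (R - 1)) := by
      apply div_nonneg
      · have := mul_nonneg (by linarith : 0 ≤ R) (by linarith : 0 ≤ R - Q); positivity
      · apply mul_nonneg (sq_nonneg _); linarith
    linarith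
  have hGlow : (UT / T - UF / F) ^ 2 - (1 / ((T : ℝ) - 1) + 1 / ((F : ℝ) - 1)) ≤ G := by
    have h1 := he T UT QT hT2' hQT'
    have h2 := he F UF QF hF2' hQF'
    have h3 : eTF = UT / T * (UF / F) := by rw [heTF, div_mul_div_comm]
    rw [hG, h3]
    have : (UT / T - UF / F) ^ 2 = (UT / T) ^ 2 + (UF / F) ^ 2 - 2 * (UT / T * (UF / F)) := by ring
    rw [this]; linarith
  set err := 1 / ((T : ℝ) - 1) + 1 / ((F : ℝ) - 1) with herr
  have herr0 : 0 ≤ err := by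
    apply add_nonneg <;> apply div_nonneg <;> linarith
  have h1 : D * ((UT / T - UF / F) ^ 2 - err) ≤ D * G := mul_le_mul_of_nonneg_left hGlow hD0
  have h2 : eta0 k * (m - 1) / k * P * (UT / T - UF / F) ^ 2 ≤ D * (UT / T - UF / F) ^ 2 :=
    mul_le_mul_of_nonneg_right hDlow (sq_nonneg _)
  have h3 : D * err ≤ k * (m * k) * P * err := mul_le_mul_of_nonneg_right hDup herr0
  have h4 : - D * G ≤ P * (- (eta0 k * (m - 1) / k) * (UT / T - UF / F) ^ 2 + k * (m * k) * err) := by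
    linarith
  have h5 := mul_le_mul_of_nonneg_left h4 hKpos
  linarith

end drift

section bias

lemma sat_count {m k : ℕ} {β : Type*} (C : Finset (Fin m × Fin k → β))
    (hC : ∀ f ∈ C, ∀ π : Equiv.Perm (Fin m × Fin k), f ∘ π ∈ C)
    (B : β → Prop) (T : ℕ) (hcT : ∀ f ∈ C, (patt B f).card = T) :
    ((C.filter (fun f => hitsAll (patt B f))).card : ℝ) * ((m * k).choose T : ℝ) =
      C.card * (satPat m k T).card := by
  set A := (univ : Finset (Fin m × Fin k)).powersetCard T with hA
  have hAc : (A.card : ℝ) = ((m * k).choose T : ℝ) := by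
    rw [hA, Finset.card_powersetCard]; simp
  have h1 := sum_fibS C B T hcT (fun f => 1)
  simp only [Finset.sum_const, nsmul_eq_mul, mul_one] at h1
  have h2 : (C.card : ℝ) = ∑ S ∈ A, ((fibS C B S).card : ℝ) := by
    have := Finset.card_eq_sum_card_fiberwise (s := C) (t := A) (f := fun f => patt B f) (by
      intro f hf
      simp only [hA, Finset.mem_coe, Finset.mem_powersetCard, Finset.subset_univ, true_and]
      exact hcT f hf)
    rw [this]; push_cast
    apply Finset.sum_congr rfl
    intro S _
    rfl
  rw [h1, h2, Finset.sum_mul, ← hAc]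
  have h3 : ∀ S ∈ satPat m k T, ((fibS C B S).card : ℝ) * A.card = ∑ S' ∈ A, ((fibS C B S').card : ℝ) := by
    intro S hS
    rw [mem_satPat] at hS
    have : ∀ S' ∈ A, ((fibS C B S').card : ℝ) = ((fibS C B S).card : ℝ) := by
      intro S' hS'
      simp only [hA, Finset.mem_powersetCard, Finset.subset_univ, true_and] at hS'
      rw [fib_card C hC B S' S (by rw [hS', hS.1])]
    rw [Finset.sum_congr rfl this, Finset.sum_const, nsmul_eq_mul]; ring
  rw [Finset.sum_congr rfl h3, Finset.sum_const, nsmul_eq_mul]; ring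

/-- conditional satisfaction probability as a function of the number of true slots -/
def pT (m k T : ℕ) : ℝ := (satPat m k T).card / ((m * k).choose T : ℝ)

lemma pT_nonneg (m k T : ℕ) : 0 ≤ pT m k T := by unfold pT; positivity

lemma pT_step {m k T : ℕ} (hk : 2 ≤ k) (hm : 2 ≤ m) (hT : 4 * (T + 1) ≤ (2 * k + 1) * m) :
    pT m k T ≤ (1 - eta0 k / k) * pT m k (T + 1) := by
  have h := ratio_bound hk hm hT
  have hTM : T + 1 ≤ m * k := by nlinarith
  have hch : ((m * k).choose (T + 1) : ℝ) * (T + 1) = (m * k).choose T * ((m : ℝ) * k - T) := by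
    have := Nat.choose_succ_right_eq (m * k) T
    have h2 : ((m * k - T : ℕ) : ℝ) = (m : ℝ) * k - T := by
      rw [Nat.cast_sub (by omega)]; push_cast; ring
    rw [← h2]; exact_mod_cast this
  have hc0 : (0 : ℝ) < (m * k).choose T := by exact_mod_cast Nat.choose_pos (by omega)
  have hc1 : (0 : ℝ) < (m * k).choose (T + 1) := by exact_mod_cast Nat.choose_pos (by omega)
  have hTM' : (T : ℝ) + 1 ≤ m * k := by exact_mod_cast hTM
  have hk0 : (0:ℝ) < k := by exact_mod_cast (by omega : 0 < k)
  have hm0 : (0:ℝ) < m := by exact_mod_cast (by omega : 0 < m)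
  unfold pT
  set s0 := ((satPat m k T).card : ℝ)
  set s1 := ((satPat m k (T + 1)).card : ℝ)
  set c0 := ((m * k).choose T : ℝ)
  set c1 := ((m * k).choose (T + 1) : ℝ)
  have hs1 : 0 ≤ s1 := by simp only [s1]; positivity
  have heta : eta0 k / k * (T + 1) ≤ eta0 k * m := by
    have : eta0 k / k * (T + 1) ≤ eta0 k / k * (m * k) :=
      mul_le_mul_of_nonneg_left hTM' (div_nonneg (eta0_pos k).le hk0.le)
    refine this.trans (le_of_eq ?_); field_simp
  have h2 : ((m:ℝ) * k - T) * s0 ≤ (1 - eta0 k / k) * (T + 1) * s1 := by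
    have := mul_le_mul_of_nonneg_right heta hs1
    linarith
  have hMT : (0:ℝ) < m * k - T := by linarith
  rw [mul_div_assoc', div_le_div_iff₀ hc0 hc1]
  have h3 : ((m:ℝ) * k - T) * (s0 * c1) ≤ ((m:ℝ) * k - T) * ((1 - eta0 k / k) * s1 * c0) := by
    have := mul_le_mul_of_nonneg_right h2 hc1.le
    calc ((m:ℝ) * k - T) * (s0 * c1) = ((m:ℝ) * k - T) * s0 * c1 := by ring
      _ ≤ (1 - eta0 k / k) * (T + 1) * s1 * c1 := this
      _ = (1 - eta0 k / k) * s1 * (c1 * (T + 1)) := by ring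
      _ = _ := by rw [hch]; ring
  exact le_of_mul_le_mul_left h3 hMT

lemma eps_pos {k : ℕ} (hk : 2 ≤ k) : 0 < eta0 k / k :=
  div_pos (eta0_pos k) (by exact_mod_cast (by omega : 0 < k))

lemma pT_mono {m k : ℕ} (hk : 2 ≤ k) (hm : 2 ≤ m) (T j : ℕ) (hT : 4 * (T + (j + 1)) ≤ (2 * k + 1) * m) :
    pT m k T ≤ (1 - eta0 k / k) * pT m k (T + (j + 1)) := by
  induction j with
  | zero => exact pT_step hk hm hT
  | succ j ih =>
    have h1 := ih (by omega)
    have h2 := pT_step (T := T + (j + 1)) hk hm (by omega)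
    have h3 : 0 ≤ pT m k (T + (j + 1)) := pT_nonneg _ _ _
    have h4 : (1 - eta0 k / k) * pT m k (T + (j + 1)) ≤ pT m k (T + (j + 1)) := by
      have := mul_nonneg (eps_pos hk).le h3; linarith
    exact h1.trans (h4.trans h2)

/-- number of true slots -/
def Tn {n : ℕ} (d : Lit n → ℕ) (σ : Assignment n) : ℕ := ∑ x, d (x, σ x)

def Dx {n : ℕ} (d : Lit n → ℕ) (σ : Assignment n) (x : Fin n) : ℤ := (d (x, σ x) : ℤ) - d (x, !(σ x))

lemma Tn_flip {n : ℕ} (d : Lit n → ℕ) (σ : Assignment n) (x : Fin n) :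
    (Tn d (Function.update σ x (!(σ x))) : ℤ) = Tn d σ - Dx d σ x := by
  unfold Tn Dx
  rw [← Finset.add_sum_erase univ _ (mem_univ x), ← Finset.add_sum_erase univ (fun y => d (y, σ y)) (mem_univ x)]
  have : ∑ y ∈ univ.erase x, d (y, Function.update σ x (!(σ x)) y) = ∑ y ∈ univ.erase x, d (y, σ y) := by
    apply Finset.sum_congr rfl
    intro y hy
    rw [Function.update_of_ne (Finset.ne_of_mem_erase hy)]
  rw [this]; simp only [Function.update_self]; push_cast; ring

lemma Dx_flip {n : ℕ} (d : Lit n → ℕ) (σ : Assignment n) (x : Fin n) :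
    Dx d (Function.update σ x (!(σ x))) x = - Dx d σ x := by
  unfold Dx; simp

lemma bias_pt {m k : ℕ} (hk : 2 ≤ k) (hm : 2 ≤ m) (T T' : ℕ) (D : ℤ) (hD : (T' : ℤ) = T - D)
    (hT : 4 * T ≤ (2 * k + 1) * m) (hT' : 4 * T' ≤ (2 * k + 1) * m) (hD0 : D ≠ 0) :
    eta0 k / k / 2 * (pT m k T + pT m k T') ≤ (pT m k T - pT m k T') * D := by
  have key : ∀ (T T' : ℕ) (D : ℤ), (T' : ℤ) = T - D → 4 * T ≤ (2 * k + 1) * m → 0 < D →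
      eta0 k / k / 2 * (pT m k T + pT m k T') ≤ (pT m k T - pT m k T') * D := by
    intro T T' D hD hT hpos
    obtain ⟨j, rfl⟩ : ∃ j, T = T' + (j + 1) := ⟨T - T' - 1, by omega⟩
    have h1 := pT_mono hk hm T' j hT
    have h2 := pT_nonneg m k T'
    have h3 := pT_nonneg m k (T' + (j + 1))
    have h4 := eps_pos hk
    set p' := pT m k T'
    set p := pT m k (T' + (j + 1))
    set ε := eta0 k / k
    have h5 : p' ≤ p := by nlinarith
    have h6 : (1:ℝ) ≤ D := by exact_mod_cast hpos
    have h7 : (p - p') * 1 ≤ (p - p') * D := mul_le_mul_of_nonneg_left h6 (by linarith)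
    nlinarith
  rcases lt_or_gt_of_ne hD0 with h | h
  · have := key T' T (-D) (by omega) hT' (by omega)
    push_cast at this
    linarith
  · exact key T T' D hD hT h

lemma bias_x {n m k : ℕ} (hk : 2 ≤ k) (hm : 2 ≤ m) (d : Lit n → ℕ)
    (hG1 : ∀ σ, 4 * Tn d σ ≤ (2 * k + 1) * m) (x : Fin n) (hx : d (x, true) ≠ d (x, false)) :
    eta0 k / k / 2 * ∑ σ : Assignment n, pT m k (Tn d σ) ≤ ∑ σ : Assignment n, pT m k (Tn d σ) * Dx d σ x := by
  let fl : Assignment n → Assignment n := fun σ => Function.update σ x (!(σ x))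
  have hinv : Function.Involutive fl := by
    intro σ
    ext y
    by_cases h : y = x
    · subst h; simp [fl]
    · simp [fl, Function.update_of_ne h]
  have hs : ∀ g : Assignment n → ℝ, ∑ σ, g (fl σ) = ∑ σ, g σ := fun g => Equiv.sum_comp (hinv.toPerm fl) g
  have h1 : ∀ σ, eta0 k / k / 2 * (pT m k (Tn d σ) + pT m k (Tn d (fl σ))) ≤
      pT m k (Tn d σ) * Dx d σ x + pT m k (Tn d (fl σ)) * Dx d (fl σ) x := by
    intro σ
    have h := bias_pt hk hm (Tn d σ) (Tn d (fl σ)) (Dx d σ x) (Tn_flip d σ x) (hG1 _) (hG1 _) (by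
      unfold Dx
      cases h : σ x <;> simp <;> omega)
    rw [Dx_flip]; push_cast; linarith
  have h2 := Finset.sum_le_sum (fun σ (_ : σ ∈ univ) => h1 σ)
  rw [← Finset.mul_sum, Finset.sum_add_distrib, Finset.sum_add_distrib, hs (fun σ => pT m k (Tn d σ)),
    hs (fun σ => pT m k (Tn d σ) * Dx d σ x)] at h2
  linarith

lemma bias_zero {n m k : ℕ} (d : Lit n → ℕ) (x : Fin n) (hx : d (x, true) = d (x, false)) :
    ∑ σ : Assignment n, pT m k (Tn d σ) * Dx d σ x = 0 := by
  apply Finset.sum_eq_zero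
  intro σ _
  have : Dx d σ x = 0 := by
    unfold Dx
    cases h : σ x <;> simp [hx]
  rw [this]; simp

lemma bias_total {n m k : ℕ} (hk : 2 ≤ k) (hm : 2 ≤ m) (d : Lit n → ℕ)
    (hG1 : ∀ σ, 4 * Tn d σ ≤ (2 * k + 1) * m)
    (hG2 : n ≤ 8 * (univ.filter fun x : Fin n => d (x, true) ≠ d (x, false)).card) :
    (eta0 k / k / 2 * n / 8) ^ 2 * ∑ σ : Assignment n, pT m k (Tn d σ) ≤
      ∑ σ : Assignment n, pT m k (Tn d σ) * (∑ x, (Dx d σ x : ℝ)) ^ 2 := by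
  set κ := eta0 k / k / 2 with hκ
  have hκ0 : 0 < κ := by have := eps_pos hk; simp only [hκ]; positivity
  set P := ∑ σ : Assignment n, pT m k (Tn d σ) with hP
  have hP0 : 0 ≤ P := Finset.sum_nonneg fun σ _ => pT_nonneg _ _ _
  have h1 : κ * n / 8 * P ≤ ∑ σ : Assignment n, pT m k (Tn d σ) * (∑ x, (Dx d σ x : ℝ)) := by
    simp only [Finset.mul_sum]
    rw [Finset.sum_comm]
    have h2 : ∀ x : Fin n, (if d (x, true) ≠ d (x, false) then κ * P else 0) ≤ ∑ σ : Assignment n, pT m k (Tn d σ) * Dx d σ x := by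
      intro x
      split_ifs with h
      · exact bias_x hk hm d hG1 x h
      · rw [bias_zero d x (by simpa using h)]
    refine le_trans ?_ (Finset.sum_le_sum fun x _ => h2 x)
    rw [← Finset.sum_filter, Finset.sum_const, nsmul_eq_mul]
    have h3 : (n : ℝ) ≤ 8 * ((univ.filter fun x : Fin n => d (x, true) ≠ d (x, false)).card : ℝ) := by exact_mod_cast hG2
    have := mul_le_mul_of_nonneg_right h3 (mul_nonneg hκ0.le hP0)
    linarith
  set c := κ * n / 8
  have hc : 0 ≤ c := by simp only [c]; positivity
  have h2 : ∑ σ : Assignment n, pT m k (Tn d σ) * (2 * c * (∑ x, (Dx d σ x : ℝ)) - c ^ 2) ≤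
      ∑ σ : Assignment n, pT m k (Tn d σ) * (∑ x, (Dx d σ x : ℝ)) ^ 2 := by
    apply Finset.sum_le_sum
    intro σ _
    apply mul_le_mul_of_nonneg_left _ (pT_nonneg _ _ _)
    nlinarith [sq_nonneg ((∑ x, (Dx d σ x : ℝ)) - c)]
  refine le_trans ?_ h2
  have h3 : ∑ σ : Assignment n, pT m k (Tn d σ) * (2 * c * (∑ x, (Dx d σ x : ℝ)) - c ^ 2) =
      2 * c * (∑ σ : Assignment n, pT m k (Tn d σ) * (∑ x, (Dx d σ x : ℝ))) - c ^ 2 * P := by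
    rw [hP, Finset.mul_sum, Finset.mul_sum, ← Finset.sum_sub_distrib]
    apply Finset.sum_congr rfl; intro σ _; ring
  rw [h3]
  nlinarith

end bias

section combine

/-- uncurried degree class -/
def Cd (n k m : ℕ) (d : Lit n → ℕ) : Finset (Fin m × Fin k → Lit n) :=
  univ.filter fun f => ∀ l, (univ.filter fun p => f p = l).card = d l

lemma mem_Cd {n k m : ℕ} {d : Lit n → ℕ} {f : Fin m × Fin k → Lit n} :
    f ∈ Cd n k m d ↔ ∀ l, (univ.filter fun p => f p = l).card = d l := by simp [Cd]

lemma Cd_perm {n k m : ℕ} (d : Lit n → ℕ) :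
    ∀ f ∈ Cd n k m d, ∀ π : Equiv.Perm (Fin m × Fin k), f ∘ π ∈ Cd n k m d := by
  intro f hf π
  rw [mem_Cd] at hf ⊢
  intro l
  rw [← hf l]
  apply Finset.card_bij (fun p _ => π p)
  · intro p hp; simpa using hp
  · intro p _ q _ h; exact π.injective h
  · intro q hq; exact ⟨π.symm q, by simpa using hq, by simp⟩

lemma Cd_sum {n k m : ℕ} {d : Lit n → ℕ} {f : Fin m × Fin k → Lit n} (hf : f ∈ Cd n k m d) (g : Lit n → ℝ) :
    ∑ p, g (f p) = ∑ x, (d (x, true) * g (x, true) + d (x, false) * g (x, false)) := by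
  rw [mem_Cd] at hf
  have h1 : ∑ p, g (f p) = ∑ l, (d l : ℝ) * g l := by
    rw [← Finset.sum_fiberwise_of_maps_to (s := univ) (t := univ) (g := f) (fun _ _ => mem_univ _)]
    apply Finset.sum_congr rfl
    intro l _
    rw [← hf l]
    rw [Finset.sum_congr rfl (g := fun _ => g l) (by intro p hp; rw [mem_filter] at hp; rw [hp.2])]
    rw [Finset.sum_const, nsmul_eq_mul]
  rw [h1, Fintype.sum_prod_type]
  apply Finset.sum_congr rfl
  intro x _
  simp

def Bt {n : ℕ} (σ : Assignment n) (l : Lit n) : Prop := litVal σ l = true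

lemma Bt_iff {n : ℕ} (σ : Assignment n) (x : Fin n) (b : Bool) : Bt σ (x, b) ↔ σ x = b := by
  unfold Bt litVal
  cases b <;> simp

lemma Cd_sum_true {n k m : ℕ} {d : Lit n → ℕ} {f : Fin m × Fin k → Lit n} (hf : f ∈ Cd n k m d)
    (σ : Assignment n) (g : Lit n → ℝ) :
    ∑ p ∈ patt (Bt σ) f, g (f p) = ∑ x, (d (x, σ x) * g (x, σ x)) := by
  unfold patt
  rw [Finset.sum_filter]
  have := Cd_sum hf (fun l => if Bt σ l then g l else 0)
  rw [this]
  apply Finset.sum_congr rfl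
  intro x _
  simp only [Bt_iff]
  cases h : σ x <;> simp

lemma Cd_sum_false {n k m : ℕ} {d : Lit n → ℕ} {f : Fin m × Fin k → Lit n} (hf : f ∈ Cd n k m d)
    (σ : Assignment n) (g : Lit n → ℝ) :
    ∑ p ∈ (patt (Bt σ) f)ᶜ, g (f p) = ∑ x, (d (x, !(σ x)) * g (x, !(σ x))) := by
  have h1 := Finset.sum_add_sum_compl (patt (Bt σ) f) (fun p => g (f p))
  rw [Cd_sum_true hf, Cd_sum hf] at h1
  rw [← eq_sub_iff_add_eq'] at h1
  rw [h1, ← Finset.sum_sub_distrib]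
  apply Finset.sum_congr rfl
  intro x _
  cases h : σ x <;> simp

lemma Cd_card {n k m : ℕ} {d : Lit n → ℕ} {f : Fin m × Fin k → Lit n} (hf : f ∈ Cd n k m d)
    (σ : Assignment n) : (patt (Bt σ) f).card = Tn d σ := by
  have := Cd_sum_true hf σ (fun _ => 1)
  simp only [Finset.sum_const, nsmul_eq_mul, mul_one] at this
  unfold Tn
  exact_mod_cast this

/-- normalized discrepancy -/
def xl {n : ℕ} (d : Lit n → ℕ) (l : Lit n) : ℝ :=
  ((d l : ℝ) - d (l.1, !l.2)) / ((d l : ℝ) + d (l.1, !l.2))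

lemma xl_le {n : ℕ} (d : Lit n → ℕ) (l : Lit n) : |xl d l| ≤ 1 := by
  unfold xl
  rw [abs_div]
  apply div_le_one_of_le₀ _ (abs_nonneg _)
  have h1 : (0:ℝ) ≤ d l := by positivity
  have h2 : (0:ℝ) ≤ d (l.1, !l.2) := by positivity
  rw [abs_of_nonneg (add_nonneg h1 h2), abs_le]
  constructor <;> linarith

lemma xl_id (a b : ℝ) (ha : 0 ≤ a) (hb : 0 ≤ b) :
    a * ((a - b) / (a + b)) = 1 / 2 * ((a - b) + (a - b) ^ 2 / (a + b)) := by
  by_cases h : a + b = 0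
  · have : a = 0 := by linarith
    have : b = 0 := by linarith
    subst_vars; simp
  · field_simp; ring

lemma xl_sq (a b : ℝ) (ha : 0 ≤ a) (hb : 0 ≤ b) : (a - b) ^ 2 / (a + b) ≤ |a - b| := by
  have h := abs_nonneg (a - b)
  apply div_le_of_le_mul₀ (by linarith) h
  have : |a - b| ≤ a + b := by rw [abs_le]; constructor <;> linarith
  rw [← sq_abs]; nlinarith

def Wd {n : ℕ} (d : Lit n → ℕ) : ℝ :=
  ∑ x : Fin n, ((d (x, true) : ℝ) - d (x, false)) ^ 2 / ((d (x, true) : ℝ) + d (x, false))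

lemma UT_eq {n : ℕ} (d : Lit n → ℕ) (σ : Assignment n) :
    ∑ x, ((d (x, σ x) : ℝ) * xl d (x, σ x)) = 1 / 2 * (∑ x, (Dx d σ x : ℝ) + Wd d) := by
  unfold Wd
  rw [← Finset.sum_add_distrib, Finset.mul_sum]
  apply Finset.sum_congr rfl
  intro x _
  unfold xl Dx
  dsimp only
  rw [xl_id _ _ (by positivity) (by positivity)]
  cases h : σ x <;> simp <;> ring

lemma UF_eq {n : ℕ} (d : Lit n → ℕ) (σ : Assignment n) :
    ∑ x, ((d (x, !(σ x)) : ℝ) * xl d (x, !(σ x))) = 1 / 2 * (- ∑ x, (Dx d σ x : ℝ) + Wd d) := by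
  unfold Wd
  rw [← Finset.sum_neg_distrib, ← Finset.sum_add_distrib, Finset.mul_sum]
  apply Finset.sum_congr rfl
  intro x _
  unfold xl Dx
  dsimp only
  rw [xl_id _ _ (by positivity) (by positivity)]
  cases h : σ x <;> simp <;> ring

lemma drift_sq (T F M y W : ℝ) (hT : 0 < T) (hF : 0 < F) (hTF : T + F = M) (hy : y = T - F)
    (hW0 : 0 ≤ W) (hW : W ≤ M / 2) :
    y ^ 2 / M ^ 2 ≤ (1 / 2 * (y + W) / T - 1 / 2 * (- y + W) / F) ^ 2 := by
  have h1 : 1 / 2 * (y + W) / T - 1 / 2 * (- y + W) / F = y * (M - W) / (2 * (T * F)) := by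
    subst hTF hy
    field_simp; ring
  have hM : 0 < M := by linarith
  rw [h1, div_pow, div_le_div_iff₀ (by positivity) (by positivity)]
  have h2 : 2 * (T * F) ≤ (M - W) * M := by
    have : 4 * (T * F) ≤ M ^ 2 := by rw [← hTF]; nlinarith [sq_nonneg (T - F)]
    nlinarith
  have h3 : (2 * (T * F)) ^ 2 ≤ ((M - W) * M) ^ 2 := pow_le_pow_left₀ (by positivity) h2 2
  have := mul_le_mul_of_nonneg_left h3 (sq_nonneg y)
  nlinarith

/-- number of satisfying assignments of an uncurried formula -/
def Zf {n k m : ℕ} (f : Fin m × Fin k → Lit n) : ℝ :=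
  ((univ.filter fun σ : Assignment n => hitsAll (patt (Bt σ) f)).card : ℝ)

lemma sum_Z {n k m : ℕ} (C : Finset (Fin m × Fin k → Lit n)) (φ : (Fin m × Fin k → Lit n) → ℝ) :
    ∑ f ∈ C, Zf f * φ f = ∑ σ : Assignment n, ∑ f ∈ C.filter (fun f => hitsAll (patt (Bt σ) f)), φ f := by
  simp only [Finset.sum_filter]
  rw [Finset.sum_comm]
  apply Finset.sum_congr rfl
  intro f _
  rw [← Finset.sum_filter, Finset.sum_const, nsmul_eq_mul]; rfl

lemma exp_tilt {ι : Type*} (C : Finset ι) (Z u : ι → ℝ) (hZ : ∀ i ∈ C, 0 ≤ Z i) (L τ A : ℝ) (hτ : 0 ≤ τ)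
    (h1 : ∑ i ∈ C, Z i * u i ≤ - L * ∑ i ∈ C, Z i)
    (h2 : ∑ i ∈ C, Real.exp (-(2 * τ) * u i) ≤ C.card * Real.exp A) :
    Real.exp (2 * τ * L - A) * (∑ i ∈ C, Z i) ^ 2 ≤ C.card * ∑ i ∈ C, Z i ^ 2 := by
  set S := ∑ i ∈ C, Z i with hS
  have hS0 : 0 ≤ S := Finset.sum_nonneg hZ
  have h3 : Real.exp (τ * L) * S ≤ ∑ i ∈ C, Z i * Real.exp (-τ * u i) := by
    have : ∑ i ∈ C, Z i * (Real.exp (τ * L) * (1 - τ * L - τ * u i)) ≤ ∑ i ∈ C, Z i * Real.exp (-τ * u i) := by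
      apply Finset.sum_le_sum
      intro i hi
      apply mul_le_mul_of_nonneg_left _ (hZ i hi)
      have h := Real.add_one_le_exp (-τ * u i - τ * L)
      have h' := mul_le_mul_of_nonneg_left h (Real.exp_pos (τ * L)).le
      rw [← Real.exp_add] at h'
      calc _ = Real.exp (τ * L) * (-τ * u i - τ * L + 1) := by ring
        _ ≤ _ := h'
        _ = _ := by congr 1; ring
    refine le_trans ?_ this
    have h4 : ∑ i ∈ C, Z i * (Real.exp (τ * L) * (1 - τ * L - τ * u i)) =
        Real.exp (τ * L) * ((1 - τ * L) * S - τ * ∑ i ∈ C, Z i * u i) := by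
      rw [hS, Finset.mul_sum, Finset.mul_sum, ← Finset.sum_sub_distrib, Finset.mul_sum]
      apply Finset.sum_congr rfl; intro i _; ring
    rw [h4]
    apply mul_le_mul_of_nonneg_left _ (Real.exp_pos _).le
    have := mul_le_mul_of_nonneg_left h1 hτ
    linarith
  have h5 := Finset.sum_mul_sq_le_sq_mul_sq C Z (fun i => Real.exp (-τ * u i))
  have h6 : (Real.exp (τ * L) * S) ^ 2 ≤ (∑ i ∈ C, Z i * Real.exp (-τ * u i)) ^ 2 :=
    pow_le_pow_left₀ (by positivity) h3 2
  have h7 : ∑ i ∈ C, (Real.exp (-τ * u i)) ^ 2 = ∑ i ∈ C, Real.exp (-(2 * τ) * u i) := by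
    apply Finset.sum_congr rfl; intro i _
    rw [← Real.exp_nat_mul]; congr 1; push_cast; ring
  rw [h7] at h5
  have h8 : (∑ i ∈ C, Z i ^ 2) * ∑ i ∈ C, Real.exp (-(2 * τ) * u i) ≤ (∑ i ∈ C, Z i ^ 2) * (C.card * Real.exp A) :=
    mul_le_mul_of_nonneg_left h2 (Finset.sum_nonneg fun i _ => sq_nonneg _)
  have h9 := h6.trans (h5.trans h8)
  have h10 : Real.exp (2 * τ * L - A) * S ^ 2 = Real.exp (-A) * (Real.exp (τ * L) * S) ^ 2 := by
    rw [mul_pow, ← Real.exp_nat_mul, ← mul_assoc, ← Real.exp_add]; congr 2; push_cast; ring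
  rw [h10]
  calc _ ≤ Real.exp (-A) * ((∑ i ∈ C, Z i ^ 2) * (C.card * Real.exp A)) := mul_le_mul_of_nonneg_left h9 (Real.exp_pos _).le
    _ = (Real.exp (-A) * Real.exp A) * (C.card * ∑ i ∈ C, Z i ^ 2) := by ring
    _ = _ := by rw [← Real.exp_add]; simp

end combine

section mainClass

lemma Tn_compl {n : ℕ} (d : Lit n → ℕ) (σ : Assignment n) :
    Tn d σ + Tn d (fun x => !(σ x)) = ∑ x, (d (x, true) + d (x, false)) := by
  unfold Tn
  rw [← Finset.sum_add_distrib]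
  apply Finset.sum_congr rfl
  intro x _
  cases h : σ x <;> simp [h, add_comm]

lemma sum_Dx {n : ℕ} (d : Lit n → ℕ) (σ : Assignment n) :
    ∑ x, (Dx d σ x : ℝ) = (Tn d σ : ℝ) - Tn d (fun x => !(σ x)) := by
  unfold Tn Dx
  push_cast
  rw [← Finset.sum_sub_distrib]

lemma Wd_nonneg {n : ℕ} (d : Lit n → ℕ) : 0 ≤ Wd d :=
  Finset.sum_nonneg fun x _ => div_nonneg (sq_nonneg _) (by positivity)

lemma Wd_le {n : ℕ} (d : Lit n → ℕ) (M m : ℕ) (hM : ∑ x, (d (x, true) + d (x, false)) = M)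
    (h : ∀ σ, 4 * Tn d σ ≤ 2 * M + m) : Wd d ≤ m / 2 := by
  let σ : Assignment n := fun x => decide (d (x, false) ≤ d (x, true))
  have h1 : Wd d ≤ ∑ x, (Dx d σ x : ℝ) := by
    apply Finset.sum_le_sum
    intro x _
    refine (xl_sq _ _ (by positivity) (by positivity)).trans (le_of_eq ?_)
    unfold Dx
    by_cases hx : d (x, false) ≤ d (x, true)
    · have hx' : (d (x, false) : ℝ) ≤ d (x, true) := by exact_mod_cast hx
      simp only [σ, hx, decide_true, Bool.not_true]
      rw [abs_of_nonneg (by linarith)]; push_cast; rfl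
    · have hx' : (d (x, true) : ℝ) ≤ d (x, false) := by exact_mod_cast (by omega : d (x, true) ≤ d (x, false))
      simp only [σ, hx, decide_false, Bool.not_false]
      rw [abs_of_nonpos (by linarith)]; push_cast; ring
  rw [sum_Dx] at h1
  have h2 := Tn_compl d σ
  rw [hM] at h2
  have h3 := h σ
  have h2' : (Tn d σ : ℝ) + Tn d (fun x => !(σ x)) = M := by exact_mod_cast h2
  have h3' : 4 * (Tn d σ : ℝ) ≤ 2 * M + m := by exact_mod_cast h3
  linarith

lemma class_drift {n k m : ℕ} (hk : 2 ≤ k) (hm : 2 ≤ m) (hM8 : 8 ≤ m * k) (d : Lit n → ℕ)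
    (hM : ∑ x, (d (x, true) + d (x, false)) = m * k)
    (hG1 : ∀ σ, 4 * Tn d σ ≤ (2 * k + 1) * m)
    (hG2 : n ≤ 8 * (univ.filter fun x : Fin n => d (x, true) ≠ d (x, false)).card)
    (Q : ℝ) (hQ : ∀ f ∈ Cd n k m d, ∑ p, xl d (f p) ^ 2 = Q) :
    ∑ f ∈ Cd n k m d, Zf f * (Nst (xl d) f - (k - 1) * (Wd d ^ 2 - Q) / ((m : ℝ) * k - 1)) ≤
      - (eta0 k * (m - 1) / k * ((eta0 k / k / 2 * n / 8) ^ 2 / (m * k) ^ 2) - 16 * k) * ∑ f ∈ Cd n k m d, Zf f := by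
  have hk' : (2:ℝ) ≤ k := by exact_mod_cast hk
  have hm' : (2:ℝ) ≤ m := by exact_mod_cast hm
  have hM8' : (8:ℝ) ≤ m * k := by exact_mod_cast hM8
  set C := Cd n k m d with hCdef
  set A : Assignment n → ℝ := fun σ => ((C.filter (fun f => hitsAll (patt (Bt σ) f))).card : ℝ) with hA
  set y : Assignment n → ℝ := fun σ => ∑ x, (Dx d σ x : ℝ) with hy
  have hW0 := Wd_nonneg d
  have hW : Wd d ≤ m / 2 := Wd_le d (m * k) m hM (fun σ => by have := hG1 σ; nlinarith)
  set g := eta0 k * (m - 1) / k with hg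
  have hg0 : 0 ≤ g := div_nonneg (mul_nonneg (eta0_pos k).le (by linarith)) (by linarith)
  have hσ : ∀ σ, ∑ f ∈ C.filter (fun f => hitsAll (patt (Bt σ) f)),
      (Nst (xl d) f - (k - 1) * (Wd d ^ 2 - Q) / ((m : ℝ) * k - 1)) ≤ A σ * (- g * (y σ ^ 2 / (m * k) ^ 2) + 16 * k) := by
    intro σ
    by_cases hCe : C.Nonempty
    swap
    · rw [Finset.not_nonempty_iff_eq_empty] at hCe
      simp [hA, hCe]
    obtain ⟨f0, hf0⟩ := hCe
    set T := Tn d σ with hT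
    set F := Tn d (fun x => !(σ x)) with hF
    have hTF : T + F = m * k := by rw [← hM, hT, hF, Tn_compl]
    have hT1 := hG1 σ
    have hF1 := hG1 (fun x => !(σ x))
    rw [← hT] at hT1
    rw [← hF] at hF1
    have hT4 : m * k ≤ 4 * T := by nlinarith
    have hF4 : m * k ≤ 4 * F := by nlinarith
    set QT := ∑ x, ((d (x, σ x) : ℝ) * xl d (x, σ x) ^ 2) with hQT
    set QF := ∑ x, ((d (x, !(σ x)) : ℝ) * xl d (x, !(σ x)) ^ 2) with hQF
    have hsq : ∀ l, xl d l ^ 2 ≤ 1 := by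
      intro l; rw [← sq_abs]; exact pow_le_one₀ (abs_nonneg _) (xl_le d l)
    have hQQ : QT + QF = Q := by
      rw [← hQ f0 hf0, ← Finset.sum_add_sum_compl (patt (Bt σ) f0), Cd_sum_true hf0 σ (fun l => xl d l ^ 2),
        Cd_sum_false hf0 σ (fun l => xl d l ^ 2)]
    have h := sat_drift hk hm C (Cd_perm d) (Bt σ) (xl d) T F (1 / 2 * (y σ + Wd d)) QT (1 / 2 * (- y σ + Wd d)) QF
      hTF (by omega) (by omega) hT1 (fun f hf => Cd_card hf σ)
      (fun f hf => by rw [Cd_sum_true hf, UT_eq]) (fun f hf => Cd_sum_true hf σ (fun l => xl d l ^ 2))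
      (fun f hf => by rw [Cd_sum_false hf, UF_eq]) (fun f hf => Cd_sum_false hf σ (fun l => xl d l ^ 2))
      (by
        rw [hQT, hT]; unfold Tn; push_cast
        apply Finset.sum_le_sum; intro x _
        exact mul_le_of_le_one_right (by positivity) (hsq _))
      (by
        rw [hQF, hF]; unfold Tn; push_cast
        apply Finset.sum_le_sum; intro x _
        exact mul_le_of_le_one_right (by positivity) (hsq _))
    have hUU : 1 / 2 * (y σ + Wd d) + 1 / 2 * (- y σ + Wd d) = Wd d := by ring
    rw [hUU, hQQ] at h
    refine h.trans ?_
    apply mul_le_mul_of_nonneg_left _ (Nat.cast_nonneg _)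
    have hT4' : (m:ℝ) * k ≤ 4 * T := by exact_mod_cast hT4
    have hF4' : (m:ℝ) * k ≤ 4 * F := by exact_mod_cast hF4
    have hTF' : (T:ℝ) + F = m * k := by exact_mod_cast hTF
    have h1 : y σ ^ 2 / ((m:ℝ) * k) ^ 2 ≤ (1 / 2 * (y σ + Wd d) / T - 1 / 2 * (- y σ + Wd d) / F) ^ 2 :=
      drift_sq T F (m * k) (y σ) (Wd d) (by linarith) (by linarith) hTF' (sum_Dx d σ) hW0 (by nlinarith)
    have h2 := mul_le_mul_of_nonneg_left h1 hg0
    have he : ∀ R : ℝ, (m:ℝ) * k ≤ 4 * R → 1 / (R - 1) ≤ 8 / (m * k) := by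
      intro R hR
      rw [div_le_div_iff₀ (by linarith) (by linarith)]; linarith
    have h3 := he T hT4'
    have h4 := he F hF4'
    have h5 : (k:ℝ) * (m * k) * (1 / ((T : ℝ) - 1) + 1 / ((F : ℝ) - 1)) ≤ 16 * k := by
      have h6 : (k:ℝ) * (m * k) * (1 / ((T : ℝ) - 1) + 1 / ((F : ℝ) - 1)) ≤ k * (m * k) * (8 / (m * k) + 8 / (m * k)) :=
        mul_le_mul_of_nonneg_left (by linarith) (by positivity)
      refine h6.trans (le_of_eq ?_)
      have : (m:ℝ) ≠ 0 := by linarith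
      have : (k:ℝ) ≠ 0 := by linarith
      field_simp; ring
    linarith
  rw [sum_Z]
  have hZ : ∑ f ∈ C, Zf f = ∑ σ, A σ := by
    have := sum_Z C (fun _ => 1)
    simp only [mul_one, Finset.sum_const, nsmul_eq_mul] at this
    exact this
  rw [hZ]
  refine (Finset.sum_le_sum fun σ _ => hσ σ).trans ?_
  have hAp : ∀ σ, A σ = C.card * pT m k (Tn d σ) := by
    intro σ
    have h := sat_count C (Cd_perm d) (Bt σ) (Tn d σ) (fun f hf => Cd_card hf σ)
    have hTM : Tn d σ ≤ m * k := by rw [← hM, ← Tn_compl d σ]; omega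
    have hc0 : (0 : ℝ) < (m * k).choose (Tn d σ) := by exact_mod_cast Nat.choose_pos hTM
    unfold pT
    rw [mul_div_assoc', eq_div_iff hc0.ne', ← h]
  have hb := bias_total hk hm d hG1 hG2
  have hb' : (eta0 k / k / 2 * n / 8) ^ 2 * ∑ σ, A σ ≤ ∑ σ, A σ * y σ ^ 2 := by
    have := mul_le_mul_of_nonneg_left hb (by positivity : (0:ℝ) ≤ C.card)
    simp only [hAp]
    calc _ = (C.card:ℝ) * ((eta0 k / k / 2 * n / 8) ^ 2 * ∑ σ : Assignment n, pT m k (Tn d σ)) := by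
          rw [← Finset.mul_sum]; ring
      _ ≤ _ := this
      _ = _ := by rw [Finset.mul_sum]; apply Finset.sum_congr rfl; intro σ _; ring
  have hsplit : ∑ σ, A σ * (- g * (y σ ^ 2 / (m * k) ^ 2) + 16 * k) =
      - (g / (m * k) ^ 2) * ∑ σ, A σ * y σ ^ 2 + 16 * k * ∑ σ, A σ := by
    rw [Finset.mul_sum, Finset.mul_sum, ← Finset.sum_add_distrib]
    apply Finset.sum_congr rfl; intro σ _; ring
  rw [hsplit]
  have := mul_le_mul_of_nonneg_left hb' (div_nonneg hg0 (sq_nonneg ((m:ℝ) * k)))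
  calc _ ≤ - ((g / (m * k) ^ 2) * ((eta0 k / k / 2 * n / 8) ^ 2 * ∑ σ, A σ)) + 16 * k * ∑ σ, A σ := by linarith
    _ = _ := by ring

lemma class_main {n k m : ℕ} (hk : 2 ≤ k) (hm : 2 ≤ m) (hM8 : 8 ≤ m * k) (d : Lit n → ℕ)
    (hM : ∑ x, (d (x, true) + d (x, false)) = m * k)
    (hG1 : ∀ σ, 4 * Tn d σ ≤ (2 * k + 1) * m)
    (hG2 : n ≤ 8 * (univ.filter fun x : Fin n => d (x, true) ≠ d (x, false)).card)
    (τ L : ℝ) (hτ : 0 ≤ τ) (hτk : 32 * k * τ ≤ 1)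
    (hL : L ≤ eta0 k * (m - 1) / k * ((eta0 k / k / 2 * n / 8) ^ 2 / (m * k) ^ 2) - 16 * k) :
    Real.exp (2 * τ * L - 1024 * τ ^ 2 * k ^ 2 * (m * k)) * (∑ f ∈ Cd n k m d, Zf f) ^ 2 ≤
      (Cd n k m d).card * ∑ f ∈ Cd n k m d, Zf f ^ 2 := by
  set Q := ∑ x, ((d (x, true) : ℝ) * xl d (x, true) ^ 2 + d (x, false) * xl d (x, false) ^ 2) with hQdef
  have hQ : ∀ f ∈ Cd n k m d, ∑ p, xl d (f p) ^ 2 = Q := fun f hf => Cd_sum hf (fun l => xl d l ^ 2)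
  have hW : ∀ f ∈ Cd n k m d, ∑ p, xl d (f p) = Wd d := by
    intro f hf
    have σ : Assignment n := fun _ => true
    rw [← Finset.sum_add_sum_compl (patt (Bt σ) f), Cd_sum_true hf σ, Cd_sum_false hf σ, UT_eq, UF_eq]; ring
  have hZ0 : 0 ≤ ∑ f ∈ Cd n k m d, Zf f := Finset.sum_nonneg fun f _ => by unfold Zf; positivity
  apply exp_tilt (Cd n k m d) Zf
    (fun f => Nst (xl d) f - (k - 1) * (Wd d ^ 2 - Q) / ((m : ℝ) * k - 1)) (fun f _ => by unfold Zf; positivity)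
    L τ _ hτ
  · refine (class_drift hk hm hM8 d hM hG1 hG2 Q hQ).trans ?_
    apply mul_le_mul_of_nonneg_right _ hZ0
    linarith
  · have := Nst_mgf (by omega) (by omega) (xl d) (xl_le d) (Cd n k m d) (Cd_perm d) (Wd d) Q hW hQ (-(2 * τ)) (by
      rw [abs_neg, abs_of_nonneg (by linarith)]; linarith)
    refine this.trans (le_of_eq ?_)
    congr 2; ring

end mainClass

section link

/-- uncurry a formula -/
def unc {n k m : ℕ} (Φ : Formula n k m) : Fin m × Fin k → Lit n := fun p => Φ p.1 p.2

lemma unc_mem {n k m : ℕ} (Φ : Formula n k m) (d : Lit n → ℕ) :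
    unc Φ ∈ Cd n k m d ↔ Φ ∈ degClass n k m d := by
  rw [mem_Cd]
  simp only [degClass, mem_filter, mem_univ, true_and]
  constructor
  · intro h; funext l; exact h l
  · intro h l; rw [← h]; rfl

lemma sum_degClass {n k m : ℕ} (d : Lit n → ℕ) (φ : (Fin m × Fin k → Lit n) → ℝ) :
    ∑ Φ ∈ degClass n k m d, φ (unc Φ) = ∑ f ∈ Cd n k m d, φ f := by
  apply Finset.sum_nbij' (fun Φ => unc Φ) (fun f => fun i j => f (i, j))
  · intro Φ h; exact (unc_mem Φ d).mpr h
  · intro f h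
    rw [← unc_mem]; exact h
  · intro Φ _; rfl
  · intro f _; rfl
  · intro Φ _; rfl

lemma satCount_eq_s3 {n k m : ℕ} (Φ : Formula n k m) : (satCount n k m Φ : ℝ) = Zf (unc Φ) := by
  have h : satSet n k m Φ = univ.filter fun σ : Assignment n => hitsAll (patt (Bt σ) (unc Φ)) := by
    ext σ
    unfold satSet
    rw [mem_filter, mem_filter]
    simp only [mem_univ, true_and]
    unfold Satisfies hitsAll
    refine forall_congr' fun i => exists_congr fun j => ?_
    unfold patt
    rw [mem_filter]
    simp [Bt, unc]
  unfold satCount Zf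
  rw [h]

lemma deg_total {n k m : ℕ} (Φ : Formula n k m) :
    ∑ x, (degSeq n k m Φ (x, true) + degSeq n k m Φ (x, false)) = m * k := by
  have h : unc Φ ∈ Cd n k m (degSeq n k m Φ) := (unc_mem Φ _).mpr (by simp [degClass])
  have := Cd_sum h (fun _ => 1)
  simp only [Finset.sum_const, nsmul_eq_mul, mul_one, card_univ, Fintype.card_prod, Fintype.card_fin] at this
  exact_mod_cast this.symm

def Good1 (n k m : ℕ) (Φ : Formula n k m) : Prop := ∀ σ, 4 * Tn (degSeq n k m Φ) σ ≤ (2 * k + 1) * m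

def Good2 (n k m : ℕ) (Φ : Formula n k m) : Prop :=
  n ≤ 8 * (univ.filter fun x : Fin n => degSeq n k m Φ (x, true) ≠ degSeq n k m Φ (x, false)).card

lemma good_main {n k m : ℕ} (hk : 2 ≤ k) (hm : 2 ≤ m) (hM8 : 8 ≤ m * k) (Φ : Formula n k m)
    (hG1 : Good1 n k m Φ) (hG2 : Good2 n k m Φ)
    (τ L c : ℝ) (hτ : 0 ≤ τ) (hτk : 32 * k * τ ≤ 1)
    (hL : L ≤ eta0 k * (m - 1) / k * ((eta0 k / k / 2 * n / 8) ^ 2 / (m * k) ^ 2) - 16 * k)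
    (hc : c * n ≤ 2 * τ * L - 1024 * τ ^ 2 * k ^ 2 * (m * k)) :
    Real.exp (c * n) *
        (condE n k m (degSeq n k m Φ) (fun Ψ => (satCount n k m Ψ : ℝ))) ^ 2 ≤
      condE n k m (degSeq n k m Φ) (fun Ψ => (satCount n k m Ψ : ℝ) ^ 2) := by
  set d := degSeq n k m Φ with hd
  have h := class_main hk hm hM8 d (deg_total Φ) hG1 hG2 τ L hτ hτk hL
  unfold condE
  have e1 : ∑ Ψ ∈ degClass n k m d, (satCount n k m Ψ : ℝ) = ∑ f ∈ Cd n k m d, Zf f := by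
    rw [← sum_degClass]; exact Finset.sum_congr rfl fun Ψ _ => satCount_eq_s3 Ψ
  have e2 : ∑ Ψ ∈ degClass n k m d, (satCount n k m Ψ : ℝ) ^ 2 = ∑ f ∈ Cd n k m d, Zf f ^ 2 := by
    rw [← sum_degClass d (fun f => Zf f ^ 2)]; exact Finset.sum_congr rfl fun Ψ _ => by rw [satCount_eq_s3 Ψ]
  have e3 : ((degClass n k m d).card : ℝ) = (Cd n k m d).card := by
    have := sum_degClass (n := n) (k := k) (m := m) d (fun _ => 1)
    simpa using this
  have hpos : (0:ℝ) < (degClass n k m d).card := by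
    exact_mod_cast Finset.card_pos.mpr ⟨Φ, by simp [degClass, hd]⟩
  rw [e1, e2]
  rw [← e3] at h
  rw [div_pow, mul_div_assoc', div_le_div_iff₀ (by positivity) hpos]
  have h1 : Real.exp (c * n) ≤ Real.exp (2 * τ * L - 1024 * τ ^ 2 * k ^ 2 * (m * k)) := Real.exp_le_exp.mpr hc
  have h2 := (mul_le_mul_of_nonneg_right h1 (sq_nonneg (∑ f ∈ Cd n k m d, Zf f))).trans h
  have h3 := mul_le_mul_of_nonneg_right h2 hpos.le
  nlinarith

end link

section whp

lemma sum_prod_formula {n k m : ℕ} (g : Lit n → ℝ) :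
    ∑ Φ : Formula n k m, ∏ p, g (unc Φ p) = (∑ l, g l) ^ (m * k) := by
  have h1 : ∀ Φ : Formula n k m, ∏ p, g (unc Φ p) = ∏ i, (fun c : Clause n k => ∏ j, g (c j)) (Φ i) := by
    intro Φ
    rw [Fintype.prod_prod_type]; rfl
  rw [Finset.sum_congr rfl (fun Φ _ => h1 Φ)]
  have h2 := Fintype.sum_pow (fun c : Clause n k => ∏ j, g (c j)) m
  have h3 := Fintype.sum_pow g k
  refine (h2.symm.trans ?_)
  rw [← h3, ← pow_mul, mul_comm]

lemma card_formula (n k m : ℕ) : (Fintype.card (Formula n k m) : ℝ) = (2 * n) ^ (m * k) := by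
  have := sum_prod_formula (n := n) (k := k) (m := m) (fun _ => 1)
  simp only [Finset.prod_const_one, Finset.sum_const, nsmul_eq_mul, mul_one, card_univ] at this
  rw [this]; simp [mul_comm]

lemma unc_self {n k m : ℕ} (Φ : Formula n k m) : unc Φ ∈ Cd n k m (degSeq n k m Φ) :=
  (unc_mem Φ _).mpr (by simp [degClass])

lemma bad1_sigma {n k m : ℕ} (hk : 1 ≤ k) (σ : Assignment n) :
    ((univ.filter fun Φ : Formula n k m => ¬ 4 * Tn (degSeq n k m Φ) σ ≤ (2 * k + 1) * m).card : ℝ) ≤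
      (2 * n) ^ (m * k) * Real.exp (- (m / (8 * k))) := by
  have hk0 : (0:ℝ) < k := by exact_mod_cast hk
  set t : ℝ := 1 / (2 * k) with ht
  let g : Lit n → ℝ := fun l => Real.exp (t * (if Bt σ l then 1 else -1))
  have hsum : ∑ l, g l = 2 * n * Real.cosh t := by
    rw [Fintype.sum_prod_type]
    have : ∀ x : Fin n, ∑ b, g (x, b) = 2 * Real.cosh t := by
      intro x
      simp only [g, Bt_iff, Fintype.sum_bool, Real.cosh_eq]
      cases h : σ x <;> simp <;> ring
    rw [Finset.sum_congr rfl (fun x _ => this x)]; simp; ring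
  have hprod : ∀ Φ : Formula n k m, ∏ p, g (unc Φ p) = Real.exp (t * (2 * Tn (degSeq n k m Φ) σ - m * k)) := by
    intro Φ
    simp only [g]
    rw [← Real.exp_sum, ← Finset.mul_sum]
    congr 2
    have h1 : ∀ p, (if Bt σ (unc Φ p) then (1:ℝ) else -1) = 2 * (if Bt σ (unc Φ p) then 1 else 0) - 1 := by
      intro p; split_ifs <;> norm_num
    rw [Finset.sum_congr rfl (fun p _ => h1 p), Finset.sum_sub_distrib, ← Finset.mul_sum, ← Finset.sum_filter,
      Finset.sum_const, nsmul_eq_mul, mul_one]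
    have := Cd_card (unc_self Φ) σ
    unfold patt at this
    rw [this]; simp
  have h1 := sum_prod_formula (n := n) (k := k) (m := m) g
  rw [Finset.sum_congr rfl (fun Φ _ => hprod Φ), hsum] at h1
  set bad := univ.filter fun Φ : Formula n k m => ¬ 4 * Tn (degSeq n k m Φ) σ ≤ (2 * k + 1) * m with hbad
  have h2 : (bad.card : ℝ) * Real.exp (m / (4 * k)) ≤ (2 * n * Real.cosh t) ^ (m * k) := by
    rw [← h1]
    calc (bad.card : ℝ) * Real.exp (m / (4 * k)) = ∑ Φ ∈ bad, Real.exp (m / (4 * k)) := by simp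
      _ ≤ ∑ Φ ∈ bad, Real.exp (t * (2 * Tn (degSeq n k m Φ) σ - m * k)) := by
        apply Finset.sum_le_sum
        intro Φ hΦ
        rw [hbad, mem_filter] at hΦ
        have h3 : ((2 * k + 1) * m : ℝ) ≤ 4 * Tn (degSeq n k m Φ) σ := by
          exact_mod_cast (by omega : (2 * k + 1) * m ≤ 4 * Tn (degSeq n k m Φ) σ)
        apply Real.exp_le_exp.mpr
        have h4 : (m:ℝ) / 2 ≤ 2 * Tn (degSeq n k m Φ) σ - m * k := by linarith
        have h5 := mul_le_mul_of_nonneg_left h4 (by positivity : 0 ≤ t)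
        refine le_trans (le_of_eq ?_) h5
        rw [ht]; field_simp; norm_num
      _ ≤ _ := Finset.sum_le_sum_of_subset_of_nonneg (Finset.subset_univ _) fun _ _ _ => (Real.exp_pos _).le
  have h3 : (2 * n * Real.cosh t) ^ (m * k) ≤ (2 * n) ^ (m * k) * Real.exp (m / (8 * k)) := by
    rw [mul_pow]
    apply mul_le_mul_of_nonneg_left _ (by positivity)
    refine (pow_le_pow_left₀ (Real.cosh_pos t).le (Real.cosh_le_exp_half_sq t) _).trans (le_of_eq ?_)
    rw [← Real.exp_nat_mul]; congr 1
    rw [ht]; push_cast; field_simp; norm_num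
  have h4 := h2.trans h3
  have h5 : Real.exp (m / (4 * k)) = Real.exp (m / (8 * k)) * Real.exp (m / (8 * k)) := by
    rw [← Real.exp_add]; congr 1; field_simp; ring
  rw [h5, ← mul_assoc] at h4
  have h6 := le_of_mul_le_mul_right h4 (Real.exp_pos _)
  rw [Real.exp_neg, ← div_eq_mul_inv, le_div_iff₀ (Real.exp_pos _)]
  exact h6

lemma bad1 {n k m : ℕ} (hk : 1 ≤ k) :
    ((univ.filter fun Φ : Formula n k m => ¬ Good1 n k m Φ).card : ℝ) ≤
      2 ^ n * ((2 * n) ^ (m * k) * Real.exp (- (m / (8 * k)))) := by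
  have hsub : (univ.filter fun Φ : Formula n k m => ¬ Good1 n k m Φ) ⊆
      univ.biUnion fun σ : Assignment n => univ.filter fun Φ : Formula n k m => ¬ 4 * Tn (degSeq n k m Φ) σ ≤ (2 * k + 1) * m := by
    intro Φ hΦ
    simp only [mem_filter, mem_univ, true_and, Good1, not_forall] at hΦ
    simpa only [mem_biUnion, mem_filter, mem_univ, true_and] using hΦ
  have h1 := (Finset.card_le_card hsub).trans Finset.card_biUnion_le
  have h2 : ((univ.filter fun Φ : Formula n k m => ¬ Good1 n k m Φ).card : ℝ) ≤
      ∑ σ : Assignment n, ((univ.filter fun Φ : Formula n k m => ¬ 4 * Tn (degSeq n k m Φ) σ ≤ (2 * k + 1) * m).card : ℝ) := by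
    exact_mod_cast h1
  refine h2.trans ((Finset.sum_le_sum fun σ _ => bad1_sigma hk σ).trans (le_of_eq ?_))
  simp

def gx {n : ℕ} (x : Fin n) (l : Lit n) : ℝ := if l.1 = x then -1 else 1

lemma gx_prod {n k m : ℕ} (Φ : Formula n k m) (x : Fin n) :
    ∏ p, gx x (unc Φ p) = (-1) ^ (degSeq n k m Φ (x, true) + degSeq n k m Φ (x, false)) := by
  unfold gx
  rw [Finset.prod_ite]
  simp only [Finset.prod_const, one_pow, mul_one]
  congr 1
  have : (univ.filter fun p => (unc Φ p).1 = x) = (univ.filter fun p => unc Φ p = (x, true)) ∪ (univ.filter fun p => unc Φ p = (x, false)) := by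
    ext p
    simp only [mem_filter, mem_univ, true_and, mem_union, Prod.ext_iff]
    cases (unc Φ p).2 <;> simp
  rw [this, Finset.card_union_of_disjoint]
  · rfl
  · rw [Finset.disjoint_filter]
    intro p _ h1 h2
    rw [h1] at h2
    simp at h2

lemma ind_sum {n : ℕ} (x : Fin n) : ∑ l : Lit n, (if l.1 = x then (1:ℝ) else 0) = 2 := by
  rw [Fintype.sum_prod_type]
  have : ∀ y : Fin n, ∑ _b : Bool, (if y = x then (1:ℝ) else 0) = if y = x then 2 else 0 := by
    intro y; split_ifs <;> simp
  rw [Finset.sum_congr rfl (fun y _ => this y)]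
  simp

lemma one_sum {n : ℕ} : ∑ _l : Lit n, (1:ℝ) = 2 * n := by simp [mul_comm]

lemma gx_sum {n : ℕ} (x : Fin n) : ∑ l, gx x l = 2 * n - 4 := by
  have : ∀ l : Lit n, gx x l = 1 - 2 * (if l.1 = x then 1 else 0) := by
    intro l; unfold gx; split_ifs <;> norm_num
  rw [Finset.sum_congr rfl (fun l _ => this l), Finset.sum_sub_distrib, ← Finset.mul_sum, ind_sum, one_sum]
  ring

lemma gxy_sum {n : ℕ} (x y : Fin n) (h : x ≠ y) : ∑ l, gx x l * gx y l = 2 * n - 8 := by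
  have : ∀ l : Lit n, gx x l * gx y l = 1 - 2 * (if l.1 = x then 1 else 0) - 2 * (if l.1 = y then 1 else 0) := by
    intro l; unfold gx
    by_cases h1 : l.1 = x
    · have h2 : l.1 ≠ y := fun h2 => h (h1.symm.trans h2)
      simp only [h1, if_true, h, if_false]; norm_num
    · by_cases h2 : l.1 = y
      · simp only [h2, h.symm, if_true, if_false]; norm_num
      · simp only [h1, h2, if_false]; norm_num
  rw [Finset.sum_congr rfl (fun l _ => this l), Finset.sum_sub_distrib, Finset.sum_sub_distrib, ← Finset.mul_sum, ← Finset.mul_sum,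
    ind_sum, ind_sum, one_sum]
  ring

def Xst {n k m : ℕ} (Φ : Formula n k m) : ℝ := ∑ x : Fin n, ∏ p, gx x (unc Φ p)

lemma Xst_low {n k m : ℕ} (Φ : Formula n k m) :
    (n:ℝ) - 2 * (univ.filter fun x : Fin n => degSeq n k m Φ (x, true) ≠ degSeq n k m Φ (x, false)).card ≤ Xst Φ := by
  unfold Xst
  have : ∀ x : Fin n, 1 - 2 * (if degSeq n k m Φ (x, true) ≠ degSeq n k m Φ (x, false) then (1:ℝ) else 0) ≤ ∏ p, gx x (unc Φ p) := by
    intro x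
    rw [gx_prod]
    split_ifs with h
    · rcases neg_one_pow_eq_or ℝ (degSeq n k m Φ (x, true) + degSeq n k m Φ (x, false)) with h | h <;> rw [h] <;> norm_num
    · rw [not_not] at h
      rw [h, ← two_mul, pow_mul]; norm_num
  refine le_trans (le_of_eq ?_) (Finset.sum_le_sum fun x _ => this x)
  rw [Finset.sum_sub_distrib, ← Finset.mul_sum, ← Finset.sum_filter]
  simp

lemma Xst_mean {n k m : ℕ} : ∑ Φ : Formula n k m, Xst Φ = n * (2 * n - 4) ^ (m * k) := by
  unfold Xst
  rw [Finset.sum_comm]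
  rw [Finset.sum_congr rfl (fun x _ => (sum_prod_formula (gx x)).trans (by rw [gx_sum]))]
  simp

lemma Xst_sq {n k m : ℕ} (hn : 4 ≤ n) :
    ∑ Φ : Formula n k m, Xst Φ ^ 2 ≤ n * (2 * n) ^ (m * k) + n ^ 2 * (2 * n - 8) ^ (m * k) := by
  have hn' : (4:ℝ) ≤ n := by exact_mod_cast hn
  have hp : (0:ℝ) ≤ (2 * n - 8) ^ (m * k) := pow_nonneg (by linarith) _
  have h1 : ∑ Φ : Formula n k m, Xst Φ ^ 2 = ∑ x : Fin n, ∑ y : Fin n, ∑ Φ : Formula n k m, ∏ p, (gx x (unc Φ p) * gx y (unc Φ p)) := by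
    unfold Xst
    simp only [sq, Finset.sum_mul_sum, Finset.prod_mul_distrib]
    rw [Finset.sum_comm]
    apply Finset.sum_congr rfl; intro x _
    rw [Finset.sum_comm]
  have h2 : ∀ x y : Fin n, ∑ Φ : Formula n k m, ∏ p, (gx x (unc Φ p) * gx y (unc Φ p)) ≤
      (if x = y then (2 * n : ℝ) ^ (m * k) else 0) + (2 * n - 8 : ℝ) ^ (m * k) := by
    intro x y
    rw [sum_prod_formula (fun l => gx x l * gx y l)]
    by_cases h : x = y
    · subst h
      have : ∀ l : Lit n, gx x l * gx x l = 1 := by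
        intro l; unfold gx; split_ifs <;> norm_num
      rw [Finset.sum_congr rfl (fun l _ => this l)]
      simp only [if_true]
      have : ∑ l : Lit n, (1:ℝ) = 2 * n := by simp [mul_comm]
      rw [this]; linarith
    · rw [gxy_sum x y h]; simp [h]
  rw [h1]
  refine (Finset.sum_le_sum fun x _ => Finset.sum_le_sum fun y _ => h2 x y).trans (le_of_eq ?_)
  simp only [Finset.sum_add_distrib, Finset.sum_ite_eq, mem_univ, if_true, Finset.sum_const, nsmul_eq_mul, card_univ, Fintype.card_fin]
  ring

lemma bad2 {n k m : ℕ} (hn : 4 ≤ n) (hM : n ≤ m * k) :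
    ((univ.filter fun Φ : Formula n k m => ¬ Good2 n k m Φ).card : ℝ) ≤ 4 / n * (2 * n) ^ (m * k) := by
  have hn' : (4:ℝ) ≤ n := by exact_mod_cast hn
  have hn0 : (0:ℝ) < n := by linarith
  set M := m * k with hMdef
  set N : ℝ := (2 * n) ^ M with hN
  have hN0 : 0 < N := by positivity
  set q : ℝ := (1 - 2 / n) ^ M with hq
  have hq0 : 0 ≤ q := pow_nonneg (by rw [sub_nonneg, div_le_one hn0]; linarith) _
  have hq1 : q ≤ 1 / 4 := by
    have h1 : q ≤ Real.exp (-(2 / n)) ^ M := by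
      apply pow_le_pow_left₀ (by rw [sub_nonneg, div_le_one hn0]; linarith)
      have := Real.add_one_le_exp (-(2 / (n:ℝ))); linarith
    rw [← Real.exp_nat_mul] at h1
    have h2 : (M:ℝ) * -(2 / n) ≤ -2 := by
      have : (n:ℝ) ≤ M := by exact_mod_cast hM
      have h3 : 2 ≤ (M:ℝ) * (2 / n) := by
        rw [mul_div_assoc', le_div_iff₀ hn0]; linarith
      linarith
    have h3 : Real.exp (-2) ≤ 1 / 4 := by
      have := Real.add_one_le_exp (1:ℝ)
      have h4 : Real.exp 2 = Real.exp 1 * Real.exp 1 := by rw [← Real.exp_add]; norm_num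
      rw [Real.exp_neg, inv_eq_one_div]
      apply one_div_le_one_div_of_le (by norm_num)
      rw [h4]; nlinarith
    exact h1.trans ((Real.exp_le_exp.mpr h2).trans h3)
  have e1 : ((2:ℝ) * n - 4) ^ M = N * q := by
    rw [hN, hq, ← mul_pow]; congr 1; field_simp; ring
  have e2 : ((2:ℝ) * n - 8) ^ M ≤ N * q ^ 2 := by
    have e0 : N * q ^ 2 = (2 * n * (1 - 2 / n) ^ 2) ^ M := by
      rw [hN, hq, mul_pow (2 * (n:ℝ)) ((1 - 2 / (n:ℝ)) ^ 2) M, ← pow_mul, ← pow_mul, mul_comm M 2]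
    rw [e0]
    apply pow_le_pow_left₀ (by linarith)
    have : (2:ℝ) * n * (1 - 2 / n) ^ 2 = 2 * n - 8 + 8 / n := by field_simp; ring
    rw [this]; have : 0 < 8 / (n:ℝ) := by positivity
    linarith
  have hmean := Xst_mean (n := n) (k := k) (m := m)
  rw [← hMdef, e1] at hmean
  have hsq := Xst_sq (n := n) (k := k) (m := m) hn
  rw [← hMdef, ← hN] at hsq
  have hcard := card_formula n k m
  rw [← hMdef, ← hN] at hcard
  have hvar : ∑ Φ : Formula n k m, (Xst Φ - n * q) ^ 2 ≤ n * N := by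
    have : ∑ Φ : Formula n k m, (Xst Φ - n * q) ^ 2 = ∑ Φ : Formula n k m, Xst Φ ^ 2 - 2 * (n * q) * ∑ Φ : Formula n k m, Xst Φ + (n * q) ^ 2 * N := by
      have h : ∀ Φ : Formula n k m, (Xst Φ - n * q) ^ 2 = Xst Φ ^ 2 - 2 * (n * q) * Xst Φ + (n * q) ^ 2 := by intro Φ; ring
      rw [Finset.sum_congr rfl (fun Φ _ => h Φ), Finset.sum_add_distrib, Finset.sum_sub_distrib, ← Finset.mul_sum,
        Finset.sum_const, nsmul_eq_mul, card_univ, hcard]; ring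
    rw [this, hmean]
    have := mul_le_mul_of_nonneg_left e2 (sq_nonneg (n:ℝ))
    nlinarith
  set bad := univ.filter fun Φ : Formula n k m => ¬ Good2 n k m Φ with hbad
  have h1 : (bad.card : ℝ) * (n / 2) ^ 2 ≤ n * N := by
    refine le_trans ?_ hvar
    calc (bad.card : ℝ) * (n / 2) ^ 2 = ∑ Φ ∈ bad, ((n:ℝ) / 2) ^ 2 := by simp
      _ ≤ ∑ Φ ∈ bad, (Xst Φ - n * q) ^ 2 := by
        apply Finset.sum_le_sum
        intro Φ hΦ
        rw [hbad, mem_filter, Good2, not_le] at hΦ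
        have h2 : 8 * ((univ.filter fun x : Fin n => degSeq n k m Φ (x, true) ≠ degSeq n k m Φ (x, false)).card : ℝ) ≤ n := by
          exact_mod_cast hΦ.2.le
        have h3 := Xst_low Φ
        apply pow_le_pow_left₀ (by positivity)
        nlinarith
      _ ≤ _ := Finset.sum_le_sum_of_subset_of_nonneg (Finset.subset_univ _) fun _ _ _ => sq_nonneg _
  rw [div_mul_eq_mul_div, le_div_iff₀ hn0]
  have h2 : (n:ℝ) * ((bad.card : ℝ) * n) ≤ n * (4 * N) := by nlinarith
  exact le_of_mul_le_mul_left h2 hn0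

end whp

lemma prF_ge {n k m : ℕ} (hn : 4 ≤ n) (hk : 1 ≤ k) (hM : n ≤ m * k) (E : Formula n k m → Prop)
    (hE : ∀ Φ, Good1 n k m Φ → Good2 n k m Φ → E Φ) :
    1 - (2 ^ n * Real.exp (-(m / (8 * k))) + 4 / n) ≤ prF n k m E := by
  have hn0 : (0:ℝ) < n := by exact_mod_cast (by omega : 0 < n)
  have hN : (0:ℝ) < (2 * n) ^ (m * k) := by positivity
  have h1 := bad1 (n := n) (k := k) (m := m) hk
  have h2 := bad2 (n := n) (k := k) (m := m) hn hM
  have hsub : (univ : Finset (Formula n k m)) ⊆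
      (univ.filter fun Φ => E Φ) ∪ ((univ.filter fun Φ => ¬ Good1 n k m Φ) ∪
        (univ.filter fun Φ => ¬ Good2 n k m Φ)) := by
    intro Φ _
    simp only [mem_union, mem_filter, mem_univ, true_and]
    by_cases a : Good1 n k m Φ
    · by_cases b : Good2 n k m Φ
      · exact Or.inl (hE Φ a b)
      · exact Or.inr (Or.inr b)
    · exact Or.inr (Or.inl a)
  have h3 := (card_le_card hsub).trans ((card_union_le _ _).trans
    (Nat.add_le_add_left (card_union_le _ _) _))
  rw [card_univ] at h3
  have h4 : (Fintype.card (Formula n k m) : ℝ) ≤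
      ((univ.filter fun Φ => E Φ).card : ℝ) + (((univ.filter fun Φ => ¬ Good1 n k m Φ).card : ℝ) +
        ((univ.filter fun Φ => ¬ Good2 n k m Φ).card : ℝ)) := by exact_mod_cast h3
  unfold prF
  rw [card_formula] at h4 ⊢
  rw [le_div_iff₀ hN]
  linarith

lemma prF_le (n k m : ℕ) (E : Formula n k m → Prop) : prF n k m E ≤ 1 := by
  unfold prF
  apply div_le_one_of_le₀ _ (by positivity)
  exact_mod_cast card_le_univ _

lemma two_pow_ge (k : ℕ) (hk : 10 ≤ k) : 8 * k ^ 2 ≤ 2 ^ k := by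
  induction k, hk using Nat.le_induction with
  | base => norm_num
  | succ k hk ih => rw [pow_succ 2 k]; nlinarith

lemma lim_aux : Tendsto (fun n : ℕ => 1 - (2 ^ n * Real.exp (1 - n) + 4 / (n:ℝ))) atTop (nhds 1) := by
  have h1 : Tendsto (fun n : ℕ => (2 / Real.exp 1) ^ n) atTop (nhds 0) := by
    apply tendsto_pow_atTop_nhds_zero_of_lt_one (by positivity)
    rw [div_lt_one (Real.exp_pos 1)]
    linarith [Real.exp_one_gt_d9]
  have h2 : Tendsto (fun n : ℕ => 4 / (n:ℝ)) atTop (nhds 0) :=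
    tendsto_const_div_atTop_nhds_zero_nat 4
  have h3 := ((h1.const_mul (Real.exp 1)).add h2).const_sub 1
  simp only [mul_zero, add_zero, sub_zero] at h3
  refine h3.congr fun n => ?_
  have : Real.exp (1 - n) = Real.exp 1 / Real.exp 1 ^ n := by
    rw [Real.exp_sub, ← Real.exp_nat_mul, mul_one]
  rw [this, div_pow]; ring


/-- For `k ≥ k0` and `2^k/k < r ≤ 2^k ln 2` there is `c = c(k,r) > 0` such
that whp the degree sequence `d` of the random formula satisfies
`E[|S(Φ_d)|²] ≥ exp(c n) (E[|S(Φ_d)|])²`. -/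
theorem statement3 :
    ∃ k0 : ℕ, ∀ k : ℕ, k0 ≤ k →
      ∀ r : ℝ, (2 : ℝ) ^ k / k < r → r ≤ 2 ^ k * Real.log 2 →
        ∃ c : ℝ, 0 < c ∧
          Tendsto
            (fun n : ℕ =>
              let m := ⌊r * (n : ℝ)⌋₊
              prF n k m fun Φ =>
                Real.exp (c * n) *
                    (condE n k m (degSeq n k m Φ) (fun Ψ => (satCount n k m Ψ : ℝ))) ^ 2 ≤
                  condE n k m (degSeq n k m Φ) (fun Ψ => (satCount n k m Ψ : ℝ) ^ 2))
            atTop (nhds 1) := by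
  refine ⟨10, fun k hk r hr _ => ?_⟩
  have hk0 : (0:ℝ) < k := by exact_mod_cast (by omega : 0 < k)
  have hr8 : 8 * (k:ℝ) < r := by
    refine lt_of_le_of_lt ?_ hr
    rw [le_div_iff₀ hk0]
    have := two_pow_ge k hk
    have h' : (8:ℝ) * k ^ 2 ≤ 2 ^ k := by exact_mod_cast this
    nlinarith
  have hr0 : 0 < r := by linarith
  have he := eta0_pos k
  obtain ⟨δ, hδ⟩ : ∃ δ : ℝ, δ = eta0 k * (r / 2) / k * ((eta0 k / k / 2 / 8) ^ 2 / (r * k) ^ 2) / 2 :=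
    ⟨_, rfl⟩
  have hδ0 : 0 < δ := by rw [hδ]; positivity
  obtain ⟨τ, hτd⟩ : ∃ τ : ℝ, τ = min (δ / (1024 * (k:ℝ) ^ 3 * r)) (1 / (32 * (k:ℝ))) := ⟨_, rfl⟩
  have hτ0 : 0 < τ := by rw [hτd]; apply lt_min <;> positivity
  have hτ1 : 1024 * k ^ 3 * r * τ ≤ δ := by
    have : τ ≤ δ / (1024 * k ^ 3 * r) := by rw [hτd]; exact min_le_left _ _
    rw [le_div_iff₀ (by positivity)] at this
    linarith
  have hτ2 : 32 * k * τ ≤ 1 := by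
    have : τ ≤ 1 / (32 * k) := by rw [hτd]; exact min_le_right _ _
    rw [le_div_iff₀ (by positivity)] at this
    linarith
  refine ⟨τ * δ, by positivity, ?_⟩
  refine tendsto_of_tendsto_of_tendsto_of_le_of_le' lim_aux tendsto_const_nhds ?_
    (Eventually.of_forall fun n => prF_le _ _ _ _)
  filter_upwards [eventually_ge_atTop 4, eventually_ge_atTop ⌈16 * k / δ⌉₊] with n hn4 hnδ
  have hn4' : (4:ℝ) ≤ n := by exact_mod_cast hn4
  have hnδ' : 16 * k ≤ δ * n := by
    have := Nat.ceil_le.mp hnδ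
    rw [div_le_iff₀ hδ0] at this
    linarith
  have hk10 : (10:ℝ) ≤ k := by exact_mod_cast hk
  have hrn : 80 * (n:ℝ) ≤ r * n := by nlinarith
  set m := ⌊r * (n:ℝ)⌋₊ with hm
  have hm1 : (m:ℝ) ≤ r * n := Nat.floor_le (by positivity)
  have hm2 : r * n < m + 1 := Nat.lt_floor_add_one _
  have hmn : n ≤ m := by
    have : (n:ℝ) ≤ m := by linarith
    exact_mod_cast this
  have hmk : m ≤ m * k := Nat.le_mul_of_pos_right m (by omega)
  have hk1 : 1 ≤ k := by omega
  have hn0 : (0:ℝ) < n := by linarith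
  have hm0 : (0:ℝ) < m := by linarith
  refine le_trans ?_ (prF_ge hn4 hk1 (hmn.trans hmk) _ fun Φ hG1 hG2 =>
    good_main (by omega) (by omega) ?_ Φ hG1 hG2 τ (δ * n) (τ * δ) hτ0.le hτ2 ?_ ?_)
  · have h1 : (n:ℝ) - 1 ≤ m / (8 * k) := by
      rw [le_div_iff₀ (by positivity)]
      nlinarith
    have h2 : Real.exp (-(m / (8 * k))) ≤ Real.exp (1 - n) := Real.exp_le_exp.mpr (by linarith)
    have h3 : (2:ℝ) ^ n * Real.exp (-(m / (8 * k))) ≤ 2 ^ n * Real.exp (1 - n) :=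
      mul_le_mul_of_nonneg_left h2 (by positivity)
    linarith
  · nlinarith
  · have h1 : r / 2 * n ≤ (m:ℝ) - 1 := by linarith
    have h2 : eta0 k * (r / 2 * n) / k * ((eta0 k / k / 2 * n / 8) ^ 2 / (r * n * k) ^ 2) ≤
        eta0 k * (m - 1) / k * ((eta0 k / k / 2 * n / 8) ^ 2 / (m * k) ^ 2) := by
      gcongr
      exact div_nonneg (mul_nonneg he.le (by nlinarith)) hk0.le
    have h3 : eta0 k * (r / 2 * n) / k * ((eta0 k / k / 2 * n / 8) ^ 2 / (r * n * k) ^ 2) =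
        2 * (δ * n) := by
      rw [hδ]; field_simp
    linarith
  · have h1 : 1024 * τ ^ 2 * k ^ 2 * (m * k) ≤ 1024 * τ ^ 2 * k ^ 2 * (r * n * k) := by gcongr
    have h2 : 1024 * τ ^ 2 * k ^ 2 * (r * n * k) = τ * n * (1024 * k ^ 3 * r * τ) := by ring
    have h3 : τ * n * (1024 * k ^ 3 * r * τ) ≤ τ * n * δ :=
      mul_le_mul_of_nonneg_left hτ1 (by positivity)
    nlinarith
end
end
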